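/- Let K be a number field, S a finite set of places of K containing all the archimedean ones, and φ an endomorphism of ℙ¹ defined over K of degree d ≥ 2 with good reduction outside S. If φ has a K-rational periodic point of period at least two, then |PrePer(φ,K)| ≤ max{ T(|S|) + CV(d,|S|), L₄(d,|S|) + 2L₂(d,|S|) + 3, 3L₃(d,|S|) + 3 }, where T(s) = 12·7^{4s}, CV(d,s) = (3B(s)+13)d + 27B(s) + C(5,s) + 6C(3,s) + 32, L₂(d,s) = max{ (2(C(3,s)+2)+1)d + 1, (d−1)(1 + B(s)(B(s) + C(3,s) + 3)) }, L₃(d,s) = ((1 + 3B(s))B(s) + 1)(d−1), L₄(d,s) = (C(3,s) + 3)(d−1), B(s) = 2^{16s} and C(n,s) = e^{(6n)^{3n}(ns+1−n)}. In particular |PrePer(φ,K)| is bounded by a linear polynomial in d whose coefficients depend only on |S|. -/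

import Mathlib

open NumberField IsDedekindDomain MvPolynomial
open scoped Classical nonZeroDivisors

set_option synthInstance.maxHeartbeats 1000000
set_option maxHeartbeats 1000000

noncomputable section

/-- The projective line over `K`. -/
abbrev P1 (K : Type*) [Field K] := Projectivization K (Fin 2 → K)

variable {K : Type*} [Field K] [NumberField K]

/-- The additive `v`-adic valuation (order) of `x ∈ K`, with junk value `0` at `x = 0`,
normalized so that it is surjective onto `ℤ`. -/
def ordAt (v : HeightOneSpectrum (𝓞 K)) (x : K) : ℤ :=
  if hx : x = 0 then 0
  else - Multiplicative.toAdd (WithZero.unzero ((v.valuation K).ne_zero_iff.mpr hx))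

/-- `min (v(x), v(y))` for a pair of coordinates, not both zero. -/
def minOrd (v : HeightOneSpectrum (𝓞 K)) (x y : K) : ℤ :=
  if x = 0 then ordAt v y else if y = 0 then ordAt v x else min (ordAt v x) (ordAt v y)

/-- The `v`-adic logarithmic distance between two points of `ℙ¹(K)`:
`δ_v(P,Q) = v(x₁y₂ - x₂y₁) - min(v x₁, v y₁) - min(v x₂, v y₂)`, with value `⊤` when `P = Q`
(it is independent of the choice of homogeneous coordinates, so we compute it on the chosen
representatives). -/
def logDist (v : HeightOneSpectrum (𝓞 K)) (P Q : P1 K) : WithTop ℤ :=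
  if P = Q then ⊤
  else ((ordAt v (P.rep 0 * Q.rep 1 - P.rep 1 * Q.rep 0)
        - minOrd v (P.rep 0) (P.rep 1) - minOrd v (Q.rep 0) (Q.rep 1) : ℤ) : WithTop ℤ)

/-- An endomorphism of `ℙ¹` of degree `d` defined over `K`, given by a pair of homogeneous
forms of degree `d` with no common zero over the algebraic closure, together with the induced
self-map of `ℙ¹(K)`. -/
structure P1Map (K : Type*) [Field K] (d : ℕ) where
  toFun : P1 K → P1 K
  F : MvPolynomial (Fin 2) K
  G : MvPolynomial (Fin 2) K
  homF : F.IsHomogeneous d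
  homG : G.IsHomogeneous d
  coprime : ∀ x y : AlgebraicClosure K,
    aeval ![x, y] F = 0 → aeval ![x, y] G = 0 → x = 0 ∧ y = 0
  compat : ∀ (x y : K) (hxy : ![x, y] ≠ 0)
    (h : ![eval ![x, y] F, eval ![x, y] G] ≠ 0),
    toFun (Projectivization.mk K ![x, y] hxy) =
      Projectivization.mk K ![eval ![x, y] F, eval ![x, y] G] h

variable {d : ℕ}

/-- `φ` has good reduction at the finite place `v`: some representing pair of forms has
coefficients in the valuation ring at `v`, not all in the maximal ideal, and the reductions
of the two forms modulo `v` have no common zero in `ℙ¹` of the algebraic closure of the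
residue field. -/
def GoodReductionAt (φ : P1Map K d) (v : HeightOneSpectrum (𝓞 K)) : Prop :=
  ∃ c : K, c ≠ 0 ∧
    ∃ F₀ G₀ : MvPolynomial (Fin 2) (v.valuation (K := K)).valuationSubring,
      MvPolynomial.map ((v.valuation (K := K)).valuationSubring.subtype) F₀ = C c * φ.F ∧
      MvPolynomial.map ((v.valuation (K := K)).valuationSubring.subtype) G₀ = C c * φ.G ∧
      ((∃ m, F₀.coeff m ∉ IsLocalRing.maximalIdeal (v.valuation (K := K)).valuationSubring) ∨
        (∃ m, G₀.coeff m ∉ IsLocalRing.maximalIdeal (v.valuation (K := K)).valuationSubring)) ∧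
      ∀ x y : AlgebraicClosure
          (IsLocalRing.ResidueField (v.valuation (K := K)).valuationSubring),
        eval ![x, y] (MvPolynomial.map
          ((algebraMap (IsLocalRing.ResidueField (v.valuation (K := K)).valuationSubring)
              (AlgebraicClosure _)).comp
            (IsLocalRing.residue _)) F₀) = 0 →
        eval ![x, y] (MvPolynomial.map
          ((algebraMap (IsLocalRing.ResidueField (v.valuation (K := K)).valuationSubring)
              (AlgebraicClosure _)).comp
            (IsLocalRing.residue _)) G₀) = 0 →
        x = 0 ∧ y = 0

/-- `φ` has good reduction outside `S`, where `S` consists of all archimedean places together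
with the finite places in `T`. -/
def GoodReductionOutside (φ : P1Map K d) (T : Finset (HeightOneSpectrum (𝓞 K))) : Prop :=
  ∀ v ∉ T, GoodReductionAt φ v

/-- `P` is a periodic point of `φ`. -/
def IsPeriodicPoint (φ : P1Map K d) (P : P1 K) : Prop :=
  ∃ n, 0 < n ∧ φ.toFun^[n] P = P

/-- `P` is a preperiodic point of `φ`. -/
def IsPreperiodicPoint (φ : P1Map K d) (P : P1 K) : Prop :=
  ∃ m, IsPeriodicPoint φ (φ.toFun^[m] P)

/-- `P` is a tail point of `φ`: preperiodic but not periodic. -/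
def IsTailPoint (φ : P1Map K d) (P : P1 K) : Prop :=
  IsPreperiodicPoint φ P ∧ ¬ IsPeriodicPoint φ P

/-- The set `Tail(φ,K,P)` of `K`-rational tail points of `P`: non-periodic points having `P`
in their forward orbit. -/
def TailOf (φ : P1Map K d) (P : P1 K) : Set (P1 K) :=
  {Q | ¬ IsPeriodicPoint φ Q ∧ ∃ n, φ.toFun^[n] Q = P}

/-- `P = [a:b]` is a critical point of `φ = [F:G]`: the algebraic condition
`φ([x:y]) = φ([a:b])`, i.e. the form `G(a,b)·F(X,Y) - F(a,b)·G(X,Y)`, vanishes to order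
at least `2` at `[a:b]`. -/
def IsCriticalPt (φ : P1Map K d) (P : P1 K) : Prop :=
  ∃ (a b : K) (hab : ![a, b] ≠ 0), P = Projectivization.mk K ![a, b] hab ∧
    (C b * X 0 - C a * X 1) ^ 2 ∣
      (C (eval ![a, b] φ.G) * φ.F - C (eval ![a, b] φ.F) * φ.G)

/-- `P` belongs to a critical cycle of `φ`: it lies in the orbit of a critical periodic
point. -/
def InCriticalCycle (φ : P1Map K d) (P : P1 K) : Prop :=
  ∃ Q, IsCriticalPt φ Q ∧ IsPeriodicPoint φ Q ∧ ∃ n, φ.toFun^[n] Q = P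

/-- The cardinality `|S|` of the set of places `S` consisting of all archimedean places
together with the finite places in `T`. -/
def sCard (K : Type*) [Field K] [NumberField K] (T : Finset (HeightOneSpectrum (𝓞 K))) : ℕ :=
  T.card + Fintype.card (InfinitePlace K)

/-- `B(s) = 2^{16 s}`. -/
def Bconst (s : ℕ) : ℕ := 2 ^ (16 * s)

/-- `C(n,s) = e^{(6n)^{3n} (n s + 1 - n)}`. -/
def Cconst (n s : ℕ) : ℝ := Real.exp ((6 * n : ℝ) ^ (3 * n) * (n * s + 1 - n))

/-- `CV(d,s) = (3B(s)+13)d + 27B(s) + C(5,s) + 6C(3,s) + 32`. -/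
def CVconst (d s : ℕ) : ℝ :=
  (3 * (Bconst s : ℝ) + 13) * d + 27 * (Bconst s : ℝ) + Cconst 5 s + 6 * Cconst 3 s + 32

/-- `L₁(d,s) = (d-1)(1 + d(1 + B(s)))`. -/
def L1const (d s : ℕ) : ℕ := (d - 1) * (1 + d * (1 + Bconst s))

/-- `L₂(d,s) = max{(2(C(3,s)+2)+1)d + 1, (d-1)(1 + B(s)(B(s) + C(3,s) + 3))}`. -/
def L2const (d s : ℕ) : ℝ :=
  max ((2 * (Cconst 3 s + 2) + 1) * d + 1)
    (((d : ℝ) - 1) * (1 + (Bconst s : ℝ) * ((Bconst s : ℝ) + Cconst 3 s + 3)))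

/-- `L₃(d,s) = ((1 + 3B(s))B(s) + 1)(d-1)`. -/
def L3const (d s : ℕ) : ℕ := ((1 + 3 * Bconst s) * Bconst s + 1) * (d - 1)

/-- `L₄(d,s) = (C(3,s) + 3)(d-1)`. -/
def L4const (d s : ℕ) : ℝ := (Cconst 3 s + 3) * ((d : ℝ) - 1)

end

/-!
At a place of good reduction `φ` does not increase chordal distances. Hence it preserves the
distance of two periodic points, and a tail point has distance `1` from every periodic point except
the one with which it moves in step. On the other hand two large finite sets of points cannot be at
distance `1` from each other at all places outside `S`: by a pigeonhole argument on boxes at the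
places in `S`, some cross ratio of two points from each set would be an `S`-unit different from `1`
but so close to `1` at the places in `S` that this contradicts the product formula.

The same pigeonhole argument finds cross ratios preserved by `φ` in every large set of periodic
points, and each of these is a zero of a form of degree `d + 1`. Tail points are sorted by the
periodic point `P` with which they move in step. If `P` is not fixed, the tail points and their
images are at distance `1` from each other. If `P` is fixed, the coordinate with values `0`, `1` and
`∞` at `R`, `P` and `φ R`, for a periodic point `R` that is not fixed, takes `S`-unit values at the
tail points. Since `φ` is at least doubly contracting towards `P` along the tail, too many of these
values would contradict an inequality between the heights of a tail point and of its preimages.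
-/

open NumberField.HeightOneSpectrum (adicAbv)

section Places

variable {K : Type*} [Field K]

/-- The places of `K` in `S`: the archimedean ones together with the finite ones in `T`. -/
abbrev SPlace (T : Finset (HeightOneSpectrum (𝓞 K))) := InfinitePlace K ⊕ T

variable {T : Finset (HeightOneSpectrum (𝓞 K))}

namespace SPlace

/-- The exponent with which a place in `S` enters the product formula. -/
noncomputable def mult : SPlace T → ℝ
  | .inl w => w.mult
  | .inr _ => 1

lemma one_le_mult (p : SPlace T) : 1 ≤ p.mult := by
  rcases p with w | _
  · simp only [mult]
    exact_mod_cast w.mult_pos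
  · exact le_rfl

lemma mult_le_two (p : SPlace T) : p.mult ≤ 2 := by
  rcases p with w | _
  · simp only [mult, InfinitePlace.mult]
    split_ifs <;> norm_num
  · simp [mult]

variable [NumberField K]

instance : Nonempty (SPlace T) := ⟨.inl (Classical.arbitrary _)⟩

lemma card_eq_sCard : Fintype.card (SPlace T) = sCard K T := by
  simp [SPlace, sCard, add_comm]

/-- The absolute value attached to a place in `S`. -/
noncomputable def abv : SPlace T → AbsoluteValue K ℝ
  | .inl w => w.1
  | .inr v => adicAbv K v.1

/-- The logarithm of the normalised absolute value of `x` at a place in `S`; it is `0` at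
`x = 0`. -/
noncomputable def logAbs (p : SPlace T) (x : K) : ℝ := p.mult * Real.log (p.abv x)

variable (p : SPlace T)

@[simp]
lemma logAbs_one : p.logAbs 1 = 0 := by simp [logAbs]

@[simp]
lemma logAbs_neg (x : K) : p.logAbs (-x) = p.logAbs x := by
  simp [logAbs]

@[simp]
lemma logAbs_inv (x : K) : p.logAbs x⁻¹ = -p.logAbs x := by
  simp [logAbs]

lemma logAbs_mul {x y : K} (hx : x ≠ 0) (hy : y ≠ 0) :
    p.logAbs (x * y) = p.logAbs x + p.logAbs y := by
  rw [logAbs, map_mul, Real.log_mul (by simpa using hx) (by simpa using hy), mul_add, logAbs,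
    logAbs]

lemma logAbs_div {x y : K} (hx : x ≠ 0) (hy : y ≠ 0) :
    p.logAbs (x / y) = p.logAbs x - p.logAbs y := by
  rw [div_eq_mul_inv, p.logAbs_mul hx (inv_ne_zero hy), logAbs_inv, sub_eq_add_neg]

lemma logAbs_pow (x : K) (n : ℕ) : p.logAbs (x ^ n) = n * p.logAbs x := by
  rw [logAbs, map_pow, Real.log_pow, mul_left_comm, logAbs]

lemma logAbs_prod {ι : Type*} {J : Finset ι} {x : ι → K} (hx : ∀ j ∈ J, x j ≠ 0) :
    p.logAbs (∏ j ∈ J, x j) = ∑ j ∈ J, p.logAbs (x j) := by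
  rw [logAbs, map_prod, Real.log_prod fun j hj ↦ by simpa using hx j hj, Finset.mul_sum]
  rfl

end SPlace

variable [NumberField K]

lemma one_le_sCard : 1 ≤ sCard K T := by
  rw [← SPlace.card_eq_sCard]
  exact Fintype.card_pos

lemma hasFiniteMulSupport_adicAbv {x : K} (hx : x ≠ 0) :
    (fun v : HeightOneSpectrum (𝓞 K) ↦ adicAbv K v x).HasFiniteMulSupport := by
  refine ((FinitePlace.hasFiniteMulSupport hx).preimage
    (f := FinitePlace.mk) fun v _ w _ h ↦ FinitePlace.mk_eq_iff.mp h).subset fun v hv ↦ ?_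
  simpa [FinitePlace.mk_apply, FinitePlace.norm_embedding] using hv

lemma prod_infinitePlace_mul_finprod_adicAbv {x : K} (hx : x ≠ 0) :
    (∏ w : InfinitePlace K, w x ^ w.mult) * ∏ᶠ v : HeightOneSpectrum (𝓞 K), adicAbv K v x = 1 := by
  rw [← prod_abs_eq_one hx, ← finprod_comp_equiv FinitePlace.equivHeightOneSpectrum.symm]
  simp only [FinitePlace.equivHeightOneSpectrum_symm_apply, FinitePlace.norm_embedding]

lemma exp_sum_logAbs {x : K} (hx : x ≠ 0) :
    Real.exp (∑ p : SPlace T, p.logAbs x) =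
      (∏ w : InfinitePlace K, w x ^ w.mult) * ∏ v ∈ T, adicAbv K v x := by
  rw [Real.exp_sum, Fintype.prod_sum_type]
  congr 1
  · refine Finset.prod_congr rfl fun w _ ↦ ?_
    simp only [SPlace.logAbs, SPlace.mult, SPlace.abv]
    rw [← Real.log_pow, Real.exp_log (pow_pos (w.1.pos hx) _)]
    rfl
  · rw [← Finset.prod_coe_sort T]
    refine Finset.prod_congr rfl fun v _ ↦ ?_
    simp only [SPlace.logAbs, SPlace.mult, SPlace.abv, one_mul]
    exact Real.exp_log ((adicAbv K v.1).pos hx)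

lemma exp_sum_logAbs_mul_finprod_compl {x : K} (hx : x ≠ 0) :
    Real.exp (∑ p : SPlace T, p.logAbs x) * ∏ᶠ v ∈ (T : Set (HeightOneSpectrum (𝓞 K)))ᶜ,
      adicAbv K v x = 1 := by
  have hsplit := finprod_mem_mul_sdiff' (f := fun v ↦ adicAbv K v x)
    (Set.subset_univ (T : Set (HeightOneSpectrum (𝓞 K))))
    ((hasFiniteMulSupport_adicAbv hx).subset Set.inter_subset_right)
  rw [finprod_mem_coe_finset, finprod_mem_univ, ← Set.compl_eq_univ_sdiff] at hsplit
  rw [exp_sum_logAbs hx, mul_assoc, hsplit, prod_infinitePlace_mul_finprod_adicAbv hx]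

lemma sum_logAbs_nonneg {x : K} (hx : x ≠ 0) (hint : ∀ v ∉ T, adicAbv K v x ≤ 1) :
    0 ≤ ∑ p : SPlace T, p.logAbs x := by
  have hout : ∏ᶠ v ∈ (T : Set (HeightOneSpectrum (𝓞 K)))ᶜ, adicAbv K v x ≤ 1 :=
    (finprod_mem_induction (fun r : ℝ ↦ 0 ≤ r ∧ r ≤ 1) (by norm_num)
      (fun _ _ ha hb ↦ ⟨mul_nonneg ha.1 hb.1, mul_le_one₀ ha.2 hb.1 hb.2⟩)
      fun v hv ↦ ⟨(adicAbv K v).nonneg x, hint v hv⟩).2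
  rw [← Real.one_le_exp_iff]
  calc 1 = _ := (exp_sum_logAbs_mul_finprod_compl (T := T) hx).symm
    _ ≤ _ := mul_le_of_le_one_right (Real.exp_nonneg _) hout

lemma eq_one_of_abs_sub_one_lt {w : K}
    (hfin : ∀ v : HeightOneSpectrum (𝓞 K), adicAbv K v (w - 1) ≤ 1)
    (hinf : ∀ p : InfinitePlace K, p (w - 1) < 1) : w = 1 := by
  by_contra hne
  have h0 : w - 1 ≠ 0 := sub_ne_zero.mpr hne
  have hneg : ∑ p : SPlace (∅ : Finset (HeightOneSpectrum (𝓞 K))), p.logAbs (w - 1) < 0 := by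
    refine Finset.sum_neg (fun p _ ↦ ?_) Finset.univ_nonempty
    rcases p with p | p
    · exact mul_neg_of_pos_of_neg (zero_lt_one.trans_le (SPlace.one_le_mult _))
        (Real.log_neg (p.1.pos h0) (hinf p))
    · exact absurd p.2 (Finset.notMem_empty _)
  exact hneg.not_ge (sum_logAbs_nonneg h0 fun v _ ↦ hfin v)

/-- The value group at `v` is generated by the norm of `v`, which is at least `2`. -/
lemma adicAbv_eq_one_of_abs_log_lt (v : HeightOneSpectrum (𝓞 K)) {x : K} (hx : x ≠ 0)
    (hlog : |Real.log (adicAbv K v x)| < Real.log 2) : adicAbv K v x = 1 := by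
  have hv : v.valuation K x ≠ 0 := (v.valuation K).ne_zero_iff.mpr hx
  obtain ⟨n, hn⟩ : ∃ n : ℤ, adicAbv K v x = (Ideal.absNorm v.asIdeal : ℝ) ^ n := by
    refine ⟨Multiplicative.toAdd (WithZero.unzero hv), ?_⟩
    rw [NumberField.HeightOneSpectrum.adicAbv_def, WithZeroMulInt.toNNReal_neg_apply _ hv]
    push_cast
    rfl
  have hnorm : Real.log 2 ≤ |Real.log (Ideal.absNorm v.asIdeal : ℝ)| :=
    (Real.log_le_log two_pos (mod_cast NumberField.HeightOneSpectrum.one_lt_absNorm v)).trans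
      (le_abs_self _)
  rw [hn, Real.log_zpow, abs_mul] at hlog
  have hn0 : n = 0 := by
    by_contra hn0
    have : (1 : ℝ) ≤ |(n : ℝ)| := mod_cast Int.one_le_abs hn0
    exact hlog.not_ge (hnorm.trans (le_mul_of_one_le_left (abs_nonneg _) this))
  rw [hn, hn0, zpow_zero]

end Places

section ChordalDist

variable {F : Type*} [Field F]

lemma P1.mk_eq_mk_iff_det {a b : Fin 2 → F} (ha : a ≠ 0) (hb : b ≠ 0) :
    Projectivization.mk F a ha = Projectivization.mk F b hb ↔ a 0 * b 1 - a 1 * b 0 = 0 := by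
  rw [Projectivization.mk_eq_mk_iff']
  constructor
  · rintro ⟨c, rfl⟩
    simp only [Pi.smul_apply, smul_eq_mul]
    ring
  · intro hdet
    by_cases hb0 : b 0 = 0
    · have hb1 : b 1 ≠ 0 := fun hb1 ↦ hb (by ext i; fin_cases i <;> simp [hb0, hb1])
      have ha0 : a 0 = 0 := by simpa [hb0, hb1] using hdet
      exact ⟨a 1 / b 1, by ext i; fin_cases i <;> simp [ha0, hb0, hb1]⟩
    · refine ⟨a 0 / b 0, ?_⟩
      ext i
      fin_cases i
      · simp [hb0]
      · simp only [Pi.smul_apply, smul_eq_mul, Fin.mk_one]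
        field_simp
        linear_combination hdet

namespace P1

/-- The bracket `x₁y₂ - x₂y₁` of two points, computed like `logDist` on the chosen
representatives. -/
noncomputable def det (P Q : P1 F) : F := P.rep 0 * Q.rep 1 - P.rep 1 * Q.rep 0

lemma det_eq_zero {P Q : P1 F} : det P Q = 0 ↔ P = Q := by
  rw [det, ← mk_eq_mk_iff_det P.rep_nonzero Q.rep_nonzero, P.mk_rep, Q.mk_rep]

lemma det_ne_zero {P Q : P1 F} (h : P ≠ Q) : det P Q ≠ 0 := mt det_eq_zero.mp h

end P1

variable (v : AbsoluteValue F ℝ)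

/-- The sup norm of a pair of homogeneous coordinates. -/
noncomputable def supAbs (a : Fin 2 → F) : ℝ := max (v (a 0)) (v (a 1))

/-- The chordal distance `|x₁y₂ - x₂y₁| / (max(|x₁|, |y₁|) max(|x₂|, |y₂|))` on the projective line;
at a finite place its logarithm is proportional to `-logDist`. -/
noncomputable def chordalDist (P Q : P1 F) : ℝ :=
  v (P.det Q) / (supAbs v P.rep * supAbs v Q.rep)

lemma abs_le_supAbs (a : Fin 2 → F) (i : Fin 2) : v (a i) ≤ supAbs v a := by
  fin_cases i
  · exact le_max_left _ _
  · exact le_max_right _ _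

lemma supAbs_pos {a : Fin 2 → F} (ha : a ≠ 0) : 0 < supAbs v a := by
  obtain ⟨i, hi⟩ := Function.ne_iff.mp ha
  exact (v.pos hi).trans_le (abs_le_supAbs v a i)

lemma supAbs_rep_pos (P : P1 F) : 0 < supAbs v P.rep := supAbs_pos v P.rep_nonzero

lemma supAbs_smul (c : F) (a : Fin 2 → F) : supAbs v (c • a) = v c * supAbs v a := by
  simp only [supAbs, Pi.smul_apply, smul_eq_mul, map_mul, mul_max_of_nonneg _ _ (v.nonneg c)]

lemma chordalDist_mk {a b : Fin 2 → F} (ha : a ≠ 0) (hb : b ≠ 0) :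
    chordalDist v (Projectivization.mk F a ha) (Projectivization.mk F b hb) =
      v (a 0 * b 1 - a 1 * b 0) / (supAbs v a * supAbs v b) := by
  obtain ⟨c, hc⟩ := Projectivization.exists_smul_eq_mk_rep F a ha
  obtain ⟨e, he⟩ := Projectivization.exists_smul_eq_mk_rep F b hb
  have hdet : (c : F) * a 0 * (e * b 1) - c * a 1 * (e * b 0) =
      c * e * (a 0 * b 1 - a 1 * b 0) := by ring
  have hc0 : v (c : F) ≠ 0 := by simp
  have he0 : v (e : F) ≠ 0 := by simp
  have := (supAbs_pos v ha).ne'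
  have := (supAbs_pos v hb).ne'
  simp only [chordalDist, P1.det, ← hc, ← he, Units.smul_def, supAbs_smul, Pi.smul_apply,
    smul_eq_mul, hdet, map_mul]
  field_simp

lemma chordalDist_self (P : P1 F) : chordalDist v P P = 0 := by
  simp [chordalDist, P1.det_eq_zero.mpr rfl]

lemma chordalDist_comm (P Q : P1 F) : chordalDist v P Q = chordalDist v Q P := by
  rw [chordalDist, chordalDist, P1.det, P1.det, v.map_sub, mul_comm (supAbs v P.rep),
    mul_comm (P.rep 0), mul_comm (P.rep 1)]

lemma chordalDist_nonneg (P Q : P1 F) : 0 ≤ chordalDist v P Q :=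
  div_nonneg (v.nonneg _) (mul_pos (supAbs_rep_pos v P) (supAbs_rep_pos v Q)).le

lemma chordalDist_eq_zero {P Q : P1 F} : chordalDist v P Q = 0 ↔ P = Q := by
  refine ⟨fun h ↦ ?_, fun h ↦ h ▸ chordalDist_self v P⟩
  exact P1.det_eq_zero.mp <| v.eq_zero.mp <| (div_eq_zero_iff.mp h).resolve_right
    (mul_pos (supAbs_rep_pos v P) (supAbs_rep_pos v Q)).ne'

lemma chordalDist_pos {P Q : P1 F} (h : P ≠ Q) : 0 < chordalDist v P Q :=
  (chordalDist_nonneg v P Q).lt_of_ne' (mt (chordalDist_eq_zero v).mp h)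

variable {v} (hv : IsNonarchimedean v)
include hv

lemma abs_sub_le_max (x y : F) : v (x - y) ≤ max (v x) (v y) := by
  simpa [sub_eq_add_neg] using hv x (-y)

lemma chordalDist_le_one (P Q : P1 F) : chordalDist v P Q ≤ 1 := by
  have hmul (i j : Fin 2) : v (P.rep i * Q.rep j) ≤ supAbs v P.rep * supAbs v Q.rep := by
    rw [map_mul]
    exact mul_le_mul (abs_le_supAbs v _ i) (abs_le_supAbs v _ j) (v.nonneg _)
      (supAbs_rep_pos v P).le
  exact div_le_one_of_le₀ ((abs_sub_le_max hv _ _).trans (max_le (hmul 0 1) (hmul 1 0)))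
    (mul_pos (supAbs_rep_pos v P) (supAbs_rep_pos v Q)).le

/-- The Plücker relation `qᵢ [p, r] = [p, q] rᵢ + [q, r] pᵢ` for the brackets
`[p, q] = p₀ q₁ - p₁ q₀`. -/
lemma supAbs_mul_abs_det_le_max (p q r : Fin 2 → F) :
    supAbs v q * v (p 0 * r 1 - p 1 * r 0) ≤
      max (v (p 0 * q 1 - p 1 * q 0) * supAbs v r) (v (q 0 * r 1 - q 1 * r 0) * supAbs v p) := by
  have hcoord (i : Fin 2) : v (q i) * v (p 0 * r 1 - p 1 * r 0) ≤
      max (v (p 0 * q 1 - p 1 * q 0) * supAbs v r) (v (q 0 * r 1 - q 1 * r 0) * supAbs v p) := by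
    have hpluecker : q i * (p 0 * r 1 - p 1 * r 0) =
        (p 0 * q 1 - p 1 * q 0) * r i + (q 0 * r 1 - q 1 * r 0) * p i := by
      fin_cases i <;> simp only [Fin.zero_eta, Fin.mk_one] <;> ring
    rw [← map_mul, hpluecker]
    refine (hv _ _).trans (max_le_max ?_ ?_) <;> rw [map_mul] <;>
      exact mul_le_mul_of_nonneg_left (abs_le_supAbs v _ i) (v.nonneg _)
  rw [supAbs, max_mul_of_nonneg _ _ (v.nonneg _)]
  exact max_le (hcoord 0) (hcoord 1)

lemma chordalDist_le_max (P Q R : P1 F) :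
    chordalDist v P R ≤ max (chordalDist v P Q) (chordalDist v Q R) := by
  have hP := supAbs_rep_pos v P
  have hQ := supAbs_rep_pos v Q
  have hR := supAbs_rep_pos v R
  simp only [chordalDist, P1.det]
  rcases le_max_iff.mp (supAbs_mul_abs_det_le_max hv P.rep Q.rep R.rep) with h | h
  · refine le_max_of_le_left ?_
    rw [div_le_div_iff₀ (by positivity) (by positivity)]
    nlinarith
  · refine le_max_of_le_right ?_
    rw [div_le_div_iff₀ (by positivity) (by positivity)]
    nlinarith

end ChordalDist

section Charts

/-- Homogeneous coordinates of the point with affine coordinate `t` in one of the two standard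
charts of the projective line; `chart true t = (t, 1)` and `chart false t = (1, t)`. -/
def chart {R : Type*} [One R] (b : Bool) (t : R) : Fin 2 → R :=
  if b then ![t, 1] else ![1, t]

variable {F : Type*} [Field F]

lemma chart_ne_zero (b : Bool) (t : F) : chart b t ≠ 0 := fun h ↦ by
  cases b
  · simpa [chart] using congrFun h 0
  · simpa [chart] using congrFun h 1

/-- The point with affine coordinate `t` in one of the two standard charts. -/
def chartPoint (b : Bool) (t : F) : P1 F := Projectivization.mk F (chart b t) (chart_ne_zero b t)

variable (v : AbsoluteValue F ℝ)

lemma exists_eq_chartPoint (P : P1 F) : ∃ b, ∃ t : F, v t ≤ 1 ∧ P = chartPoint b t := by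
  have hne (i j : Fin 2) (hij : ∀ k, k = i ∨ k = j) (h : v (P.rep i) ≤ v (P.rep j)) :
      P.rep j ≠ 0 := fun hj ↦ P.rep_nonzero <| by
    have hi : P.rep i = 0 := v.eq_zero.mp (le_antisymm (by simpa [hj] using h) (v.nonneg _))
    exact _root_.funext fun k ↦ (hij k).elim (fun hk ↦ hk ▸ hi) (fun hk ↦ hk ▸ hj)
  have habs (i j : Fin 2) (h : v (P.rep i) ≤ v (P.rep j)) : v (P.rep i / P.rep j) ≤ 1 := by
    rw [map_div₀]
    exact div_le_one_of_le₀ h (v.nonneg _)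
  rcases le_total (v (P.rep 0)) (v (P.rep 1)) with h | h
  · refine ⟨true, P.rep 0 / P.rep 1, habs _ _ h, ?_⟩
    have := hne 0 1 (by decide) h
    conv_lhs => rw [← P.mk_rep]
    rw [chartPoint, P1.mk_eq_mk_iff_det]
    simp only [chart, if_true, Matrix.cons_val_zero, Matrix.cons_val_one]
    field_simp
    ring
  · refine ⟨false, P.rep 1 / P.rep 0, habs _ _ h, ?_⟩
    have := hne 1 0 (by decide) h
    conv_lhs => rw [← P.mk_rep]
    rw [chartPoint, P1.mk_eq_mk_iff_det]
    simp only [chart, Bool.false_eq_true, if_false, Matrix.cons_val_zero, Matrix.cons_val_one]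
    field_simp
    ring

lemma supAbs_chart (b : Bool) {t : F} (ht : v t ≤ 1) : supAbs v (chart b t) = 1 := by
  cases b <;> simp [chart, supAbs, ht]

lemma chordalDist_chartPoint (b : Bool) {s t : F} (hs : v s ≤ 1) (ht : v t ≤ 1) :
    chordalDist v (chartPoint b s) (chartPoint b t) = v (s - t) := by
  rw [chartPoint, chartPoint, chordalDist_mk, supAbs_chart v b hs, supAbs_chart v b ht]
  cases b
  · simp [chart, v.map_sub s t]
  · simp [chart]

variable {v} (hv : IsNonarchimedean v)
include hv

lemma abs_eq_one_of_abs_mul_sub_one_lt {s t : F} (hs : v s ≤ 1) (ht : v t ≤ 1)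
    (hst : v (s * t - 1) < 1) : v t = 1 := by
  refine ht.antisymm (not_lt.mp fun hlt ↦ ?_)
  have hmul : v (s * t) < 1 := by
    rw [map_mul]
    exact (mul_le_of_le_one_left (v.nonneg t) hs).trans_lt hlt
  have hone : v 1 ≤ max (v (s * t)) (v (s * t - 1)) := by
    simpa using abs_sub_le_max hv (s * t) (s * t - 1)
  exact hone.not_gt (by simpa using max_lt hmul hst)

lemma exists_eq_chartPoint_of_chordalDist_lt_one (b : Bool) {s : F} (hs : v s ≤ 1) {Q : P1 F}
    (hQ : chordalDist v (chartPoint b s) Q < 1) : ∃ t : F, v t ≤ 1 ∧ Q = chartPoint b t := by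
  obtain ⟨b', t, ht, rfl⟩ := exists_eq_chartPoint v Q
  rcases eq_or_ne b' b with rfl | hbb
  · exact ⟨t, ht, rfl⟩
  have hst : v (s * t - 1) < 1 := by
    rw [chartPoint, chartPoint, chordalDist_mk, supAbs_chart v b hs, supAbs_chart v b' ht,
      mul_one, div_one] at hQ
    cases b <;> cases b'
    · exact absurd rfl hbb
    · simpa [chart, v.map_sub 1] using hQ
    · simpa [chart] using hQ
    · exact absurd rfl hbb
  have ht1 : v t = 1 := abs_eq_one_of_abs_mul_sub_one_lt hv hs ht hst
  have ht0 : t ≠ 0 := v.ne_zero_iff.mp (by rw [ht1]; exact one_ne_zero)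
  refine ⟨t⁻¹, by simp [ht1], ?_⟩
  rw [chartPoint, chartPoint, P1.mk_eq_mk_iff_det]
  cases b <;> cases b'
  · exact absurd rfl hbb
  · simp [chart, ht0]
  · simp [chart, ht0]
  · exact absurd rfl hbb

end Charts

section GoodReduction

variable {K : Type*} [Field K] {d : ℕ}

lemma P1Map.eval_ne_zero (φ : P1Map K d) {a : Fin 2 → K} (ha : a ≠ 0) :
    ![eval a φ.F, eval a φ.G] ≠ 0 := fun h ↦ by
  have heval (H : MvPolynomial (Fin 2) K) (hH : eval a H = 0) :
      aeval ![algebraMap K (AlgebraicClosure K) (a 0), algebraMap K (AlgebraicClosure K) (a 1)] H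
        = 0 := by
    have hcoord : ![algebraMap K (AlgebraicClosure K) (a 0), algebraMap K _ (a 1)] =
        algebraMap K (AlgebraicClosure K) ∘ a := by
      ext i
      fin_cases i <;> rfl
    rw [hcoord, aeval_algebraMap_apply, aeval_eq_eval]
    simp [hH]
  obtain ⟨h0, h1⟩ := φ.coprime _ _ (heval _ (congrFun h 0)) (heval _ (congrFun h 1))
  refine ha (_root_.funext fun i ↦ ?_)
  fin_cases i
  · simpa using h0
  · simpa using h1

lemma P1Map.toFun_mk (φ : P1Map K d) {a : Fin 2 → K} (ha : a ≠ 0) :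
    φ.toFun (Projectivization.mk K a ha) =
      Projectivization.mk K ![eval a φ.F, eval a φ.G] (φ.eval_ne_zero ha) := by
  have hvec : a = ![a 0, a 1] := by
    ext i
    fin_cases i <;> rfl
  have hcompat := φ.compat (a 0) (a 1) (by rwa [← hvec]) (by rw [← hvec]; exact φ.eval_ne_zero ha)
  simpa only [← hvec] using hcompat

variable [NumberField K] {v : HeightOneSpectrum (𝓞 K)}

variable (v) in
lemma isNonarchimedean_adicAbv : IsNonarchimedean (adicAbv K v) :=
  NumberField.HeightOneSpectrum.adicAbv_add_le_max K v

variable (v) in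
/-- The valuation ring of the finite place `v`. -/
noncomputable abbrev integersAt : ValuationSubring K := (v.valuation K).valuationSubring

lemma mem_integersAt {x : K} : x ∈ integersAt v ↔ adicAbv K v x ≤ 1 := by
  rw [Valuation.mem_valuationSubring_iff, NumberField.HeightOneSpectrum.adicAbv_def,
    ← WithZeroMulInt.toNNReal_le_one_iff
      (NumberField.HeightOneSpectrum.one_lt_absNorm_nnreal v)]
  norm_cast

lemma adicAbv_le_one (x : integersAt v) : adicAbv K v x ≤ 1 := mem_integersAt.mp x.2

lemma residue_eq_zero_of_adicAbv_lt_one {x : integersAt v} (h : adicAbv K v x < 1) :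
    IsLocalRing.residue (integersAt v) x = 0 := by
  rw [IsLocalRing.residue_eq_zero_iff, IsLocalRing.mem_maximalIdeal, mem_nonunits_iff]
  intro hunit
  obtain ⟨y, hxy⟩ := hunit.exists_right_inv
  have hone : adicAbv K v x * adicAbv K v y = 1 := by
    rw [← map_mul, ← map_one (adicAbv K v)]
    exact_mod_cast congrArg (fun z : integersAt v ↦ adicAbv K v z) hxy
  exact ((mul_le_of_le_one_right ((adicAbv K v).nonneg _) (adicAbv_le_one y)).trans_lt h).ne hone

lemma supAbs_eval_eq_one_of_residue_no_common_zero {k : Type*} [Field k]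
    (ρ : IsLocalRing.ResidueField (integersAt v) →+* k)
    {F₀ G₀ : MvPolynomial (Fin 2) (integersAt v)}
    (hres : ∀ x y : k, eval ![x, y] (map (ρ.comp (IsLocalRing.residue _)) F₀) = 0 →
      eval ![x, y] (map (ρ.comp (IsLocalRing.residue _)) G₀) = 0 → x = 0 ∧ y = 0)
    {a : Fin 2 → integersAt v} {i : Fin 2} (hi : a i = 1) :
    supAbs (adicAbv K v) ![(eval a F₀ : K), (eval a G₀ : K)] = 1 := by
  refine le_antisymm (max_le (adicAbv_le_one _) (adicAbv_le_one _)) (not_lt.mp fun hlt ↦ ?_)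
  have hzero (H : MvPolynomial (Fin 2) (integersAt v)) (hH : adicAbv K v (eval a H) < 1) :
      eval ![ρ (IsLocalRing.residue _ (a 0)), ρ (IsLocalRing.residue _ (a 1))]
        (map (ρ.comp (IsLocalRing.residue _)) H) = 0 := by
    have hcoord : ![ρ (IsLocalRing.residue _ (a 0)), ρ (IsLocalRing.residue _ (a 1))] =
        ρ.comp (IsLocalRing.residue _) ∘ a := by
      ext j
      fin_cases j <;> rfl
    rw [hcoord, ← map_eval, RingHom.comp_apply, residue_eq_zero_of_adicAbv_lt_one hH, map_zero]
  obtain ⟨h0, h1⟩ := hres _ _ (hzero F₀ ((le_max_left _ _).trans_lt hlt))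
    (hzero G₀ ((le_max_right _ _).trans_lt hlt))
  fin_cases i
  · simp [show a 0 = 1 from hi] at h0
  · simp [show a 1 = 1 from hi] at h1

lemma GoodReductionAt.exists_integral_forms {φ : P1Map K d} (hφ : GoodReductionAt φ v) :
    ∃ F₀ G₀ : MvPolynomial (Fin 2) (integersAt v), ∀ a : Fin 2 → integersAt v, (∃ i, a i = 1) →
      ∀ ha : (fun i ↦ (a i : K)) ≠ 0, ∃ hb : ![(eval a F₀ : K), (eval a G₀ : K)] ≠ 0,
        φ.toFun (Projectivization.mk K _ ha) = Projectivization.mk K _ hb ∧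
        supAbs (adicAbv K v) ![(eval a F₀ : K), (eval a G₀ : K)] = 1 := by
  obtain ⟨c, hc, F₀, G₀, hF, hG, -, hres⟩ := hφ
  refine ⟨F₀, G₀, fun a ⟨i, hi⟩ ha ↦ ?_⟩
  have heval (H : MvPolynomial (Fin 2) (integersAt v)) :
      (eval a H : K) = eval (fun i ↦ (a i : K)) (map (integersAt v).subtype H) :=
    map_eval (integersAt v).subtype a H
  have hsmul : ![(eval a F₀ : K), (eval a G₀ : K)] =
      c • ![eval (fun i ↦ (a i : K)) φ.F, eval (fun i ↦ (a i : K)) φ.G] := by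
    rw [heval, heval, hF, hG]
    simp
  refine ⟨hsmul ▸ smul_ne_zero hc (φ.eval_ne_zero ha), ?_,
    supAbs_eval_eq_one_of_residue_no_common_zero _ hres hi⟩
  rw [φ.toFun_mk ha, Projectivization.mk_eq_mk_iff']
  exact ⟨c⁻¹, by rw [hsmul, smul_smul, inv_mul_cancel₀ hc, one_smul]⟩

lemma map_chart_apply {R S : Type*} [Semiring R] [Semiring S] (f : R →+* S) (b : Bool) (t : R)
    (i : Fin 2) : f (chart b t i) = chart b (f t) i := by
  cases b <;> fin_cases i <;> simp [chart]

lemma exists_chart_eq_one {R : Type*} [One R] (b : Bool) (t : R) : ∃ i, chart b t i = 1 := by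
  cases b
  · exact ⟨0, rfl⟩
  · exact ⟨1, rfl⟩

lemma GoodReductionAt.exists_polynomial_chordalDist_eq {φ : P1Map K d}
    (hφ : GoodReductionAt φ v) (b : Bool) (P : P1 K) :
    ∃ h : Polynomial (integersAt v), ∀ τ : integersAt v,
      chordalDist (adicAbv K v) (φ.toFun (chartPoint b (τ : K))) P =
        adicAbv K v ((h.eval τ : integersAt v) : K) := by
  obtain ⟨F₀, G₀, hforms⟩ := hφ.exists_integral_forms
  obtain ⟨b', π, hπ, rfl⟩ := exists_eq_chartPoint (adicAbv K v) P
  lift π to integersAt v using mem_integersAt.mpr hπ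
  refine ⟨eval₂ Polynomial.C (chart b Polynomial.X)
    (C (chart b' π 1) * F₀ - C (chart b' π 0) * G₀), fun τ ↦ ?_⟩
  have heval (H : MvPolynomial (Fin 2) (integersAt v)) :
      (eval₂ Polynomial.C (chart b Polynomial.X) H).eval τ = eval (chart b τ) H := by
    have hcoord : Polynomial.evalRingHom τ ∘ chart b Polynomial.X = chart b τ :=
      _root_.funext fun i ↦ by
        rw [Function.comp_apply, map_chart_apply, Polynomial.coe_evalRingHom, Polynomial.eval_X]
    have hC : (Polynomial.evalRingHom τ).comp Polynomial.C = RingHom.id (integersAt v) := by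
      ext
      simp
    rw [← Polynomial.coe_evalRingHom, eval₂_comp_left, hcoord, hC, eval₂_id]
  have hcoe (s : integersAt v) : (fun i ↦ ((chart b s i : integersAt v) : K)) = chart b (s : K) :=
    _root_.funext (map_chart_apply (integersAt v).subtype b s)
  have hcoe' (i : Fin 2) : ((chart b' π i : integersAt v) : K) = chart b' (π : K) i :=
    map_chart_apply (integersAt v).subtype b' π i
  obtain ⟨hb, hval, hsup⟩ := hforms (chart b τ) (exists_chart_eq_one b τ)
    (by rw [hcoe]; exact chart_ne_zero b (τ : K))
  have hpt : φ.toFun (chartPoint b (τ : K)) = Projectivization.mk K _ hb := by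
    rw [← hval]
    simp only [hcoe, chartPoint]
  rw [hpt, chartPoint, chordalDist_mk, hsup, supAbs_chart _ b' hπ, heval]
  simp [hcoe', mul_comm]

lemma prod_sub_dvd_eval {R ι : Type*} [CommRing R] [IsDomain R] {p : Polynomial R}
    {s : Finset ι} {t : ι → R} (hinj : Set.InjOn t s) (hroot : ∀ i ∈ s, p.IsRoot (t i)) (α : R) :
    ∏ i ∈ s, (α - t i) ∣ p.eval α := by
  rcases eq_or_ne p 0 with rfl | hp
  · simp
  have hle : (s.image t).val ≤ p.roots := by
    refine (Multiset.le_iff_subset (s.image t).nodup).mpr fun x hx ↦ ?_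
    obtain ⟨i, hi, rfl⟩ := Finset.mem_image.mp (Finset.mem_val.mp hx)
    exact (Polynomial.mem_roots hp).mpr (hroot i hi)
  have hdvd := (Multiset.prod_X_sub_C_dvd_iff_le_roots hp _).mpr hle
  rw [Finset.prod_map_val, Finset.prod_image hinj] at hdvd
  simpa [Polynomial.eval_prod] using Polynomial.eval_dvd hdvd (x := α)

/-- The polynomial computing the distance to `P` vanishes at the points of the fibre over `P`, so it
is divisible by the corresponding linear factors. -/
lemma GoodReductionAt.chordalDist_map_le_prod {φ : P1Map K d} (hφ : GoodReductionAt φ v)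
    {Z : Finset (P1 K)} {P : P1 K} (hZ : ∀ z ∈ Z, φ.toFun z = P) (A : P1 K) :
    chordalDist (adicAbv K v) (φ.toFun A) P ≤ ∏ z ∈ Z, chordalDist (adicAbv K v) A z := by
  have hv := isNonarchimedean_adicAbv v
  obtain ⟨b, α, hα, rfl⟩ := exists_eq_chartPoint (adicAbv K v) A
  lift α to integersAt v using mem_integersAt.mpr hα
  set Z' := {z ∈ Z | chordalDist (adicAbv K v) (chartPoint b (α : K)) z < 1}
  have hchart : ∀ z ∈ Z', ∃ t : integersAt v, z = chartPoint b (t : K) := fun z hz ↦ by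
    obtain ⟨t, ht, hzt⟩ :=
      exists_eq_chartPoint_of_chordalDist_lt_one hv b hα (Finset.mem_filter.mp hz).2
    exact ⟨⟨t, mem_integersAt.mpr ht⟩, hzt⟩
  choose! t ht using hchart
  obtain ⟨h, hh⟩ := hφ.exists_polynomial_chordalDist_eq b P
  have hroot : ∀ z ∈ Z', h.IsRoot (t z) := fun z hz ↦ by
    have hzero := hh (t z)
    rw [← ht z hz, hZ z (Finset.mem_filter.mp hz).1, chordalDist_self, eq_comm,
      (adicAbv K v).eq_zero] at hzero
    exact_mod_cast hzero
  have hinj : Set.InjOn t Z' := fun z hz w hw hzw ↦ by rw [ht z hz, ht w hw, hzw]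
  obtain ⟨c, hc⟩ := prod_sub_dvd_eval hinj hroot α
  calc chordalDist (adicAbv K v) (φ.toFun (chartPoint b (α : K))) P
      = (∏ z ∈ Z', adicAbv K v (α - t z)) * adicAbv K v c := by
        rw [hh, hc]
        push_cast
        rw [map_mul, map_prod]
    _ ≤ ∏ z ∈ Z', adicAbv K v (α - t z) :=
        mul_le_of_le_one_right (Finset.prod_nonneg fun _ _ ↦ (adicAbv K v).nonneg _)
          (adicAbv_le_one c)
    _ = ∏ z ∈ Z', chordalDist (adicAbv K v) (chartPoint b (α : K)) z :=
        Finset.prod_congr rfl fun z hz ↦ by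
          conv_rhs => rw [ht z hz, chordalDist_chartPoint _ b hα (adicAbv_le_one _)]
    _ = ∏ z ∈ Z, chordalDist (adicAbv K v) (chartPoint b (α : K)) z :=
        Finset.prod_filter_of_ne fun z _ hz ↦ (chordalDist_le_one hv _ _).lt_of_ne hz

end GoodReduction

section Preperiod

variable {α : Type*} {f : α → α}

open Function (periodicPts)

lemma iterate_mem_periodicPts {P : α} (hP : P ∈ periodicPts f) (n : ℕ) :
    f^[n] P ∈ periodicPts f :=
  (Function.bijOn_periodicPts f).mapsTo.iterate n hP

lemma iterate_injOn_periodicPts (n : ℕ) : Set.InjOn f^[n] (periodicPts f) :=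
  (Function.bijOn_periodicPts f).injOn.iterate (Function.bijOn_periodicPts f).mapsTo n

lemma exists_iterate_iterate_eq {P Q : α} (hP : P ∈ periodicPts f) (hQ : Q ∈ periodicPts f)
    (n : ℕ) : ∃ m, f^[m] (f^[n] P) = P ∧ f^[m] (f^[n] Q) = Q := by
  obtain ⟨k, hk, hkP⟩ := hP
  obtain ⟨l, hl, hlQ⟩ := hQ
  have hle : n ≤ k * l * n := Nat.le_mul_of_pos_left n (Nat.mul_pos hk hl)
  refine ⟨k * l * n - n, ?_, ?_⟩
  · rw [← Function.iterate_add_apply, Nat.sub_add_cancel hle]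
    exact (hkP.mul_const l).mul_const n
  · rw [← Function.iterate_add_apply, Nat.sub_add_cancel hle]
    exact (hlQ.const_mul k).mul_const n

/-- `Q` reaches a periodic point after exactly `l` steps, and from then on its orbit moves in step
with the orbit of the periodic point `P`. -/
def EntersInPhase (f : α → α) (Q : α) (l : ℕ) (P : α) : Prop :=
  P ∈ periodicPts f ∧ f^[l] Q = f^[l] P ∧ ∀ k < l, f^[k] Q ∉ periodicPts f

namespace EntersInPhase

variable {P Q P' : α} {l l' : ℕ}

lemma exists_of_iterate_mem (h : ∃ m, f^[m] Q ∈ periodicPts f) :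
    ∃ l P, EntersInPhase f Q l P := by
  have hl := Nat.find_spec h
  obtain ⟨m, hm, -⟩ := exists_iterate_iterate_eq hl hl (Nat.find h)
  refine ⟨Nat.find h, f^[m] (f^[Nat.find h] Q), iterate_mem_periodicPts hl m, ?_,
    fun _ ↦ Nat.find_min h⟩
  rw [Function.Commute.iterate_iterate_self, hm]

protected lemma unique (h : EntersInPhase f Q l P) (h' : EntersInPhase f Q l' P') :
    l = l' ∧ P = P' := by
  have hl : l = l' := by
    rcases lt_trichotomy l l' with hlt | heq | hlt
    · exact absurd (h.2.1 ▸ iterate_mem_periodicPts h.1 l) (h'.2.2 l hlt)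
    · exact heq
    · exact absurd (h'.2.1 ▸ iterate_mem_periodicPts h'.1 l') (h.2.2 l' hlt)
  subst hl
  exact ⟨rfl, iterate_injOn_periodicPts l h.1 h'.1 (h.2.1.symm.trans h'.2.1)⟩

protected lemma iterate (n : ℕ) (h : EntersInPhase f Q (l + n) P) :
    EntersInPhase f (f^[n] Q) l (f^[n] P) := by
  refine ⟨iterate_mem_periodicPts h.1 n, ?_, fun k hk ↦ ?_⟩
  · rw [← Function.iterate_add_apply, ← Function.iterate_add_apply]
    exact h.2.1
  · rw [← Function.iterate_add_apply]
    exact h.2.2 _ (by lia)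

lemma zero_iff : EntersInPhase f Q 0 P ↔ P ∈ periodicPts f ∧ Q = P := by
  simp [EntersInPhase]

lemma notMem_periodicPts (h : EntersInPhase f Q (l + 1) P) : Q ∉ periodicPts f :=
  h.2.2 0 l.succ_pos

lemma of_map (hP : P ∈ periodicPts f) (h : EntersInPhase f (f Q) (l + 1) (f P)) :
    EntersInPhase f Q (l + 1 + 1) P :=
  ⟨hP, h.2.1, fun
    | 0, _ => fun hQ ↦ h.notMem_periodicPts (iterate_mem_periodicPts hQ 1)
    | k + 1, hk => h.2.2 k (Nat.lt_of_succ_lt_succ hk)⟩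

end EntersInPhase

end Preperiod

section Contraction

variable {K : Type*} [Field K] [NumberField K] {d : ℕ} {φ : P1Map K d}
  {v : HeightOneSpectrum (𝓞 K)} (hφ : GoodReductionAt φ v)

open Function (periodicPts)

namespace GoodReductionAt

include hφ

lemma chordalDist_iterate_le_prod (n : ℕ) {Z : Finset (P1 K)} {P : P1 K}
    (hZ : ∀ z ∈ Z, φ.toFun^[n] z = P) (A : P1 K) :
    chordalDist (adicAbv K v) (φ.toFun^[n] A) P ≤ ∏ z ∈ Z, chordalDist (adicAbv K v) A z := by
  induction n generalizing Z A with
  | zero =>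
    rcases Finset.subset_singleton_iff.mp fun z hz ↦ Finset.mem_singleton.mpr (hZ z hz)
      with rfl | rfl
    · simpa using chordalDist_le_one (isNonarchimedean_adicAbv v) A P
    · simp
  | succ n ih =>
    have hfib : ∀ w ∈ Z.image φ.toFun, φ.toFun^[n] w = P := fun w hw ↦ by
      obtain ⟨z, hz, rfl⟩ := Finset.mem_image.mp hw
      exact hZ z hz
    calc chordalDist (adicAbv K v) (φ.toFun^[n] (φ.toFun A)) P
        ≤ ∏ w ∈ Z.image φ.toFun, chordalDist (adicAbv K v) (φ.toFun A) w := ih hfib _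
      _ ≤ ∏ w ∈ Z.image φ.toFun, ∏ z ∈ Z with φ.toFun z = w, chordalDist (adicAbv K v) A z :=
          Finset.prod_le_prod (fun _ _ ↦ chordalDist_nonneg _ _ _) fun _ _ ↦
            hφ.chordalDist_map_le_prod (fun _ hz ↦ (Finset.mem_filter.mp hz).2) A
      _ = ∏ z ∈ Z, chordalDist (adicAbv K v) A z :=
          Finset.prod_fiberwise_of_maps_to (fun _ ↦ Finset.mem_image_of_mem _) _

lemma chordalDist_iterate_le (n : ℕ) (A B : P1 K) :
    chordalDist (adicAbv K v) (φ.toFun^[n] A) (φ.toFun^[n] B) ≤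
      chordalDist (adicAbv K v) A B := by
  simpa using hφ.chordalDist_iterate_le_prod n (Z := {B}) (by simp) A

lemma chordalDist_iterate_eq (n : ℕ) {A B : P1 K} (hA : A ∈ periodicPts φ.toFun)
    (hB : B ∈ periodicPts φ.toFun) :
    chordalDist (adicAbv K v) (φ.toFun^[n] A) (φ.toFun^[n] B) =
      chordalDist (adicAbv K v) A B := by
  obtain ⟨m, hmA, hmB⟩ := exists_iterate_iterate_eq hA hB n
  refine le_antisymm (hφ.chordalDist_iterate_le n A B) ?_
  simpa only [hmA, hmB] using hφ.chordalDist_iterate_le m (φ.toFun^[n] A) (φ.toFun^[n] B)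

/-- One step before `Q` becomes periodic, its image and that of `P` are two points of the same
fibre. The distance from `R` to `P` is preserved by `φ`, so `R` is far from the other point. -/
lemma chordalDist_eq_one_of_ne {P Q R : P1 K} {l : ℕ} (hQ : EntersInPhase φ.toFun Q (l + 1) P)
    (hR : R ∈ periodicPts φ.toFun) (hne : R ≠ P) : chordalDist (adicAbv K v) Q R = 1 := by
  have hv := isNonarchimedean_adicAbv v
  set f := φ.toFun
  have hlast : EntersInPhase f (f^[l] Q) (0 + 1) (f^[l] P) :=
    EntersInPhase.iterate l (by rwa [zero_add, add_comm])
  have hPper : f^[l] P ∈ periodicPts f := iterate_mem_periodicPts hQ.1 l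
  have hQP : f^[l] Q ≠ f^[l] P := fun h ↦ hlast.notMem_periodicPts (h ▸ hPper)
  have hprod := hφ.chordalDist_map_le_prod (Z := {f^[l] Q, f^[l] P}) (P := f (f^[l] P))
    (by simpa [f] using hlast.2.1) (f^[l] R)
  rw [Finset.prod_pair hQP,
    show chordalDist (adicAbv K v) (f (f^[l] R)) (f (f^[l] P)) = _ from
      hφ.chordalDist_iterate_eq 1 (iterate_mem_periodicPts hR l) hPper] at hprod
  have hRP : 0 < chordalDist (adicAbv K v) (f^[l] R) (f^[l] P) :=
    chordalDist_pos _ fun h ↦ hne (iterate_injOn_periodicPts l hR hQ.1 h)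
  refine (chordalDist_le_one hv _ _).antisymm ?_
  calc 1 ≤ chordalDist (adicAbv K v) (f^[l] R) (f^[l] Q) :=
        le_of_mul_le_mul_right (by rwa [one_mul]) hRP
    _ = chordalDist (adicAbv K v) (f^[l] Q) (f^[l] R) := chordalDist_comm _ _ _
    _ ≤ chordalDist (adicAbv K v) Q R := hφ.chordalDist_iterate_le l Q R

lemma chordalDist_eq_one_of_ne_of_ne {P Q P' Q' : P1 K} {l l' : ℕ}
    (hQ : EntersInPhase φ.toFun Q l P) (hQ' : EntersInPhase φ.toFun Q' l' P') (hne : P ≠ P')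
    (hl : l ≠ l') : chordalDist (adicAbv K v) Q Q' = 1 := by
  wlog hlt : l < l' generalizing Q P Q' P' l l'
  · rw [chordalDist_comm]
    exact this hQ' hQ hne.symm hl.symm (by lia)
  obtain ⟨k, rfl⟩ : ∃ k, l' = k + 1 + l := ⟨l' - l - 1, by lia⟩
  refine (chordalDist_le_one (isNonarchimedean_adicAbv v) _ _).antisymm ?_
  have hfar := hφ.chordalDist_eq_one_of_ne (hQ'.iterate l) (iterate_mem_periodicPts hQ.1 l)
    fun h ↦ hne (iterate_injOn_periodicPts l hQ.1 hQ'.1 h)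
  rw [← hfar, ← hQ.2.1, chordalDist_comm]
  exact hφ.chordalDist_iterate_le l Q Q'

end GoodReductionAt

end Contraction

section Separation

variable {X : Type*}

/-- Any two finite sets `A` and `B` that are large enough have subsets, smaller by at most a factor
`m`, such that `R a a' b b'` holds for all `a, a'` in the first and all `b, b'` in the second. -/
def HasLargeBoxes (R : X → X → X → X → Prop) (m : ℕ) : Prop :=
  ∀ ⦃k : ℕ⦄, 2 ≤ k → ∀ A B : Finset X, m * k ≤ A.card → m * k ≤ B.card →
    ∃ A' ⊆ A, ∃ B' ⊆ B, k ≤ A'.card ∧ k ≤ B'.card ∧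
      ∀ a ∈ A', ∀ a' ∈ A', ∀ b ∈ B', ∀ b' ∈ B', R a a' b b'

namespace HasLargeBoxes

variable {R : X → X → X → X → Prop} {m n : ℕ}

lemma mono (hR : HasLargeBoxes R m) (hmn : m ≤ n) : HasLargeBoxes R n := fun _ hk A B hA hB ↦
  hR hk A B ((Nat.mul_le_mul_right _ hmn).trans hA) ((Nat.mul_le_mul_right _ hmn).trans hB)

lemma imp {S : X → X → X → X → Prop} (hR : HasLargeBoxes R m)
    (hRS : ∀ a a' b b', R a a' b b' → S a a' b b') : HasLargeBoxes S m := fun _ hk A B hA hB ↦ by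
  obtain ⟨A', hA', B', hB', hcA, hcB, h⟩ := hR hk A B hA hB
  exact ⟨A', hA', B', hB', hcA, hcB, fun a ha a' ha' b hb b' hb' ↦
    hRS _ _ _ _ (h a ha a' ha' b hb b' hb')⟩

lemma comap {Y : Type*} {g : Y → X} (hR : HasLargeBoxes R m) (hg : Function.Injective g) :
    HasLargeBoxes (fun a a' b b' ↦ R (g a) (g a') (g b) (g b')) m := fun k hk A B hA hB ↦ by
  obtain ⟨A', hA', B', hB', hcA, hcB, h⟩ := hR hk (A.map ⟨g, hg⟩) (B.map ⟨g, hg⟩)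
    (by rwa [Finset.card_map]) (by rwa [Finset.card_map])
  obtain ⟨A'', hA'', rfl⟩ := Finset.subset_map_iff.mp hA'
  obtain ⟨B'', hB'', rfl⟩ := Finset.subset_map_iff.mp hB'
  rw [Finset.card_map] at hcA hcB
  exact ⟨A'', hA'', B'', hB'', hcA, hcB, fun a ha a' ha' b hb b' hb' ↦
    h _ (Finset.mem_map_of_mem _ ha) _ (Finset.mem_map_of_mem _ ha')
      _ (Finset.mem_map_of_mem _ hb) _ (Finset.mem_map_of_mem _ hb')⟩

lemma of_subtype {p : X → Prop} (hp : ∀ x y, ¬ p x → ¬ p y → x = y)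
    (hR : HasLargeBoxes (fun a a' b b' : {x // p x} ↦ R a a' b b') m) :
    HasLargeBoxes R (m + 1) := fun k hk A B hA hB ↦ by
  have hcard (C : Finset X) : C.card ≤ (C.subtype p).card + 1 := by
    have hle : {x ∈ C | ¬ p x}.card ≤ 1 := Finset.card_le_one.mpr fun x hx y hy ↦
      hp x y (Finset.mem_filter.mp hx).2 (Finset.mem_filter.mp hy).2
    have := Finset.card_filter_add_card_filter_not (s := C) p
    rw [Finset.card_subtype]
    lia
  rw [add_one_mul] at hA hB
  obtain ⟨A', hA', B', hB', hcA, hcB, h⟩ := hR hk (A.subtype p) (B.subtype p)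
    (by have := hcard A; lia) (by have := hcard B; lia)
  have hsub {C : Finset X} {C' : Finset {x // p x}} (hC : C' ⊆ C.subtype p) :
      C'.map (Function.Embedding.subtype p) ⊆ C := fun x hx ↦ by
    obtain ⟨y, hy, rfl⟩ := Finset.mem_map.mp hx
    exact Finset.mem_subtype.mp (hC hy)
  refine ⟨_, hsub hA', _, hsub hB', by rwa [Finset.card_map], by rwa [Finset.card_map], ?_⟩
  simpa only [Finset.forall_mem_map, Function.Embedding.subtype_apply] using h

lemma forall_mem {I : Type*} {R : I → X → X → X → X → Prop} (hm : 1 ≤ m)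
    (hR : ∀ i, HasLargeBoxes (R i) m) (s : Finset I) :
    HasLargeBoxes (fun a a' b b' ↦ ∀ i ∈ s, R i a a' b b') (m ^ s.card) := by
  induction s using Finset.induction_on with
  | empty =>
    exact fun k _ A B hA hB ↦ ⟨A, Finset.Subset.refl _, B, Finset.Subset.refl _,
      by simpa using hA, by simpa using hB, by simp⟩
  | insert i s hi ih =>
    intro k hk A B hA hB
    rw [Finset.card_insert_of_notMem hi, pow_succ', mul_assoc] at hA hB
    have hpow : 1 ≤ m ^ s.card := Nat.one_le_pow _ _ hm
    obtain ⟨A₁, hA₁, B₁, hB₁, hcA₁, hcB₁, h₁⟩ := hR i (by nlinarith) A B hA hB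
    obtain ⟨A₂, hA₂, B₂, hB₂, hcA₂, hcB₂, h₂⟩ := ih hk A₁ B₁ hcA₁ hcB₁
    refine ⟨A₂, hA₂.trans hA₁, B₂, hB₂.trans hB₁, hcA₂, hcB₂, fun a ha a' ha' b hb b' hb' ↦ ?_⟩
    exact (Finset.forall_mem_insert _ _ _).mpr
      ⟨h₁ a (hA₂ ha) a' (hA₂ ha') b (hB₂ hb) b' (hB₂ hb'), h₂ a ha a' ha' b hb b' hb'⟩

end HasLargeBoxes

/-- The radius is that of the smallest closed ball around a point of `A` with `k` points of `A`. -/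
lemma exists_radius_card_ball_lt [MetricSpace X] {A : Finset X} {k : ℕ} (hk : 2 ≤ k)
    (hA : k ≤ A.card) :
    ∃ x ∈ A, ∃ r : ℝ, 0 < r ∧ k ≤ {y ∈ A | dist y x ≤ r}.card ∧
      ∀ y ∈ A, {z ∈ A | dist z y < r}.card < k := by
  set V := {p ∈ A ×ˢ A | k ≤ {z ∈ A | dist z p.1 ≤ dist p.2 p.1}.card}
  have hV {x y : X} :
      (x, y) ∈ V ↔ (x ∈ A ∧ y ∈ A) ∧ k ≤ {z ∈ A | dist z x ≤ dist y x}.card := by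
    simp [V]
  have hVne : V.Nonempty := by
    obtain ⟨x, hx⟩ : A.Nonempty := Finset.card_pos.mp (by lia)
    obtain ⟨y, hy, hmax⟩ := Finset.exists_max_image A (dist · x) ⟨x, hx⟩
    exact ⟨(x, y), hV.mpr ⟨⟨hx, hy⟩, by rwa [Finset.filter_true_of_mem hmax]⟩⟩
  obtain ⟨⟨x, y⟩, hxy, hmin⟩ := Finset.exists_min_image V (fun p ↦ dist p.2 p.1) hVne
  obtain ⟨⟨hx, -⟩, hcard⟩ := hV.mp hxy
  refine ⟨x, hx, dist y x, dist_pos.mpr ?_, hcard, fun u hu ↦ not_le.mp fun hle ↦ ?_⟩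
  · rintro rfl
    have hsub : {z ∈ A | dist z y ≤ dist y y} ⊆ {y} := fun z hz ↦ by
      simpa using (Finset.mem_filter.mp hz).2
    have := Finset.card_le_card hsub
    rw [Finset.card_singleton] at this
    lia
  · obtain ⟨w, hw, hmax⟩ := Finset.exists_max_image {z ∈ A | dist z u < dist y x} (dist · u)
      (Finset.card_pos.mp (by lia))
    obtain ⟨hwA, hwu⟩ := Finset.mem_filter.mp hw
    refine (hmin (u, w) (hV.mpr ⟨⟨hu, hwA⟩, hle.trans (Finset.card_le_card fun z hz ↦ ?_)⟩)).not_gt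
      hwu
    exact Finset.mem_filter.mpr ⟨(Finset.mem_filter.mp hz).1, hmax z hz⟩

section Ultrametric

lemma dist_eq_of_dist_le_of_lt_dist [PseudoMetricSpace X] [IsUltrametricDist X] {x p q : X} {r : ℝ}
    (hp : dist p x ≤ r) (hq : r < dist q x) : dist p q = dist q x := by
  have hlt : dist p x < dist x q := by
    rw [dist_comm x q]
    exact hp.trans_lt hq
  rw [IsUltrametricDist.dist_eq_max_of_dist_ne_dist p x q hlt.ne, max_eq_right hlt.le, dist_comm]

/-- Take the smallest union of open balls with at least `k` points; otherwise one could remove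
a ball. -/
lemma exists_union_of_balls_card_lt [PseudoMetricSpace X] [IsUltrametricDist X] {A : Finset X}
    {k : ℕ} {r : ℝ} (hk : 0 < k) (hA : k ≤ A.card) (hr : 0 < r)
    (hball : ∀ y ∈ A, {z ∈ A | dist z y < r}.card < k) :
    ∃ U ⊆ A, k ≤ U.card ∧ U.card < 2 * k ∧ ∀ y ∈ U, ∀ z ∈ A, dist z y < r → z ∈ U := by
  set 𝒰 := {U ∈ A.powerset | k ≤ U.card ∧ ∀ y ∈ U, ∀ z ∈ A, dist z y < r → z ∈ U}
  have h𝒰 {U : Finset X} :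
      U ∈ 𝒰 ↔ U ⊆ A ∧ k ≤ U.card ∧ ∀ y ∈ U, ∀ z ∈ A, dist z y < r → z ∈ U := by
    simp [𝒰]
  obtain ⟨U, hU, hmin⟩ := Finset.exists_min_image 𝒰 Finset.card
    ⟨A, h𝒰.mpr ⟨Finset.Subset.refl _, hA, fun _ _ _ hz _ ↦ hz⟩⟩
  obtain ⟨hUA, hkU, hclosed⟩ := h𝒰.mp hU
  refine ⟨U, hUA, hkU, not_le.mp fun hle ↦ ?_, hclosed⟩
  obtain ⟨u, hu⟩ : U.Nonempty := Finset.card_pos.mp (by lia)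
  have hsplit : {z ∈ U | dist z u < r}.card + {z ∈ U | ¬ dist z u < r}.card = U.card :=
    Finset.card_filter_add_card_filter_not _
  have hlt : {z ∈ U | dist z u < r}.card < k :=
    (Finset.card_le_card (Finset.filter_subset_filter _ hUA)).trans_lt (hball u (hUA hu))
  have hpos : 0 < {z ∈ U | dist z u < r}.card :=
    Finset.card_pos.mpr ⟨u, Finset.mem_filter.mpr ⟨hu, by rwa [dist_self]⟩⟩
  have hrest : {z ∈ U | ¬ dist z u < r} ∈ 𝒰 := by
    refine h𝒰.mpr ⟨(Finset.filter_subset _ _).trans hUA, by lia, fun y hy z hz hzy ↦ ?_⟩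
    obtain ⟨hyU, hyu⟩ := Finset.mem_filter.mp hy
    refine Finset.mem_filter.mpr ⟨hclosed y hyU z hz hzy, fun hzu ↦ hyu ?_⟩
    exact (dist_triangle_max y z u).trans_lt (max_lt (by rwa [dist_comm]) hzu)
  have := hmin _ hrest
  lia

lemma exists_subsets_dist_eq [PseudoMetricSpace X] [IsUltrametricDist X] {A B : Finset X} {k : ℕ}
    {r : ℝ} (hk : 0 < k) (hA : 3 * k ≤ A.card) (hB : 2 * k ≤ B.card) (hr : 0 < r)
    (hAB : ∀ a ∈ A, ∀ b ∈ B, dist a b ≤ r) (hball : ∀ y ∈ A, {z ∈ A | dist z y < r}.card < k) :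
    ∃ A' ⊆ A, ∃ B' ⊆ B, k ≤ A'.card ∧ k ≤ B'.card ∧ ∀ a ∈ A', ∀ b ∈ B', dist a b = r := by
  obtain ⟨U, hUA, hkU, hU, hclosed⟩ := exists_union_of_balls_card_lt hk (by lia) hr hball
  have hsplit : {b ∈ B | ∃ u ∈ U, dist u b < r}.card + {b ∈ B | ¬ ∃ u ∈ U, dist u b < r}.card =
      B.card := Finset.card_filter_add_card_filter_not _
  by_cases hfar : k ≤ {b ∈ B | ¬ ∃ u ∈ U, dist u b < r}.card
  · refine ⟨U, hUA, _, Finset.filter_subset _ _, hkU, hfar, fun a ha b hb ↦ ?_⟩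
    obtain ⟨hbB, hb⟩ := Finset.mem_filter.mp hb
    exact (hAB a (hUA ha) b hbB).antisymm (not_lt.mp fun hlt ↦ hb ⟨a, ha, hlt⟩)
  · have hsdiff : (A \ U).card + U.card = A.card := Finset.card_sdiff_add_card_eq_card hUA
    refine ⟨A \ U, Finset.sdiff_subset, _, Finset.filter_subset _ _, by lia,
      (show k ≤ {b ∈ B | ∃ u ∈ U, dist u b < r}.card by lia), fun a ha b hb ↦ ?_⟩
    obtain ⟨haA, haU⟩ := Finset.mem_sdiff.mp ha
    obtain ⟨hbB, u, hu, hub⟩ := Finset.mem_filter.mp hb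
    refine (hAB a haA b hbB).antisymm (not_lt.mp fun hlt ↦ haU (hclosed u hu a haA ?_))
    exact (dist_triangle_max a b u).trans_lt (max_lt hlt (by rwa [dist_comm]))

lemma hasLargeBoxes_dist_mul_dist_eq [MetricSpace X] [IsUltrametricDist X] :
    HasLargeBoxes (fun a a' b b' : X ↦ dist a b * dist a' b' = dist a b' * dist a' b) 4 := by
  intro k hk A B hA hB
  obtain ⟨x, -, r, hr, hcard, hball⟩ := exists_radius_card_ball_lt hk (show k ≤ A.card by lia)
  have hsplitA : {y ∈ A | dist y x ≤ r}.card + {y ∈ A | ¬ dist y x ≤ r}.card = A.card :=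
    Finset.card_filter_add_card_filter_not _
  have hsplitB : {y ∈ B | dist y x ≤ r}.card + {y ∈ B | ¬ dist y x ≤ r}.card = B.card :=
    Finset.card_filter_add_card_filter_not _
  by_cases hBout : k ≤ {y ∈ B | ¬ dist y x ≤ r}.card
  · refine ⟨_, Finset.filter_subset _ _, _, Finset.filter_subset _ _, hcard, hBout,
      fun a ha a' ha' b hb b' hb' ↦ ?_⟩
    simp only [Finset.mem_filter, not_le] at ha ha' hb hb'
    rw [dist_eq_of_dist_le_of_lt_dist ha.2 hb.2, dist_eq_of_dist_le_of_lt_dist ha'.2 hb'.2,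
      dist_eq_of_dist_le_of_lt_dist ha.2 hb'.2, dist_eq_of_dist_le_of_lt_dist ha'.2 hb.2, mul_comm]
  by_cases hAout : k ≤ {y ∈ A | ¬ dist y x ≤ r}.card
  · refine ⟨_, Finset.filter_subset _ _, _, Finset.filter_subset _ _, hAout,
      (show k ≤ {y ∈ B | dist y x ≤ r}.card by lia), fun a ha a' ha' b hb b' hb' ↦ ?_⟩
    simp only [Finset.mem_filter, not_le] at ha ha' hb hb'
    rw [dist_comm a, dist_comm a', dist_comm a, dist_comm a',
      dist_eq_of_dist_le_of_lt_dist hb.2 ha.2, dist_eq_of_dist_le_of_lt_dist hb'.2 ha'.2,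
      dist_eq_of_dist_le_of_lt_dist hb'.2 ha.2, dist_eq_of_dist_le_of_lt_dist hb.2 ha'.2]
  obtain ⟨A', hA', B', hB', hcA, hcB, h⟩ := exists_subsets_dist_eq (A := {y ∈ A | dist y x ≤ r})
    (B := {y ∈ B | dist y x ≤ r}) (by lia) (by lia) (by lia) hr
    (fun a ha b hb ↦ (dist_triangle_max a x b).trans <| max_le (Finset.mem_filter.mp ha).2 <| by
      rw [dist_comm]
      exact (Finset.mem_filter.mp hb).2)
    (fun y hy ↦ (Finset.card_le_card (Finset.filter_subset_filter _ (Finset.filter_subset _ _))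
      ).trans_lt (hball y (Finset.mem_filter.mp hy).1))
  refine ⟨A', hA'.trans (Finset.filter_subset _ _), B', hB'.trans (Finset.filter_subset _ _), hcA,
    hcB, fun a ha a' ha' b hb b' hb' ↦ ?_⟩
  beta_reduce
  rw [h a ha b hb, h a' ha' b' hb', h a ha b' hb', h a' ha' b hb]

lemma hasLargeBoxes_chordalDist_mul_eq {F : Type*} [Field F] {v : AbsoluteValue F ℝ}
    (hv : IsNonarchimedean v) :
    HasLargeBoxes (fun a a' b b' : P1 F ↦
      chordalDist v a b * chordalDist v a' b' = chordalDist v a b' * chordalDist v a' b) 4 := by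
  let _ : MetricSpace (P1 F) :=
    { dist := chordalDist v
      dist_self := chordalDist_self v
      dist_comm := chordalDist_comm v
      dist_triangle := fun P Q R ↦ (chordalDist_le_max hv P Q R).trans
        (max_le_add_of_nonneg (chordalDist_nonneg v P Q) (chordalDist_nonneg v Q R))
      eq_of_dist_eq_zero := (chordalDist_eq_zero v).mp }
  have : IsUltrametricDist (P1 F) := ⟨chordalDist_le_max hv⟩
  exact hasLargeBoxes_dist_mul_dist_eq

end Ultrametric

section Complex

lemma norm_sub_mul_norm_sub_le {E : Type*} [SeminormedAddCommGroup E] {x a a' b b' : E} {ρ : ℝ}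
    (ha : ‖a - x‖ ≤ ρ) (ha' : ‖a' - x‖ ≤ ρ) (hb : 20 * ρ ≤ ‖b - x‖) (hb' : 20 * ρ ≤ ‖b' - x‖) :
    ‖a - a'‖ * ‖b - b'‖ ≤ 1 / 4 * (‖a - b‖ * ‖a' - b'‖) := by
  have hρ : 0 ≤ ρ := (norm_nonneg _).trans ha
  have haa : ‖a - a'‖ ≤ 2 * ρ := by
    linarith [norm_sub_le_norm_sub_add_norm_sub a x a', norm_sub_rev x a']
  have hab : 19 * ρ ≤ ‖a - b‖ := by
    linarith [norm_sub_le_norm_sub_add_norm_sub b a x, norm_sub_rev a b]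
  have hab' : 19 * ρ ≤ ‖a' - b'‖ := by
    linarith [norm_sub_le_norm_sub_add_norm_sub b' a' x, norm_sub_rev a' b']
  have hbb : ‖b - b'‖ ≤ ‖a - b‖ + ‖a' - b'‖ + 2 * ρ := by
    linarith [norm_sub_le_norm_sub_add_norm_sub b a b', norm_sub_rev a b,
      norm_sub_le_norm_sub_add_norm_sub a a' b']
  calc ‖a - a'‖ * ‖b - b'‖ ≤ (2 * ρ) * (‖a - b‖ + ‖a' - b'‖ + 2 * ρ) := by gcongr
    _ ≤ 1 / 4 * (‖a - b‖ * ‖a' - b'‖) := by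
        nlinarith [mul_nonneg (sub_nonneg.mpr hab) (sub_nonneg.mpr hab'),
          mul_nonneg hρ (sub_nonneg.mpr hab), mul_nonneg hρ (sub_nonneg.mpr hab')]

lemma floor_div_mem_Icc {s r : ℝ} (hr : 0 < r) {N : ℕ} (hs : |s| < N * r) :
    ⌊s / r⌋ ∈ Finset.Icc (-N : ℤ) N := by
  obtain ⟨hlo, hhi⟩ := abs_lt.mp hs
  rw [Finset.mem_Icc]
  constructor
  · rw [Int.le_floor, le_div_iff₀ hr]
    push_cast
    linarith
  · exact_mod_cast (Int.floor_le _).trans ((div_lt_iff₀ hr).mpr hhi).le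

lemma abs_sub_lt_of_floor_div_eq {s t r : ℝ} (hr : 0 < r) (h : ⌊s / r⌋ = ⌊t / r⌋) :
    |s - t| < r := by
  have := Int.abs_sub_lt_one_of_floor_eq_floor h
  rwa [← sub_div, abs_div, abs_of_pos hr, div_lt_one hr] at this

/-- Cover the large disc by a grid of squares of side `r / 2`. -/
lemma card_filter_norm_sub_lt {A : Finset ℂ} {k N : ℕ} {r : ℝ} (hr : 0 < r)
    (hball : ∀ y ∈ A, {z ∈ A | dist z y < r}.card < k) (x : ℂ) :
    {y ∈ A | ‖y - x‖ < N * (r / 2)}.card ≤ (2 * N + 1) ^ 2 * k := by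
  set D := {y ∈ A | ‖y - x‖ < N * (r / 2)}
  let cell (y : ℂ) : ℤ × ℤ := (⌊(y - x).re / (r / 2)⌋, ⌊(y - x).im / (r / 2)⌋)
  have hmaps : ∀ y ∈ D, cell y ∈ Finset.Icc (-N : ℤ) N ×ˢ Finset.Icc (-N : ℤ) N := fun y hy ↦ by
    have hy := (Finset.mem_filter.mp hy).2
    exact Finset.mem_product.mpr
      ⟨floor_div_mem_Icc (half_pos hr) ((Complex.abs_re_le_norm _).trans_lt hy),
        floor_div_mem_Icc (half_pos hr) ((Complex.abs_im_le_norm _).trans_lt hy)⟩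
  have hclose {y z : ℂ} (h : cell z = cell y) : dist z y < r := by
    obtain ⟨hre, him⟩ := Prod.mk.inj h
    have hre := abs_sub_lt_of_floor_div_eq (half_pos hr) hre
    have him := abs_sub_lt_of_floor_div_eq (half_pos hr) him
    have hnorm := Complex.norm_le_abs_re_add_abs_im (z - y)
    rw [← Complex.sub_re, sub_sub_sub_cancel_right] at hre
    rw [← Complex.sub_im, sub_sub_sub_cancel_right] at him
    rw [dist_eq_norm]
    linarith
  have hcell : ∀ c ∈ Finset.Icc (-N : ℤ) N ×ˢ Finset.Icc (-N : ℤ) N,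
      {y ∈ D | cell y = c}.card ≤ k := fun c _ ↦ by
    rcases Finset.eq_empty_or_nonempty {y ∈ D | cell y = c} with hempty | ⟨y, hy⟩
    · simp [hempty]
    · obtain ⟨hyD, rfl⟩ := Finset.mem_filter.mp hy
      refine (Finset.card_le_card fun z hz ↦ ?_).trans (hball y (Finset.mem_filter.mp hyD).1).le
      obtain ⟨hzD, hzy⟩ := Finset.mem_filter.mp hz
      exact Finset.mem_filter.mpr ⟨(Finset.mem_filter.mp hzD).1, hclose hzy⟩
  have hcount := Finset.card_le_mul_card_image_of_maps_to hmaps k hcell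
  have hgrid : (Finset.Icc (-N : ℤ) N ×ˢ Finset.Icc (-N : ℤ) N).card = (2 * N + 1) ^ 2 := by
    rw [Finset.card_product, Int.card_Icc, show ((N : ℤ) + 1 - -N).toNat = 2 * N + 1 by lia, sq]
  rwa [hgrid, mul_comm] at hcount

lemma hasLargeBoxes_norm_mul_norm_le : HasLargeBoxes (fun a a' b b' : ℂ ↦
    ‖a - a'‖ * ‖b - b'‖ ≤ 1 / 4 * (‖a - b‖ * ‖a' - b'‖)) (2 ^ 22 - 1) := by
  intro k hk A B hA hB
  obtain ⟨x, -, r, hr, hcard, hball⟩ := exists_radius_card_ball_lt hk (show k ≤ A.card by lia)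
  have hgrid := card_filter_norm_sub_lt (N := 800) hr hball x
  have hsplitA : {y ∈ A | ‖y - x‖ < (800 : ℕ) * (r / 2)}.card +
      {y ∈ A | ¬ ‖y - x‖ < (800 : ℕ) * (r / 2)}.card = A.card :=
    Finset.card_filter_add_card_filter_not _
  have hsplitB : {y ∈ B | ‖y - x‖ < 20 * r}.card + {y ∈ B | ¬ ‖y - x‖ < 20 * r}.card = B.card :=
    Finset.card_filter_add_card_filter_not _
  by_cases hfar : k ≤ {y ∈ B | ¬ ‖y - x‖ < 20 * r}.card
  · refine ⟨_, Finset.filter_subset _ _, _, Finset.filter_subset _ _, hcard, hfar,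
      fun a ha a' ha' b hb b' hb' ↦ ?_⟩
    simp only [Finset.mem_filter, dist_eq_norm, not_lt] at ha ha' hb hb'
    exact norm_sub_mul_norm_sub_le ha.2 ha'.2 hb.2 hb'.2
  · refine ⟨{y ∈ A | ¬ ‖y - x‖ < (800 : ℕ) * (r / 2)}, Finset.filter_subset _ _,
      {y ∈ B | ‖y - x‖ < 20 * r}, Finset.filter_subset _ _, by lia, by lia,
      fun a ha a' ha' b hb b' hb' ↦ ?_⟩
    simp only [Finset.mem_filter, not_lt, Nat.cast_ofNat] at ha ha' hb hb'
    have := norm_sub_mul_norm_sub_le (b := a) (b' := a') hb.2.le hb'.2.le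
      (by linarith [ha.2]) (by linarith [ha'.2])
    rwa [mul_comm ‖b - b'‖, norm_sub_rev b a, norm_sub_rev b' a'] at this

end Complex

end Separation

section CrossRatio

variable {F : Type*} [Field F]

/-- The cross ratio `[P, S] [Q, R] / ([P, R] [Q, S])`: the value at `P` of the coordinate that takes
the values `∞`, `0` and `1` at `R`, `S` and `Q`. -/
noncomputable def crossRatio (P Q R S : P1 F) : F :=
  P.det S * Q.det R / (P.det R * Q.det S)

lemma P1.det_mul_det_sub (P Q R S : P1 F) :
    P.det R * Q.det S - P.det S * Q.det R = P.det Q * R.det S := by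
  simp only [P1.det]
  ring

variable {P Q R S : P1 F}

lemma one_sub_crossRatio (hPR : P ≠ R) (hQS : Q ≠ S) :
    1 - crossRatio P Q R S = P.det Q * R.det S / (P.det R * Q.det S) := by
  rw [crossRatio, one_sub_div (mul_ne_zero (P1.det_ne_zero hPR) (P1.det_ne_zero hQS)),
    P1.det_mul_det_sub]

lemma crossRatio_ne_zero (hPR : P ≠ R) (hPS : P ≠ S) (hQR : Q ≠ R) (hQS : Q ≠ S) :
    crossRatio P Q R S ≠ 0 :=
  div_ne_zero (mul_ne_zero (P1.det_ne_zero hPS) (P1.det_ne_zero hQR))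
    (mul_ne_zero (P1.det_ne_zero hPR) (P1.det_ne_zero hQS))

lemma crossRatio_ne_one (hPQ : P ≠ Q) (hRS : R ≠ S) (hPR : P ≠ R) (hQS : Q ≠ S) :
    crossRatio P Q R S ≠ 1 := by
  rw [ne_comm, ← sub_ne_zero, one_sub_crossRatio hPR hQS]
  exact div_ne_zero (mul_ne_zero (P1.det_ne_zero hPQ) (P1.det_ne_zero hRS))
    (mul_ne_zero (P1.det_ne_zero hPR) (P1.det_ne_zero hQS))

lemma P1.det_comm (P Q : P1 F) : P.det Q = -Q.det P := by
  simp only [P1.det]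
  ring

lemma crossRatio_swap_swap (P Q R S : P1 F) : crossRatio Q P S R = crossRatio P Q R S := by
  simp only [crossRatio, mul_comm]

lemma crossRatio_swap_pairs (P Q R S : P1 F) : crossRatio R S P Q = crossRatio P Q R S := by
  rw [crossRatio, crossRatio, R.det_comm Q, S.det_comm P, R.det_comm P, S.det_comm Q,
    neg_mul_neg, neg_mul_neg, mul_comm (Q.det R)]

lemma crossRatio_div_crossRatio {Z : P1 F} (hQR : Q ≠ R) (hQS : Q ≠ S) :
    crossRatio P Q R S / crossRatio Z Q R S = crossRatio P Z R S := by
  have := P1.det_ne_zero hQR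
  have := P1.det_ne_zero hQS
  simp only [crossRatio]
  field_simp

section AbsoluteValue

variable (v : AbsoluteValue F ℝ)

lemma abs_det (P Q : P1 F) :
    v (P.det Q) = chordalDist v P Q * (supAbs v P.rep * supAbs v Q.rep) :=
  (div_mul_cancel₀ _ (mul_pos (supAbs_rep_pos v P) (supAbs_rep_pos v Q)).ne').symm

lemma abs_crossRatio (P Q R S : P1 F) : v (crossRatio P Q R S) =
    chordalDist v P S * chordalDist v Q R / (chordalDist v P R * chordalDist v Q S) := by
  have := supAbs_rep_pos v P
  have := supAbs_rep_pos v Q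
  have := supAbs_rep_pos v R
  have := supAbs_rep_pos v S
  simp only [crossRatio, map_div₀, map_mul, abs_det]
  field_simp

lemma abs_one_sub_crossRatio (hPR : P ≠ R) (hQS : Q ≠ S) : v (1 - crossRatio P Q R S) =
    chordalDist v P Q * chordalDist v R S / (chordalDist v P R * chordalDist v Q S) := by
  have := supAbs_rep_pos v P
  have := supAbs_rep_pos v Q
  have := supAbs_rep_pos v R
  have := supAbs_rep_pos v S
  simp only [one_sub_crossRatio hPR hQS, map_div₀, map_mul, abs_det]
  field_simp

lemma det_eq_mul_sub {P Q : P1 F} (hP : P.rep 1 ≠ 0) (hQ : Q.rep 1 ≠ 0) :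
    P.det Q = P.rep 1 * Q.rep 1 * (P.rep 0 / P.rep 1 - Q.rep 0 / Q.rep 1) := by
  rw [P1.det]
  field_simp

lemma hasLargeBoxes_infinitePlace_det (w : InfinitePlace F) : HasLargeBoxes (fun a a' b b' : P1 F ↦
    w (a.det a') * w (b.det b') ≤ 1 / 4 * (w (a.det b) * w (a'.det b'))) (2 ^ 22) := by
  have hinfty (P Q : P1 F) (hP : ¬ P.rep 1 ≠ 0) (hQ : ¬ Q.rep 1 ≠ 0) : P = Q := by
    rw [← P1.det_eq_zero, P1.det, not_ne_iff.mp hP, not_ne_iff.mp hQ, zero_mul, mul_zero, sub_zero]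
  have hinj : Function.Injective
      fun P : {P : P1 F // P.rep 1 ≠ 0} ↦ w.embedding (P.1.rep 0 / P.1.rep 1) := fun P Q h ↦ by
    refine Subtype.ext (P1.det_eq_zero.mp ?_)
    rw [det_eq_mul_sub P.2 Q.2, sub_eq_zero.mpr (w.embedding.injective h), mul_zero]
  refine .of_subtype hinfty
    ((hasLargeBoxes_norm_mul_norm_le.comap hinj).imp fun a a' b b' h ↦ ?_)
  simp only [← map_sub, InfinitePlace.norm_embedding_eq] at h
  simp only [det_eq_mul_sub a.2 a'.2, det_eq_mul_sub b.2 b'.2, det_eq_mul_sub a.2 b.2,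
    det_eq_mul_sub a'.2 b'.2, map_mul]
  have hnonneg : 0 ≤ w (a.1.rep 1) * w (a'.1.rep 1) * (w (b.1.rep 1) * w (b'.1.rep 1)) :=
    mul_nonneg (mul_nonneg (apply_nonneg w _) (apply_nonneg w _))
      (mul_nonneg (apply_nonneg w _) (apply_nonneg w _))
  linarith [mul_le_mul_of_nonneg_left h hnonneg]

end AbsoluteValue

end CrossRatio

section CloseToOne

variable {K : Type*} [Field K] [NumberField K] {T : Finset (HeightOneSpectrum (𝓞 K))}

variable (T) in
/-- A quantitative version of being close to `1` at all places of `T ∪ {infinite places}`. -/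
def IsCloseToOne (x : K) : Prop :=
  (∀ v ∈ T, adicAbv K v x = 1) ∧ ∀ w : InfinitePlace K, w (1 - x) ≤ 1 / 4

lemma isCloseToOne_one : IsCloseToOne T (1 : K) := by simp [IsCloseToOne]

lemma IsCloseToOne.eq {x y : K} (hx : IsCloseToOne T x) (hy : IsCloseToOne T y) (hx0 : x ≠ 0)
    (hxy : ∀ v ∉ T, adicAbv K v x = adicAbv K v y) : x = y := by
  have hxy' : ∀ v : HeightOneSpectrum (𝓞 K), adicAbv K v (y / x) = 1 := fun v ↦ by
    rw [map_div₀, div_eq_one_iff_eq ((adicAbv K v).ne_zero_iff.mpr hx0)]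
    by_cases hv : v ∈ T
    · rw [hx.1 v hv, hy.1 v hv]
    · exact (hxy v hv).symm
  refine (div_eq_one_iff_eq hx0).mp (eq_one_of_abs_sub_one_lt (fun v ↦ ?_) fun w ↦ ?_) |>.symm
  · exact (abs_sub_le_max (isNonarchimedean_adicAbv v) _ _).trans (by simp [hxy' v])
  · have hquot : y / x - 1 = ((1 - x) - (1 - y)) / x := by field_simp; ring
    have hdiff : w ((1 - x) - (1 - y)) ≤ w (1 - x) + w (1 - y) := by
      have h := w.1.add_le (1 - x) (-(1 - y))
      rwa [w.1.map_neg, ← sub_eq_add_neg] at h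
    have hone : w 1 ≤ w x + w (1 - x) := by
      have h := w.1.add_le x (1 - x)
      rwa [add_sub_cancel] at h
    rw [map_one] at hone
    rw [hquot, map_div₀, div_lt_one (by linarith [hx.2 w])]
    linarith [hx.2 w, hy.2 w]

/-- The relations of the finitely many places and indices `j` hold on a common pair of boxes. -/
lemma exists_isCloseToOne_crossRatio (T : Finset (HeightOneSpectrum (𝓞 K))) {ι J : Type*}
    [Fintype J] {c : J → ι → P1 K} (hc : ∀ j, Function.Injective (c j)) {A B : Finset ι}
    (hAB : Disjoint A B) (hA : 2 * (2 ^ 22) ^ (Fintype.card J * sCard K T) ≤ A.card)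
    (hB : 2 * (2 ^ 22) ^ (Fintype.card J * sCard K T) ≤ B.card) :
    ∃ a ∈ A, ∃ a' ∈ A, ∃ b ∈ B, ∃ b' ∈ B, a ≠ a' ∧ b ≠ b' ∧
      ∀ j, IsCloseToOne T (crossRatio (c j a) (c j a') (c j b) (c j b')) := by
  let R : (InfinitePlace K ⊕ T) × J → ι → ι → ι → ι → Prop := fun i a a' b b' ↦
    let f := c i.2
    i.1.elim
      (fun w ↦ w ((f a).det (f a')) * w ((f b).det (f b')) ≤
        1 / 4 * (w ((f a).det (f b)) * w ((f a').det (f b'))))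
      (fun v ↦ chordalDist (adicAbv K v.1) (f a) (f b) * chordalDist (adicAbv K v.1) (f a') (f b') =
        chordalDist (adicAbv K v.1) (f a) (f b') * chordalDist (adicAbv K v.1) (f a') (f b))
  have hR : ∀ i, HasLargeBoxes (R i) (2 ^ 22) := by
    rintro ⟨w | v, j⟩
    · exact (hasLargeBoxes_infinitePlace_det w).comap (hc j)
    · exact ((hasLargeBoxes_chordalDist_mul_eq (isNonarchimedean_adicAbv v.1)).comap
        (hc j)).mono (by norm_num)
  have hcard : (Finset.univ : Finset ((InfinitePlace K ⊕ T) × J)).card =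
      Fintype.card J * sCard K T := by
    rw [Finset.card_univ, Fintype.card_prod, SPlace.card_eq_sCard, mul_comm]
  rw [mul_comm, ← hcard] at hA hB
  obtain ⟨A', hA', B', hB', hcA, hcB, h⟩ :=
    HasLargeBoxes.forall_mem (by norm_num) hR Finset.univ le_rfl A B hA hB
  obtain ⟨a, ha, a', ha', haa⟩ := Finset.one_lt_card.mp hcA
  obtain ⟨b, hb, b', hb', hbb⟩ := Finset.one_lt_card.mp hcB
  have hne {x y : ι} (hx : x ∈ A') (hy : y ∈ B') (j : J) : c j x ≠ c j y :=
    (hc j).ne (Finset.disjoint_iff_ne.mp hAB x (hA' hx) y (hB' hy))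
  refine ⟨a, hA' ha, a', hA' ha', b, hB' hb, b', hB' hb', haa, hbb, fun j ↦
    ⟨fun v hv ↦ ?_, fun w ↦ ?_⟩⟩
  · have hv := h a ha a' ha' b hb b' hb' (.inr ⟨v, hv⟩, j) (Finset.mem_univ _)
    rw [abs_crossRatio]
    exact (div_eq_one_iff_eq (mul_pos (chordalDist_pos _ (hne ha hb j))
      (chordalDist_pos _ (hne ha' hb' j))).ne').mpr hv.symm
  · have hw := h a ha a' ha' b hb b' hb' (.inl w, j) (Finset.mem_univ _)
    have hpos : 0 < w ((c j a).det (c j b)) * w ((c j a').det (c j b')) :=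
      mul_pos (InfinitePlace.pos_iff.mpr (P1.det_ne_zero (hne ha hb j)))
        (InfinitePlace.pos_iff.mpr (P1.det_ne_zero (hne ha' hb' j)))
    rw [one_sub_crossRatio (hne ha hb j) (hne ha' hb' j), map_div₀, map_mul, map_mul,
      div_le_iff₀ hpos]
    exact hw

/-- The cross ratio of two points on each side would be a unit close to `1`, hence equal to `1`. -/
lemma not_forall_chordalDist_eq_one (T : Finset (HeightOneSpectrum (𝓞 K))) {A B : Finset (P1 K)}
    (hA : 2 * (2 ^ 22) ^ sCard K T ≤ A.card) (hB : 2 * (2 ^ 22) ^ sCard K T ≤ B.card)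
    (hAB : Disjoint A B) :
    ¬ ∀ v ∉ T, ∀ a ∈ A, ∀ b ∈ B, chordalDist (adicAbv K v) a b = 1 := fun h ↦ by
  obtain ⟨a, ha, a', ha', b, hb, b', hb', haa, hbb, hclose⟩ :=
    exists_isCloseToOne_crossRatio T (J := Unit) (c := fun _ P ↦ P)
      (fun _ ↦ Function.injective_id) hAB (by simpa using hA) (by simpa using hB)
  have hne {x y : P1 K} (hx : x ∈ A) (hy : y ∈ B) : x ≠ y :=
    Finset.disjoint_iff_ne.mp hAB x hx y hy
  refine crossRatio_ne_one haa hbb (hne ha hb) (hne ha' hb') ((hclose ()).eq isCloseToOne_one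
    (crossRatio_ne_zero (hne ha hb) (hne ha hb') (hne ha' hb) (hne ha' hb')) fun v hv ↦ ?_)
  rw [abs_crossRatio, map_one, h v hv a ha b hb, h v hv a ha b' hb', h v hv a' ha' b hb,
    h v hv a' ha' b' hb', div_self (by norm_num)]

/-- Four distinct points whose cross ratio does not change under `f`; the relation among periodic
points whose fibres are bounded by counting zeros of binary forms. -/
structure CrossRatioPreserved {F : Type*} [Field F] (f : P1 F → P1 F) (P Q R S : P1 F) : Prop where
  nodup : [P, Q, R, S].Nodup
  crossRatio_map : crossRatio (f P) (f Q) (f R) (f S) = crossRatio P Q R S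

lemma exists_crossRatioPreserved (T : Finset (HeightOneSpectrum (𝓞 K))) {f : P1 K → P1 K}
    {Y : Finset (P1 K)} (hf : Set.InjOn f Y)
    (hiso : ∀ v ∉ T, ∀ P ∈ Y, ∀ Q ∈ Y,
      chordalDist (adicAbv K v) (f P) (f Q) = chordalDist (adicAbv K v) P Q)
    (hY : 4 * (2 ^ 22) ^ (2 * sCard K T) ≤ Y.card) :
    ∃ a ∈ Y, ∃ a' ∈ Y, ∃ b ∈ Y, ∃ b' ∈ Y, CrossRatioPreserved f a a' b b' := by
  obtain ⟨A, hAY, hcA⟩ := Finset.exists_subset_card_eq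
    (s := (Finset.univ : Finset Y)) (n := 2 * (2 ^ 22) ^ (2 * sCard K T)) (by
      rw [Finset.card_univ, Fintype.card_coe]
      lia)
  have hcB : 2 * (2 ^ 22) ^ (2 * sCard K T) ≤ (Finset.univ \ A).card := by
    rw [Finset.card_sdiff_of_subset hAY, Finset.card_univ, Fintype.card_coe]
    lia
  have hdisj : Disjoint A (Finset.univ \ A) := Finset.disjoint_sdiff
  obtain ⟨a, ha, a', ha', b, hb, b', hb', haa, hbb, hclose⟩ :=
    exists_isCloseToOne_crossRatio T (J := Bool) (ι := Y)
      (c := fun j P ↦ bif j then f P else P)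
      (fun j ↦ by
        cases j
        · exact Subtype.val_injective
        · exact fun P Q h ↦ Subtype.ext (hf P.2 Q.2 h))
      hdisj (by simpa using hcA.ge) (by simpa using hcB)
  have hne {x y : Y} (hxy : x ≠ y) : f x ≠ f y :=
    fun h ↦ hxy (Subtype.ext (hf x.2 y.2 h))
  have hne' {x y : Y} (hx : x ∈ A) (hy : y ∈ Finset.univ \ A) : x ≠ y :=
    Finset.disjoint_iff_ne.mp hdisj x hx y hy
  refine ⟨a, a.2, a', a'.2, b, b.2, b', b'.2, ?_,
    (hclose true).eq (hclose false) (crossRatio_ne_zero (hne (hne' ha hb)) (hne (hne' ha hb'))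
      (hne (hne' ha' hb)) (hne (hne' ha' hb'))) fun v hv ↦ ?_⟩
  · simp [haa, hbb, hne' ha hb, hne' ha hb', hne' ha' hb, hne' ha' hb']
  · simp only [abs_crossRatio, cond_true, hiso v hv _ (Subtype.prop _) _ (Subtype.prop _)]

end CloseToOne

section BinaryForms

variable {F : Type*} [Field F] {n : ℕ} {H : MvPolynomial (Fin 2) F}

/-- The polynomial `H(X, 1)` of a binary form `H`. -/
noncomputable def dehomogenize (H : MvPolynomial (Fin 2) F) : Polynomial F :=
  aeval ![Polynomial.X, 1] H

lemma aeval_dehomogenize {A : Type*} [CommRing A] [Algebra F A] (H : MvPolynomial (Fin 2) F)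
    (x : A) : Polynomial.aeval x (dehomogenize H) = aeval ![x, 1] H := by
  rw [dehomogenize, ← AlgHom.comp_apply, MvPolynomial.comp_aeval]
  congr 2
  ext i
  fin_cases i <;> simp

lemma dehomogenize_eq_sum (H : MvPolynomial (Fin 2) F) :
    dehomogenize H = ∑ m ∈ H.support, Polynomial.C (H.coeff m) * Polynomial.X ^ m 0 := by
  rw [dehomogenize, MvPolynomial.aeval_def, MvPolynomial.eval₂_eq']
  exact Finset.sum_congr rfl fun m _ ↦ by simp [Fin.prod_univ_two]

lemma add_eq_of_mem_support (hH : H.IsHomogeneous n) {m : Fin 2 →₀ ℕ} (hm : m ∈ H.support) :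
    m 0 + m 1 = n := by
  simpa [Finsupp.weight_apply, Finsupp.sum_fintype, Fin.sum_univ_two] using
    hH (MvPolynomial.mem_support_iff.mp hm)

lemma natDegree_dehomogenize_le (hH : H.IsHomogeneous n) : (dehomogenize H).natDegree ≤ n := by
  rw [dehomogenize_eq_sum]
  refine Polynomial.natDegree_sum_le_of_forall_le _ _ fun m hm ↦ ?_
  exact (Polynomial.natDegree_C_mul_X_pow_le _ _).trans (by
    have := add_eq_of_mem_support hH hm
    omega)

lemma coeff_dehomogenize (hH : H.IsHomogeneous n) {m : Fin 2 →₀ ℕ} (hm : m 0 + m 1 = n) :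
    (dehomogenize H).coeff (m 0) = H.coeff m := by
  have hterm : ∀ m' ∈ H.support, (Polynomial.C (H.coeff m') * Polynomial.X ^ m' 0).coeff (m 0) =
      if m = m' then H.coeff m' else 0 := fun m' hm' ↦ by
    have hiff : m 0 = m' 0 ↔ m = m' := by
      have := add_eq_of_mem_support hH hm'
      refine ⟨fun h ↦ Finsupp.ext fun i ↦ ?_, fun h ↦ h ▸ rfl⟩
      fin_cases i <;> simp only [Fin.zero_eta, Fin.mk_one] <;> omega
    simp only [Polynomial.coeff_C_mul, Polynomial.coeff_X_pow, hiff, mul_ite, mul_one, mul_zero]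
  rw [dehomogenize_eq_sum, Polynomial.finsetSum_coeff, Finset.sum_congr rfl hterm,
    Finset.sum_ite_eq, ite_eq_left_iff]
  exact fun h ↦ (MvPolynomial.notMem_support_iff.mp h).symm

lemma coeff_dehomogenize_self (hH : H.IsHomogeneous n) :
    (dehomogenize H).coeff n = eval ![1, 0] H := by
  rw [dehomogenize_eq_sum, Polynomial.finsetSum_coeff, MvPolynomial.eval_eq']
  refine Finset.sum_congr rfl fun m hm ↦ ?_
  have hmn := add_eq_of_mem_support hH hm
  simp only [Polynomial.coeff_C_mul, Polynomial.coeff_X_pow, Fin.prod_univ_two,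
    Matrix.cons_val_zero, Matrix.cons_val_one, one_pow, one_mul]
  congr 1
  rcases eq_or_ne (m 1) 0 with h | h
  · rw [h, if_pos (by omega), pow_zero]
  · rw [if_neg (by omega), zero_pow h]

lemma dehomogenize_ne_zero (hH : H.IsHomogeneous n) (h0 : H ≠ 0) : dehomogenize H ≠ 0 := by
  obtain ⟨m, hm⟩ := MvPolynomial.ne_zero_iff.mp h0
  have hmn := add_eq_of_mem_support hH (MvPolynomial.mem_support_iff.mpr hm)
  rw [← coeff_dehomogenize hH hmn] at hm
  rintro h
  simp [h] at hm

lemma eval_smul_of_isHomogeneous (hH : H.IsHomogeneous n) (c : F) (a : Fin 2 → F) :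
    eval (c • a) H = c ^ n * eval a H := by
  simp only [MvPolynomial.eval_eq', Finset.mul_sum]
  refine Finset.sum_congr rfl fun m hm ↦ ?_
  rw [← add_eq_of_mem_support hH hm]
  simp only [Pi.smul_apply, smul_eq_mul, Fin.prod_univ_two]
  ring

lemma isRoot_dehomogenize (hH : H.IsHomogeneous n) {P : P1 F} (hP : eval P.rep H = 0)
    (hP1 : P.rep 1 ≠ 0) : (dehomogenize H).IsRoot (P.rep 0 / P.rep 1) := by
  have hvec : (![P.rep 0 / P.rep 1, 1] : Fin 2 → F) = (P.rep 1)⁻¹ • P.rep := by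
    ext i
    fin_cases i
    · simp [div_eq_inv_mul]
    · simp [hP1]
  rw [Polynomial.IsRoot.def, ← Polynomial.coe_aeval_eq_eval, aeval_dehomogenize,
    MvPolynomial.aeval_eq_eval, hvec, eval_smul_of_isHomogeneous hH, hP, mul_zero]

lemma coeff_dehomogenize_eq_zero (hH : H.IsHomogeneous n) {P : P1 F} (hP : eval P.rep H = 0)
    (hP1 : P.rep 1 = 0) : (dehomogenize H).coeff n = 0 := by
  have hP0 : P.rep 0 ≠ 0 := fun hP0 ↦ P.rep_nonzero <| by
    ext i
    fin_cases i
    · exact hP0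
    · exact hP1
  have hvec : P.rep = P.rep 0 • ![1, 0] := by
    ext i
    fin_cases i
    · simp
    · simpa using hP1
  rw [hvec, eval_smul_of_isHomogeneous hH, ← coeff_dehomogenize_self hH] at hP
  exact (mul_eq_zero.mp hP).resolve_left (pow_ne_zero _ hP0)

lemma card_le_of_forall_eval_rep_eq_zero (hH : H.IsHomogeneous n) (h0 : H ≠ 0) {A : Finset (P1 F)}
    (hA : ∀ P ∈ A, eval P.rep H = 0) : A.card ≤ n := by
  have hfin : (A.filter fun P ↦ P.rep 1 ≠ 0).card ≤ (dehomogenize H).natDegree := by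
    refine (Finset.card_le_card_of_injOn (t := (dehomogenize H).roots.toFinset)
      (fun P ↦ P.rep 0 / P.rep 1) (fun P hP ↦ ?_) fun P hP Q hQ hPQ ↦ ?_).trans
      ((Multiset.toFinset_card_le _).trans (Polynomial.card_roots' _))
    · obtain ⟨hPA, hP1⟩ := Finset.mem_filter.mp hP
      simpa [dehomogenize_ne_zero hH h0] using isRoot_dehomogenize hH (hA P hPA) hP1
    · have hPQ' := (div_eq_div_iff (Finset.mem_filter.mp hP).2 (Finset.mem_filter.mp hQ).2).mp hPQ
      exact P1.det_eq_zero.mp (by rw [P1.det, hPQ']; ring)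
  have hinf : (A.filter fun P ↦ ¬ P.rep 1 ≠ 0).card ≤ 1 := by
    refine Finset.card_le_one.mpr fun P hP Q hQ ↦ P1.det_eq_zero.mp ?_
    rw [P1.det, not_not.mp (Finset.mem_filter.mp hP).2, not_not.mp (Finset.mem_filter.mp hQ).2]
    ring
  have hcard := Finset.card_filter_add_card_filter_not (s := A) fun P ↦ P.rep 1 ≠ 0
  have hdeg := natDegree_dehomogenize_le hH
  rcases (A.filter fun P ↦ ¬ P.rep 1 ≠ 0).eq_empty_or_nonempty with hempty | ⟨P, hP⟩
  · rw [hempty, Finset.card_empty] at hcard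
    omega
  · obtain ⟨hPA, hP1⟩ := Finset.mem_filter.mp hP
    have hcoeff := coeff_dehomogenize_eq_zero hH (hA P hPA) (not_not.mp hP1)
    have hlt : (dehomogenize H).natDegree ≠ n := fun h ↦ dehomogenize_ne_zero hH h0 <|
      Polynomial.leadingCoeff_eq_zero.mp (by rwa [Polynomial.leadingCoeff, h])
    omega

end BinaryForms

section Fibres

lemma coeff_eq_zero_of_isCoprime_of_mul_eq_mul {F : Type*} [Field F] {f g a b : Polynomial F}
    {n : ℕ} (hfg : IsCoprime f g) (h : f * a = g * b) (hab : a ≠ 0 ∨ b ≠ 0)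
    (hb : b.natDegree < n) : f.coeff n = 0 := by
  rcases eq_or_ne b 0 with rfl | hb0
  · rw [mul_zero, mul_eq_zero] at h
    simp [h.resolve_right (hab.resolve_right (not_not.mpr rfl))]
  · have hdvd : f ∣ b := hfg.dvd_of_dvd_mul_left ⟨a, h.symm⟩
    exact Polynomial.coeff_eq_zero_of_natDegree_lt
      ((Polynomial.natDegree_le_of_dvd hdvd hb0).trans_lt hb)

variable {K : Type*} [Field K] {d : ℕ} (φ : P1Map K d)

namespace P1Map

lemma isCoprime_dehomogenize : IsCoprime (dehomogenize φ.F) (dehomogenize φ.G) := by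
  rw [Polynomial.isCoprime_iff_aeval_ne_zero_of_isAlgClosed K (AlgebraicClosure K)]
  intro x
  rw [aeval_dehomogenize, aeval_dehomogenize, ← not_and_or]
  exact fun h ↦ one_ne_zero (φ.coprime x 1 h.1 h.2).2

lemma coeff_dehomogenize_ne_zero :
    (dehomogenize φ.F).coeff d ≠ 0 ∨ (dehomogenize φ.G).coeff d ≠ 0 := by
  rw [coeff_dehomogenize_self φ.homF, coeff_dehomogenize_self φ.homG, ← not_and_or]
  rintro ⟨hF, hG⟩
  refine φ.eval_ne_zero (a := ![1, 0]) (fun h ↦ one_ne_zero (congrFun h 0)) ?_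
  simp [hF, hG]

variable {e : ℕ} {L₁ L₂ : MvPolynomial (Fin 2) K}

lemma mul_sub_mul_ne_zero (he : e < d) (h₁ : L₁.IsHomogeneous e) (h₂ : L₂.IsHomogeneous e)
    (h : L₁ ≠ 0 ∨ L₂ ≠ 0) : φ.F * L₁ - φ.G * L₂ ≠ 0 := by
  intro h0
  have hmul : dehomogenize φ.F * dehomogenize L₁ = dehomogenize φ.G * dehomogenize L₂ := by
    simpa only [dehomogenize, map_mul] using congrArg dehomogenize (sub_eq_zero.mp h0)
  have hne := h.imp (dehomogenize_ne_zero h₁) (dehomogenize_ne_zero h₂)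
  rcases φ.coeff_dehomogenize_ne_zero with hF | hG
  · exact hF <| coeff_eq_zero_of_isCoprime_of_mul_eq_mul φ.isCoprime_dehomogenize hmul hne
      ((natDegree_dehomogenize_le h₂).trans_lt he)
  · exact hG <| coeff_eq_zero_of_isCoprime_of_mul_eq_mul φ.isCoprime_dehomogenize.symm hmul.symm
      hne.symm ((natDegree_dehomogenize_le h₁).trans_lt he)

lemma exists_eval_rep_eq_smul (P : P1 K) :
    ∃ c : K, eval P.rep φ.F = c * (φ.toFun P).rep 0 ∧ eval P.rep φ.G = c * (φ.toFun P).rep 1 := by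
  have hP : φ.toFun P = Projectivization.mk K _ (φ.eval_ne_zero P.rep_nonzero) := by
    rw [← φ.toFun_mk P.rep_nonzero, P.mk_rep]
  obtain ⟨c, hc⟩ := Projectivization.exists_smul_eq_mk_rep K _ (φ.eval_ne_zero P.rep_nonzero)
  rw [← hP, Units.smul_def] at hc
  refine ⟨c⁻¹, ?_, ?_⟩
  · simp [← hc]
  · simp [← hc]

lemma card_le_of_forall_rep_mul_eval_eq (he : e < d) (h₁ : L₁.IsHomogeneous e)
    (h₂ : L₂.IsHomogeneous e) (h : L₁ ≠ 0 ∨ L₂ ≠ 0) {A : Finset (P1 K)}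
    (hA : ∀ P ∈ A, (φ.toFun P).rep 0 * eval P.rep L₁ = (φ.toFun P).rep 1 * eval P.rep L₂) :
    A.card ≤ d + e := by
  refine card_le_of_forall_eval_rep_eq_zero ((φ.homF.mul h₁).sub (φ.homG.mul h₂))
    (φ.mul_sub_mul_ne_zero he h₁ h₂ h) fun P hP ↦ ?_
  obtain ⟨c, hF, hG⟩ := φ.exists_eval_rep_eq_smul P
  rw [map_sub, map_mul, map_mul, hF, hG]
  linear_combination c * hA P hP

lemma card_le_of_forall_toFun_eq (hd : 0 < d) {Q : P1 K} {A : Finset (P1 K)}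
    (hA : ∀ P ∈ A, φ.toFun P = Q) : A.card ≤ d := by
  refine φ.card_le_of_forall_rep_mul_eval_eq (e := 0) (L₁ := C (Q.rep 1)) (L₂ := C (Q.rep 0)) hd
    (isHomogeneous_C _ _) (isHomogeneous_C _ _) ?_ fun P hP ↦ ?_
  · by_contra! h
    refine Q.rep_nonzero (_root_.funext fun i ↦ ?_)
    fin_cases i
    · exact C_eq_zero.mp h.2
    · exact C_eq_zero.mp h.1
  · rw [hA P hP, eval_C, eval_C, mul_comm]

end P1Map

/-- The linear form whose value at `P` is the bracket `P.det Q`. -/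
noncomputable def detForm (Q : P1 K) : MvPolynomial (Fin 2) K :=
  C (Q.rep 1) * X 0 - C (Q.rep 0) * X 1

lemma eval_rep_detForm (P Q : P1 K) : eval P.rep (detForm Q) = P.det Q := by
  simp [detForm, P1.det, mul_comm]

lemma isHomogeneous_C_mul_detForm (c : K) (Q : P1 K) : (C c * detForm Q).IsHomogeneous 1 := by
  have hX (i : Fin 2) (b : K) : (C b * X i : MvPolynomial (Fin 2) K).IsHomogeneous 1 := by
    simpa using (isHomogeneous_C (Fin 2) b).mul (isHomogeneous_X K i)
  simpa [detForm] using (isHomogeneous_C (Fin 2) c).mul ((hX 0 (Q.rep 1)).sub (hX 1 (Q.rep 0)))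

variable {φ}

/-- Once `Q`, `R` and `S` are fixed, preservation of the cross ratio says that a form of degree
`d + 1` vanishes at `P`. -/
lemma card_filter_crossRatioPreserved_le (hd : 1 < d) {Y : Finset (P1 K)}
    (hinj : Set.InjOn φ.toFun Y) {Q R S : P1 K} (hQ : Q ∈ Y) (hR : R ∈ Y) (hS : S ∈ Y) :
    (Y.filter fun P ↦ CrossRatioPreserved φ.toFun P Q R S).card ≤ d + 1 := by
  by_cases hnodup : [Q, R, S].Nodup
  swap
  · rw [Finset.filter_false_of_mem fun P _ h ↦ hnodup h.nodup.of_cons, Finset.card_empty]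
    exact Nat.zero_le _
  obtain ⟨⟨hQR, hQS⟩, hRS⟩ : (Q ≠ R ∧ Q ≠ S) ∧ R ≠ S := by simpa using hnodup
  have hQS' : φ.toFun Q ≠ φ.toFun S := hinj.ne hQ hS hQS
  set α := Q.det R * (φ.toFun Q).det (φ.toFun S) with hα
  set β := Q.det S * (φ.toFun Q).det (φ.toFun R) with hβ
  have hα0 : α ≠ 0 := mul_ne_zero (P1.det_ne_zero hQR) (P1.det_ne_zero hQS')
  let L (i : Fin 2) : MvPolynomial (Fin 2) K :=
    C (β * (φ.toFun S).rep i) * detForm R - C (α * (φ.toFun R).rep i) * detForm S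
  have hL (i : Fin 2) : (L i).IsHomogeneous 1 :=
    (isHomogeneous_C_mul_detForm _ _).sub (isHomogeneous_C_mul_detForm _ _)
  have heval (i : Fin 2) (P : P1 K) : eval P.rep (L i) =
      β * (φ.toFun S).rep i * P.det R - α * (φ.toFun R).rep i * P.det S := by
    simp only [L, map_sub, map_mul, eval_C, eval_rep_detForm]
  refine φ.card_le_of_forall_rep_mul_eval_eq hd (hL 1) (hL 0) ?_ fun P hP ↦ ?_
  · have hrep (i : Fin 2) (h : L i = 0) : (φ.toFun R).rep i = 0 := by
      have hR := heval i R
      rw [h, map_zero, P1.det_eq_zero.mpr rfl, mul_zero, zero_sub, eq_comm, neg_eq_zero] at hR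
      simpa [hα0, P1.det_ne_zero hRS] using hR
    by_contra! h
    refine (φ.toFun R).rep_nonzero (_root_.funext fun i ↦ ?_)
    fin_cases i
    · exact hrep 0 h.2
    · exact hrep 1 h.1
  · obtain ⟨hPY, hcross⟩ := Finset.mem_filter.mp hP
    have hPR : P ≠ R := fun h ↦ by simpa [h] using hcross.nodup
    have hdet := (div_eq_div_iff
      (mul_ne_zero (P1.det_ne_zero (hinj.ne hPY hR hPR)) (P1.det_ne_zero hQS'))
      (mul_ne_zero (P1.det_ne_zero hPR) (P1.det_ne_zero hQS))).mp hcross.crossRatio_map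
    rw [heval, heval]
    simp only [hα, hβ]
    simp only [P1.det] at hdet ⊢
    linear_combination hdet

end Fibres

section PeriodicPoints

section RelFree

variable {α : Type*} {rel : α → α → α → α → Prop}
  (hnodup : ∀ {a b c d}, rel a b c d → [a, b, c, d].Nodup)
  (hswap : ∀ {a b c d}, rel a b c d → rel b a d c)
  (hpairs : ∀ {a b c d}, rel a b c d → rel c d a b)

variable (rel) in
/-- The finset contains no quadruple related by `rel`. -/
def RelFree (Z : Finset α) : Prop := ∀ a ∈ Z, ∀ b ∈ Z, ∀ c ∈ Z, ∀ d ∈ Z, ¬ rel a b c d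

include hnodup hswap hpairs

lemma RelFree.exists_rel_of_not_insert {G : Finset α} (hG : RelFree rel G) {R : α}
    (hR : ¬ RelFree rel (insert R G)) : ∃ b ∈ G, ∃ c ∈ G, ∃ d ∈ G, rel R b c d := by
  have hfirst {b c d} (h : rel R b c d) (hb : b ∈ insert R G) (hc : c ∈ insert R G)
      (hd : d ∈ insert R G) : ∃ b ∈ G, ∃ c ∈ G, ∃ d ∈ G, rel R b c d := by
    obtain ⟨⟨hRb, hRc, hRd⟩, -⟩ := by simpa using hnodup h
    exact ⟨b, Finset.mem_of_mem_insert_of_ne hb (Ne.symm hRb),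
      c, Finset.mem_of_mem_insert_of_ne hc (Ne.symm hRc),
      d, Finset.mem_of_mem_insert_of_ne hd (Ne.symm hRd), h⟩
  unfold RelFree at hR
  push Not at hR
  obtain ⟨a, ha, b, hb, c, hc, d, hd, h⟩ := hR
  by_cases haR : a = R
  · exact hfirst (haR ▸ h) hb hc hd
  by_cases hbR : b = R
  · exact hfirst (hbR ▸ hswap h) ha hd hc
  by_cases hcR : c = R
  · exact hfirst (hcR ▸ hpairs h) hd ha hb
  by_cases hdR : d = R
  · exact hfirst (hdR ▸ hswap (hpairs h)) hc hb ha
  exact absurd h (hG a (Finset.mem_of_mem_insert_of_ne ha haR)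
    b (Finset.mem_of_mem_insert_of_ne hb hbR) c (Finset.mem_of_mem_insert_of_ne hc hcR)
    d (Finset.mem_of_mem_insert_of_ne hd hdR))

/-- A maximal subset without related quadruples has at most `N` elements, and each remaining
point is related to three points of that subset. -/
lemma card_le_of_card_filter_rel_le {Y : Finset α} {N m : ℕ}
    (hex : ∀ Z ⊆ Y, N ≤ Z.card → ∃ a ∈ Z, ∃ b ∈ Z, ∃ c ∈ Z, ∃ d ∈ Z, rel a b c d)
    (hfibre : ∀ b ∈ Y, ∀ c ∈ Y, ∀ d ∈ Y, (Y.filter fun a ↦ rel a b c d).card ≤ m) :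
    Y.card ≤ N + N ^ 3 * m := by
  obtain ⟨G, hG, hmax⟩ := (Y.powerset.filter (RelFree rel)).exists_max_image Finset.card
    ⟨∅, by simp [RelFree]⟩
  obtain ⟨hGY, hfree⟩ := Finset.mem_filter.mp hG
  rw [Finset.mem_powerset] at hGY
  have hGN : G.card ≤ N := le_of_not_gt fun hlt ↦ by
    obtain ⟨a, ha, b, hb, c, hc, d, hd, h⟩ := hex G hGY hlt.le
    exact hfree a ha b hb c hc d hd h
  have hcover : Y \ G ⊆ (G ×ˢ G ×ˢ G).biUnion fun t ↦ Y.filter fun a ↦ rel a t.1 t.2.1 t.2.2 := by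
    intro R hR
    obtain ⟨hRY, hRG⟩ := Finset.mem_sdiff.mp hR
    have hins : ¬ RelFree rel (insert R G) := fun hins ↦ by
      have hle := hmax (insert R G) (Finset.mem_filter.mpr
        ⟨Finset.mem_powerset.mpr (Finset.insert_subset hRY hGY), hins⟩)
      rw [Finset.card_insert_of_notMem hRG] at hle
      lia
    simp only [Finset.mem_biUnion, Finset.mem_product, Prod.exists, Finset.mem_filter]
    obtain ⟨b, hb, c, hc, d, hd, h⟩ := hfree.exists_rel_of_not_insert hnodup hswap hpairs hins
    exact ⟨b, c, d, ⟨hb, hc, hd⟩, hRY, h⟩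
  calc Y.card = G.card + (Y \ G).card := by rw [add_comm, Finset.card_sdiff_add_card_eq_card hGY]
    _ ≤ G.card + (G ×ˢ G ×ˢ G).card * m := by
      refine Nat.add_le_add_left ((Finset.card_le_card hcover).trans
        (Finset.card_biUnion_le_card_mul _ _ _ fun t ht ↦ ?_)) _
      simp only [Finset.mem_product] at ht
      exact hfibre _ (hGY ht.1) _ (hGY ht.2.1) _ (hGY ht.2.2)
    _ = G.card + G.card ^ 3 * m := by
      rw [Finset.card_product, Finset.card_product]
      ring
    _ ≤ N + N ^ 3 * m := by gcongr

end RelFree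

variable {K : Type*} [Field K]

lemma CrossRatioPreserved.swap_swap {f : P1 K → P1 K} {P Q R S : P1 K}
    (h : CrossRatioPreserved f P Q R S) : CrossRatioPreserved f Q P S R where
  nodup := by have := h.nodup; simp only [List.nodup_cons, List.mem_cons] at this ⊢; grind
  crossRatio_map := (crossRatio_swap_swap _ _ _ _).trans
    (h.crossRatio_map.trans (crossRatio_swap_swap _ _ _ _).symm)

lemma CrossRatioPreserved.swap_pairs {f : P1 K → P1 K} {P Q R S : P1 K}
    (h : CrossRatioPreserved f P Q R S) : CrossRatioPreserved f R S P Q where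
  nodup := by have := h.nodup; simp only [List.nodup_cons, List.mem_cons] at this ⊢; grind
  crossRatio_map := (crossRatio_swap_pairs _ _ _ _).trans
    (h.crossRatio_map.trans (crossRatio_swap_pairs _ _ _ _).symm)

variable [NumberField K] {d : ℕ} {T : Finset (HeightOneSpectrum (𝓞 K))} {φ : P1Map K d}

lemma GoodReductionOutside.card_periodic_le (hgr : GoodReductionOutside φ T) (hd : 1 < d)
    {Y : Finset (P1 K)} (hY : ∀ P ∈ Y, P ∈ Function.periodicPts φ.toFun) :
    Y.card ≤ 4 * (2 ^ 22) ^ (2 * sCard K T) +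
      (4 * (2 ^ 22) ^ (2 * sCard K T)) ^ 3 * (d + 1) := by
  have hinj : Set.InjOn φ.toFun Y := fun P hP Q hQ ↦
    iterate_injOn_periodicPts 1 (hY P hP) (hY Q hQ)
  refine card_le_of_card_filter_rel_le (rel := CrossRatioPreserved φ.toFun) (fun h ↦ h.nodup)
    (fun h ↦ h.swap_swap) (fun h ↦ h.swap_pairs) (fun Z hZ hcard ↦ ?_)
    fun Q hQ R hR S hS ↦ card_filter_crossRatioPreserved_le hd hinj hQ hR hS
  exact exists_crossRatioPreserved T (hinj.mono (Finset.coe_subset.mpr hZ))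
    (fun v hv P hP Q hQ ↦ (hgr v hv).chordalDist_iterate_eq 1 (hY P (hZ hP)) (hY Q (hZ hQ))) hcard

end PeriodicPoints

section LatticePigeonhole

lemma sum_one_half_pow_natAbs_le (N : ℕ) :
    ∑ n ∈ Finset.Icc (-(N : ℤ)) N, (1 / 2 : ℝ) ^ n.natAbs ≤ 4 := by
  have heven : Function.Even fun n : ℤ ↦ (1 / 2 : ℝ) ^ n.natAbs := fun n ↦ by simp
  rw [Finset.sum_Icc_of_even_eq_range heven]
  have hgeom := sum_geometric_two_le (N + 1)
  simp only [Int.natAbs_natCast, Int.natAbs_zero, pow_zero, two_smul]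
  linarith

variable {ι m : Type*} [Fintype m]

/-- Weighting the lattice point `f` by `2 ^ (-∑ p, |f p|)` makes the total weight of the lattice
at most `4 ^ card m`. -/
lemma card_le_of_sum_natAbs_le (N : ℕ) (V : Finset (m → ℤ))
    (hV : ∀ f ∈ V, ∑ p, (f p).natAbs ≤ N) : V.card ≤ 4 ^ Fintype.card m * 2 ^ N := by
  have hbox : V ⊆ Fintype.piFinset fun _ : m ↦ Finset.Icc (-(N : ℤ)) N := fun f hf ↦ by
    refine Fintype.mem_piFinset.mpr fun p ↦ ?_
    have hp := (Finset.single_le_sum (f := fun p ↦ (f p).natAbs) (fun _ _ ↦ Nat.zero_le _)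
      (Finset.mem_univ p)).trans (hV f hf)
    rw [Finset.mem_Icc]
    omega
  have hweight : V.card * (1 / 2 : ℝ) ^ N ≤ 4 ^ Fintype.card m := calc
    V.card * (1 / 2 : ℝ) ^ N ≤ ∑ f ∈ V, ∏ p, (1 / 2 : ℝ) ^ (f p).natAbs := by
      rw [← nsmul_eq_mul]
      refine Finset.card_nsmul_le_sum _ _ _ fun f hf ↦ ?_
      rw [Finset.prod_pow_eq_pow_sum]
      exact pow_le_pow_of_le_one (by norm_num) (by norm_num) (hV f hf)
    _ ≤ ∑ f ∈ Fintype.piFinset fun _ : m ↦ Finset.Icc (-(N : ℤ)) N,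
          ∏ p, (1 / 2 : ℝ) ^ (f p).natAbs :=
      Finset.sum_le_sum_of_subset_of_nonneg hbox fun _ _ _ ↦ by positivity
    _ = ∏ _p : m, ∑ n ∈ Finset.Icc (-(N : ℤ)) N, (1 / 2 : ℝ) ^ n.natAbs :=
      (Finset.prod_univ_sum _ fun _ (n : ℤ) ↦ (1 / 2 : ℝ) ^ n.natAbs).symm
    _ ≤ ∏ _p : m, 4 := Finset.prod_le_prod
      (fun _ _ ↦ Finset.sum_nonneg fun _ _ ↦ by positivity)
      fun _ _ ↦ sum_one_half_pow_natAbs_le N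
    _ = 4 ^ Fintype.card m := by simp
  rw [one_div, inv_pow, ← div_eq_mul_inv, div_le_iff₀ (by positivity)] at hweight
  exact_mod_cast hweight

lemma natAbs_floor_le (x : ℝ) : (⌊x⌋.natAbs : ℝ) ≤ |x| + 1 := by
  rw [Nat.cast_natAbs, Int.cast_abs, abs_le]
  constructor <;> linarith [Int.floor_le x, Int.lt_floor_add_one x, le_abs_self x, neg_abs_le x]

lemma sum_natAbs_floor_le {f : m → ℝ} {k : ℕ} (hf : ∑ p, |f p| ≤ k * Fintype.card m) :
    ∑ p, ⌊f p⌋.natAbs ≤ (k + 1) * Fintype.card m := by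
  have h : ((∑ p, ⌊f p⌋.natAbs : ℕ) : ℝ) ≤ ((k + 1) * Fintype.card m : ℕ) := calc
    ((∑ p, ⌊f p⌋.natAbs : ℕ) : ℝ) ≤ ∑ p, (|f p| + 1) := by
      push_cast
      exact Finset.sum_le_sum fun p _ ↦ natAbs_floor_le (f p)
    _ = ∑ p, |f p| + Fintype.card m := by simp [Finset.sum_add_distrib]
    _ ≤ ((k + 1) * Fintype.card m : ℕ) := by
      push_cast
      linarith
  exact_mod_cast h

lemma exists_subset_forall_abs_sub_le (f : ι → m → ℝ) (k M : ℕ) {g : ℝ} (hg : 0 < g)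
    {I : Finset ι} (hf : ∀ i ∈ I, ∑ p, |f i p| ≤ k * Fintype.card m * g)
    (hI : 2 ^ ((k + 3) * Fintype.card m) * M < I.card) :
    ∃ J ⊆ I, M < J.card ∧ ∀ i ∈ J, ∀ j ∈ J, ∀ p, |f i p - f j p| ≤ g := by
  let cell : ι → m → ℤ := fun i p ↦ ⌊f i p / g⌋
  have hcells : (I.image cell).card ≤ 4 ^ Fintype.card m * 2 ^ ((k + 1) * Fintype.card m) := by
    refine card_le_of_sum_natAbs_le _ _ fun n hn ↦ ?_
    obtain ⟨i, hi, rfl⟩ := Finset.mem_image.mp hn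
    refine sum_natAbs_floor_le ?_
    simpa only [abs_div, abs_of_pos hg, ← Finset.sum_div, div_le_iff₀ hg] using hf i hi
  have hcard : (I.image cell).card * M < I.card := by
    refine ((Nat.mul_le_mul_right M hcells).trans_eq ?_).trans_lt hI
    rw [show 4 = 2 ^ 2 by norm_num, ← pow_mul, ← pow_add]
    congr 2
    ring
  obtain ⟨y, _, hJ⟩ := Finset.exists_lt_card_fiber_of_mul_lt_card_of_maps_to
    (fun i hi ↦ Finset.mem_image_of_mem cell hi) hcard
  refine ⟨_, Finset.filter_subset _ _, hJ, fun i hi j hj p ↦ ?_⟩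
  have hsame : ⌊f i p / g⌋ = ⌊f j p / g⌋ :=
    congrFun ((Finset.mem_filter.mp hi).2.trans (Finset.mem_filter.mp hj).2.symm) p
  have hclose := Int.abs_sub_lt_one_of_floor_eq_floor hsame
  rw [← sub_div, abs_div, abs_of_pos hg, div_lt_one hg] at hclose
  exact hclose.le

lemma exists_subset_forall_sum_abs_sub_le [Nonempty m] (f : ι → m → ℝ) (k M : ℕ) {r : ℝ}
    (hr : 0 < r) {I : Finset ι} (hf : ∀ i ∈ I, ∑ p, |f i p| ≤ k * r)
    (hI : 2 ^ ((k + 3) * Fintype.card m) * M < I.card) :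
    ∃ J ⊆ I, M < J.card ∧ ∀ i ∈ J, ∀ j ∈ J, ∑ p, |f i p - f j p| ≤ r := by
  have hm : (0 : ℝ) < Fintype.card m := by exact_mod_cast Fintype.card_pos
  obtain ⟨J, hJI, hM, hJ⟩ := exists_subset_forall_abs_sub_le f k M (div_pos hr hm)
    (fun i hi ↦ (hf i hi).trans_eq (by field_simp)) hI
  refine ⟨J, hJI, hM, fun i hi j hj ↦ ?_⟩
  calc ∑ p, |f i p - f j p| ≤ ∑ _p : m, r / Fintype.card m :=
        Finset.sum_le_sum fun p _ ↦ hJ i hi j hj p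
    _ = r := by
        rw [Finset.sum_const, Finset.card_univ, nsmul_eq_mul]
        field_simp

lemma exists_subset_forall_norm_sub_le (f : ι → m → ℂ) (M : ℕ) {I : Finset ι}
    (hf : ∀ i ∈ I, ∀ p, ‖f i p‖ ≤ 1) (hI : 2 ^ (22 * Fintype.card m) * M < I.card) :
    ∃ J ⊆ I, M < J.card ∧ ∀ i ∈ J, ∀ j ∈ J, ∀ p, ‖f i p - f j p‖ ≤ 1 / 4 := by
  have hsum : ∀ a : m → ℝ, (∀ p, |a p| ≤ 1) →
      ∑ p, |a p| ≤ (8 : ℕ) * Fintype.card m * (1 / 8 : ℝ) := fun a ha ↦ by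
    have h := Finset.sum_le_card_nsmul Finset.univ _ 1 fun p _ ↦ ha p
    rw [Finset.card_univ, nsmul_eq_mul, mul_one] at h
    push_cast
    linarith
  obtain ⟨J₁, hJ₁I, hcard₁, hre⟩ := exists_subset_forall_abs_sub_le (fun i p ↦ (f i p).re) 8
    (2 ^ (11 * Fintype.card m) * M) (by norm_num : (0 : ℝ) < 1 / 8)
    (fun i hi ↦ hsum _ fun p ↦ (Complex.abs_re_le_norm _).trans (hf i hi p))
    (by rwa [← mul_assoc, ← pow_add, ← add_mul])
  obtain ⟨J, hJJ₁, hcard, him⟩ := exists_subset_forall_abs_sub_le (fun i p ↦ (f i p).im) 8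
    M (by norm_num : (0 : ℝ) < 1 / 8)
    (fun i hi ↦ hsum _ fun p ↦ (Complex.abs_im_le_norm _).trans (hf i (hJ₁I hi) p)) hcard₁
  refine ⟨J, hJJ₁.trans hJ₁I, hcard, fun i hi j hj p ↦ ?_⟩
  have hnorm := Complex.norm_le_abs_re_add_abs_im (f i p - f j p)
  rw [Complex.sub_re, Complex.sub_im] at hnorm
  linarith [hre i (hJJ₁ hi) j (hJJ₁ hj) p, him i hi j hj p]

end LatticePigeonhole

section SUnits

variable {K : Type*} [Field K] {T : Finset (HeightOneSpectrum (𝓞 K))}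

/-- The argument of `x` as a unit complex number at an archimedean place, and `0` at a
nonarchimedean one. -/
noncomputable def SPlace.direction (x : K) : SPlace T → ℂ
  | .inl w => w.embedding x / ‖w.embedding x‖
  | .inr _ => 0

lemma SPlace.norm_direction_le (x : K) (p : SPlace T) : ‖p.direction x‖ ≤ 1 := by
  rcases p with w | v
  · simp only [direction, norm_div, Complex.norm_real, norm_norm]
    exact div_self_le_one _
  · simp [direction]

variable [NumberField K]

lemma SPlace.logAbs_sub_le (p : SPlace T) {x y : K} (hx : x ≠ 0) (hy : y ≠ 0) (hxy : x ≠ y) :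
    p.logAbs (x - y) ≤ p.mult * Real.log 2 + max (p.logAbs x) (p.logAbs y) := by
  have hpos : 0 < p.mult := zero_lt_one.trans_le p.one_le_mult
  have hlog {z : K} (hz : z ≠ 0) (hle : p.abv (x - y) ≤ 2 * p.abv z) :
      p.logAbs (x - y) ≤ p.mult * Real.log 2 + p.logAbs z := by
    rw [logAbs, logAbs, ← mul_add, ← Real.log_mul two_ne_zero (by simpa using hz)]
    gcongr
    exact p.abv.pos (sub_ne_zero.mpr hxy)
  have htri := p.abv.sub_le_add x y
  rcases le_total (p.abv x) (p.abv y) with h | h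
  · exact (hlog hy (by linarith)).trans (by gcongr; exact le_max_right _ _)
  · exact (hlog hx (by linarith)).trans (by gcongr; exact le_max_left _ _)

variable (T) in
/-- The logarithmic height of `u`, counting only its poles in `S`; for an `S`-unit these are all
of its poles. -/
noncomputable def logHeight (u : K) : ℝ := ∑ p : SPlace T, (p.logAbs u)⁺

variable (T) in
/-- The counting function of `u` at `1`: for an `S`-unit `u ≠ 1` it is the logarithm of the norm
of the part of the ideal `(1 - u)` prime to `S`. It is `0` at `u = 1`. -/
noncomputable def counting (u : K) : ℝ := ∑ p : SPlace T, p.logAbs (1 - u)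

variable (T) in
/-- The proximity function of `u` to `1` at the places in `S`. It is `0` at `u = 1`. -/
noncomputable def proximity (u : K) : ℝ := ∑ p : SPlace T, (p.logAbs (1 - u))⁻

variable (T) in
/-- The total loss in the triangle inequality over the places in `S`. -/
noncomputable def triangleConst : ℝ := ∑ p : SPlace T, p.mult * Real.log 2

lemma triangleConst_pos : 0 < triangleConst T :=
  Finset.sum_pos (fun p _ ↦ mul_pos (zero_lt_one.trans_le p.one_le_mult) (Real.log_pos one_lt_two))
    Finset.univ_nonempty

lemma triangleConst_le : triangleConst T ≤ 2 * Real.log 2 * sCard K T := by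
  rw [triangleConst, ← SPlace.card_eq_sCard, ← Finset.card_univ, mul_comm, ← nsmul_eq_mul]
  exact Finset.sum_le_card_nsmul _ _ _ fun p _ ↦
    mul_le_mul_of_nonneg_right p.mult_le_two (Real.log_nonneg one_le_two)

lemma logHeight_nonneg (u : K) : 0 ≤ logHeight T u := Finset.sum_nonneg fun _ _ ↦ posPart_nonneg _

lemma proximity_nonneg (u : K) : 0 ≤ proximity T u := Finset.sum_nonneg fun _ _ ↦ negPart_nonneg _

lemma logHeight_one_sub (u : K) : logHeight T (1 - u) = counting T u + proximity T u := by
  rw [← sub_eq_iff_eq_add, logHeight, proximity, counting, ← Finset.sum_sub_distrib]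
  simp only [posPart_sub_negPart]

lemma sum_abs_logAbs_one_sub (u : K) :
    ∑ p : SPlace T, |p.logAbs (1 - u)| = logHeight T (1 - u) + proximity T u := by
  simp only [logHeight, proximity, ← Finset.sum_add_distrib, posPart_add_negPart]

lemma logHeight_one_sub_le (u : K) :
    logHeight T (1 - u) ≤ logHeight T u + triangleConst T := by
  rw [logHeight, logHeight, triangleConst, ← Finset.sum_add_distrib]
  refine Finset.sum_le_sum fun p _ ↦ ?_
  have hloss : 0 ≤ p.mult * Real.log 2 :=
    mul_nonneg (zero_le_one.trans p.one_le_mult) (Real.log_nonneg one_le_two)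
  have hu := posPart_nonneg (p.logAbs u)
  refine sup_le ?_ (by positivity)
  rcases eq_or_ne u 0 with rfl | h0
  · simpa using add_nonneg hu hloss
  rcases eq_or_ne u 1 with rfl | h1
  · simpa [SPlace.logAbs] using hloss
  have hsub := p.logAbs_sub_le one_ne_zero h0 h1.symm
  rw [SPlace.logAbs_one, max_comm, ← posPart_def] at hsub
  linarith

lemma counting_le (u : K) : counting T u ≤ logHeight T u + triangleConst T := by
  linarith [logHeight_one_sub_le (T := T) u, logHeight_one_sub (T := T) u,
    proximity_nonneg (T := T) u]

lemma logHeight_le_counting_add_proximity (u : K) :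
    logHeight T u ≤ counting T u + proximity T u + triangleConst T := by
  simpa only [sub_sub_cancel, logHeight_one_sub] using logHeight_one_sub_le (T := T) (1 - u)

variable (T) in
/-- `x` is an `S`-unit: a nonzero element that is a unit at every place outside `S`. -/
def IsSUnit (x : K) : Prop := x ≠ 0 ∧ ∀ v ∉ T, adicAbv K v x = 1

namespace IsSUnit

lemma one : IsSUnit T (1 : K) := ⟨one_ne_zero, fun _ _ ↦ map_one _⟩

variable {u x y : K}

lemma inv (hu : IsSUnit T u) : IsSUnit T u⁻¹ :=
  ⟨inv_ne_zero hu.1, fun v hv ↦ by rw [map_inv₀, hu.2 v hv, inv_one]⟩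

lemma div (hx : IsSUnit T x) (hy : IsSUnit T y) : IsSUnit T (x / y) :=
  ⟨div_ne_zero hx.1 hy.1, fun v hv ↦ by rw [map_div₀, hx.2 v hv, hy.2 v hv, div_one]⟩

lemma adicAbv_one_sub_le (hu : IsSUnit T u) {v : HeightOneSpectrum (𝓞 K)} (hv : v ∉ T) :
    adicAbv K v (1 - u) ≤ 1 :=
  (abs_sub_le_max (isNonarchimedean_adicAbv v) 1 u).trans (by simp [hu.2 v hv])

lemma sum_logAbs (hu : IsSUnit T u) : ∑ p : SPlace T, p.logAbs u = 0 := by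
  have hinv := sum_logAbs_nonneg hu.inv.1 fun v hv ↦ (hu.inv.2 v hv).le
  simp only [SPlace.logAbs_inv, Finset.sum_neg_distrib] at hinv
  linarith [sum_logAbs_nonneg hu.1 fun v hv ↦ (hu.2 v hv).le]

lemma counting_nonneg (hu : IsSUnit T u) : 0 ≤ counting T u := by
  rcases eq_or_ne u 1 with rfl | hu1
  · simp [counting, SPlace.logAbs]
  · exact sum_logAbs_nonneg (sub_ne_zero.mpr hu1.symm) fun v hv ↦ hu.adicAbv_one_sub_le hv

lemma counting_inv (hu : IsSUnit T u) : counting T u⁻¹ = counting T u := by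
  rcases eq_or_ne u 1 with rfl | hu1
  · rw [inv_one]
  have heq : 1 - u⁻¹ = -((1 - u) / u) := by
    field_simp [hu.1]
    ring
  simp only [counting, heq, SPlace.logAbs_neg,
    SPlace.logAbs_div _ (sub_ne_zero.mpr hu1.symm) hu.1, Finset.sum_sub_distrib, hu.sum_logAbs,
    sub_zero]

lemma counting_div_comm (hx : IsSUnit T x) (hy : IsSUnit T y) :
    counting T (x / y) = counting T (y / x) := by
  rw [← inv_div, (hy.div hx).counting_inv]

lemma logHeight_inv (hu : IsSUnit T u) : logHeight T u⁻¹ = logHeight T u := by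
  have hsum := hu.sum_logAbs
  rw [← sub_eq_zero, ← neg_eq_zero, neg_sub, ← hsum, logHeight, logHeight,
    ← Finset.sum_sub_distrib]
  simp only [SPlace.logAbs_inv, posPart_neg, posPart_sub_negPart]

lemma sum_abs_logAbs (hu : IsSUnit T u) : ∑ p : SPlace T, |p.logAbs u| = 2 * logHeight T u := by
  have hinv := hu.logHeight_inv
  simp only [logHeight, SPlace.logAbs_inv, posPart_neg] at hinv
  simp only [← posPart_add_negPart, Finset.sum_add_distrib, hinv, logHeight, two_mul]

lemma sum_abs_logAbs_sub (hx : IsSUnit T x) (hy : IsSUnit T y) :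
    ∑ p : SPlace T, |p.logAbs x - p.logAbs y| = 2 * logHeight T (x / y) := by
  simp only [← (hx.div hy).sum_abs_logAbs, SPlace.logAbs_div _ hx.1 hy.1]

lemma sum_abs_logAbs_one_sub_le (hu : IsSUnit T u) :
    ∑ p : SPlace T, |p.logAbs (1 - u)| ≤ 2 * (logHeight T u + triangleConst T) := by
  linarith [sum_abs_logAbs_one_sub (T := T) u, logHeight_one_sub_le (T := T) u,
    logHeight_one_sub (T := T) u, hu.counting_nonneg]

lemma logHeight_mul_le (hx : IsSUnit T x) (hy : IsSUnit T y) :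
    logHeight T (x * y) ≤ logHeight T x + logHeight T y := by
  rw [logHeight, logHeight, logHeight, ← Finset.sum_add_distrib]
  refine Finset.sum_le_sum fun p _ ↦ ?_
  rw [p.logAbs_mul hx.1 hy.1]
  exact sup_le (add_le_add le_sup_left le_sup_left)
    (add_nonneg (posPart_nonneg _) (posPart_nonneg _))

lemma logHeight_div_le (hx : IsSUnit T x) (hy : IsSUnit T y) :
    logHeight T (x / y) ≤ logHeight T x + logHeight T y := by
  rw [div_eq_mul_inv, ← hy.logHeight_inv]
  exact hx.logHeight_mul_le hy.inv

lemma logHeight_le_add_div (hx : IsSUnit T x) (hy : IsSUnit T y) :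
    logHeight T x ≤ logHeight T y + logHeight T (x / y) := by
  simpa only [mul_div_cancel₀ _ hy.1] using hy.logHeight_mul_le (hx.div hy)

end IsSUnit

lemma SPlace.logAbs_one_sub_div_le (p : SPlace T) {x z z' : K} (hz : z ≠ 0) (hz' : z' ≠ 0)
    (hzz' : z ≠ z') (hxz : x ≠ z) (hxz' : x ≠ z') :
    p.logAbs (1 - z / z') + (p.logAbs (1 - x / z))⁻ ≤ p.mult * Real.log 2 +
      |p.logAbs z - p.logAbs z'| + |p.logAbs (1 - x / z) - p.logAbs (1 - x / z')| := by
  have hne {a b : K} (hb : b ≠ 0) (hab : a ≠ b) : 1 - a / b ≠ 0 :=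
    sub_ne_zero.mpr fun h ↦ hab ((div_eq_one_iff_eq hb).mp h.symm)
  have hlog := p.logAbs_div hz hz'
  have habs := abs_nonneg (p.logAbs z - p.logAbs z')
  have habs' := abs_nonneg (p.logAbs (1 - x / z) - p.logAbs (1 - x / z'))
  have hle := le_abs_self (p.logAbs z - p.logAbs z')
  rcases le_total (p.logAbs (1 - x / z)) 0 with h | h
  · have heq : 1 - z / z' = (1 - x / z') - z / z' * (1 - x / z) := by
      field_simp
      ring
    have hsub := p.logAbs_sub_le (hne hz' hxz')
      (mul_ne_zero (div_ne_zero hz hz') (hne hz hxz)) (sub_ne_zero.mp (heq ▸ hne hz' hzz'))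
    rw [p.logAbs_mul (div_ne_zero hz hz') (hne hz hxz), hlog, ← heq] at hsub
    have hmax : max (p.logAbs (1 - x / z')) (p.logAbs z - p.logAbs z' + p.logAbs (1 - x / z)) ≤
        |p.logAbs z - p.logAbs z'| + |p.logAbs (1 - x / z) - p.logAbs (1 - x / z')| +
          p.logAbs (1 - x / z) :=
      max_le (by linarith [neg_abs_le (p.logAbs (1 - x / z) - p.logAbs (1 - x / z'))])
        (by linarith)
    rw [negPart_of_nonpos h]
    linarith
  · have hsub := p.logAbs_sub_le one_ne_zero (div_ne_zero hz hz')
      (sub_ne_zero.mp (hne hz' hzz'))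
    rw [hlog, p.logAbs_one] at hsub
    rw [negPart_of_nonneg h]
    linarith [max_le habs hle]

/-- If `z` and `z'` are close to each other in `S`, and so are `1 - x / z` and `1 - x / z'`, then
`x / z` cannot be close to `1`, since the integral element `1 - z / z'` would be too small. -/
lemma IsSUnit.proximity_div_le {z z' : K} (x : K) (hz : IsSUnit T z) (hz' : IsSUnit T z')
    (hzz' : z ≠ z') :
    proximity T (x / z) ≤ triangleConst T + 2 * logHeight T (z / z') +
      ∑ p : SPlace T, |p.logAbs (1 - x / z) - p.logAbs (1 - x / z')| := by
  have hconst := triangleConst_pos (T := T)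
  have hheight := logHeight_nonneg (T := T) (z / z')
  rcases eq_or_ne x z with rfl | hxz
  · have hzero : proximity T (x / x) = 0 := by simp [proximity, SPlace.logAbs, hz.1]
    rw [hzero]
    positivity
  rcases eq_or_ne x z' with rfl | hxz'
  · refine le_add_of_nonneg_of_le (by positivity) (Finset.sum_le_sum fun p _ ↦ ?_)
    have hzero : p.logAbs (1 - x / x) = 0 := by simp [SPlace.logAbs, hz'.1]
    rw [hzero, sub_zero]
    exact sup_le (neg_le_abs _) (abs_nonneg _)
  have hlocal := Finset.sum_le_sum fun (p : SPlace T) (_ : p ∈ Finset.univ) ↦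
    p.logAbs_one_sub_div_le hz.1 hz'.1 hzz' hxz hxz'
  simp only [Finset.sum_add_distrib] at hlocal
  rw [← hz.sum_abs_logAbs_sub hz', triangleConst, proximity]
  have hcount := (hz.div hz').counting_nonneg
  rw [counting] at hcount
  linarith

lemma norm_div_sub_one_lt_one {x z : ℂ} (hx : x ≠ 0) (hz : z ≠ 0)
    (hlog : |Real.log ‖x‖ - Real.log ‖z‖| ≤ 1 / 4) (hdir : ‖x / ‖x‖ - z / ‖z‖‖ ≤ 1 / 4) :
    ‖x / z - 1‖ < 1 := by
  have hx' : 0 < ‖x‖ := norm_pos_iff.mpr hx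
  have hz' : 0 < ‖z‖ := norm_pos_iff.mpr hz
  have hmod : |‖x‖ - ‖z‖| ≤ 1 / 2 * ‖z‖ := by
    have h := Real.abs_exp_sub_one_le (hlog.trans (by norm_num))
    rw [Real.exp_sub, Real.exp_log hx', Real.exp_log hz', div_sub_one hz'.ne', abs_div,
      abs_of_pos hz', div_le_iff₀ hz'] at h
    nlinarith
  have heq : x - z = ‖z‖ * (x / ‖x‖ - z / ‖z‖) + (‖x‖ - ‖z‖ : ℝ) * (x / ‖x‖) := by
    have hx'' : (‖x‖ : ℂ) ≠ 0 := by exact_mod_cast hx'.ne'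
    have hz'' : (‖z‖ : ℂ) ≠ 0 := by exact_mod_cast hz'.ne'
    push_cast
    field_simp
    ring
  rw [div_sub_one hz, norm_div, div_lt_one hz', heq]
  calc _ ≤ ‖z‖ * ‖x / ‖x‖ - z / ‖z‖‖ + |‖x‖ - ‖z‖| * ‖x / ‖x‖‖ := by
        refine (norm_add_le _ _).trans_eq ?_
        rw [norm_mul, norm_mul, Complex.norm_real, Complex.norm_real, norm_norm, Real.norm_eq_abs]
    _ ≤ ‖z‖ * (1 / 4) + 1 / 2 * ‖z‖ * 1 := by
        gcongr
        rw [norm_div, Complex.norm_real, norm_norm, div_self hx'.ne']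
    _ < ‖z‖ := by linarith

lemma IsSUnit.eq_of_close {x y : K} (hx : IsSUnit T x) (hy : IsSUnit T y)
    (hlog : ∀ p : SPlace T, |p.logAbs x - p.logAbs y| ≤ 1 / 4)
    (hdir : ∀ p : SPlace T, ‖p.direction x - p.direction y‖ ≤ 1 / 4) : x = y := by
  have hlog' (p : SPlace T) : |Real.log (p.abv x) - Real.log (p.abv y)| ≤ 1 / 4 := by
    have h := hlog p
    simp only [SPlace.logAbs, ← mul_sub, abs_mul] at h
    rw [abs_of_pos (zero_lt_one.trans_le p.one_le_mult)] at h
    nlinarith [p.one_le_mult, abs_nonneg (Real.log (p.abv x) - Real.log (p.abv y))]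
  rw [← div_eq_one_iff_eq hy.1]
  refine eq_one_of_abs_sub_one_lt (fun v ↦ ?_) fun w ↦ ?_
  · have hunit : adicAbv K v (x / y) = 1 := by
      by_cases hv : v ∈ T
      · refine adicAbv_eq_one_of_abs_log_lt v (hx.div hy).1 ?_
        rw [map_div₀, Real.log_div (by simpa using hx.1) (by simpa using hy.1)]
        exact (hlog' (.inr ⟨v, hv⟩)).trans_lt (by linarith [Real.log_two_gt_d9])
      · exact (hx.div hy).2 v hv
    refine (abs_sub_le_max (isNonarchimedean_adicAbv v) _ _).trans ?_
    simp [hunit]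
  · rw [← InfinitePlace.norm_embedding_eq, map_sub, map_div₀, map_one]
    refine norm_div_sub_one_lt_one (by simpa using hx.1) (by simpa using hy.1) ?_ (hdir (.inl w))
    simp only [InfinitePlace.norm_embedding_eq]
    exact hlog' (.inl w)

lemma card_le_of_isSUnit_of_logHeight_le {ι : Type*} {x : ι → K} {I : Finset ι}
    (hx : ∀ i ∈ I, IsSUnit T (x i)) (hinj : Set.InjOn x I) (k : ℕ)
    (hheight : ∀ i ∈ I, 8 * logHeight T (x i) ≤ k * sCard K T) :
    I.card ≤ 2 ^ ((k + 25) * sCard K T) := by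
  by_contra! hlt
  obtain ⟨J, hJI, hJ, hlog⟩ := exists_subset_forall_abs_sub_le
    (fun i (p : SPlace T) ↦ p.logAbs (x i)) k (2 ^ (22 * sCard K T) * 1)
    (by norm_num : (0 : ℝ) < 1 / 4) (I := I)
    (fun i hi ↦ by
      rw [(hx i hi).sum_abs_logAbs, SPlace.card_eq_sCard]
      linarith [hheight i hi])
    (by rwa [SPlace.card_eq_sCard, mul_one, ← pow_add, ← add_mul])
  obtain ⟨L, hLJ, hL, hdir⟩ := exists_subset_forall_norm_sub_le
    (fun i (p : SPlace T) ↦ p.direction (x i)) 1 (fun i _ p ↦ p.norm_direction_le (x i))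
    (by rwa [SPlace.card_eq_sCard])
  obtain ⟨i, hi, j, hj, hij⟩ := Finset.one_lt_card.mp hL
  exact hij <| hinj (hJI (hLJ hi)) (hJI (hLJ hj)) <|
    (hx i (hJI (hLJ hi))).eq_of_close (hx j (hJI (hLJ hj))) (hlog i (hLJ hi) j (hLJ hj))
      (hdir i hi j hj)

end SUnits

section PointCounts

variable {K : Type*} [Field K] [NumberField K] {T : Finset (HeightOneSpectrum (𝓞 K))}
  {ι : Type*} {I : Finset ι}

lemma exists_subset_logHeight_div_le {z : ι → K} (hz : ∀ i ∈ I, IsSUnit T (z i)) {k M : ℕ} {r : ℝ}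
    (hr : 0 < r) (hheight : ∀ i ∈ I, 2 * logHeight T (z i) ≤ k * r)
    (hI : 2 ^ ((k + 3) * sCard K T) * M < I.card) :
    ∃ J ⊆ I, M < J.card ∧ ∀ i ∈ J, ∀ j ∈ J, 2 * logHeight T (z i / z j) ≤ r := by
  obtain ⟨J, hJI, hM, hJ⟩ := exists_subset_forall_sum_abs_sub_le
    (fun i (p : SPlace T) ↦ p.logAbs (z i)) k M hr
    (fun i hi ↦ ((hz i hi).sum_abs_logAbs).trans_le (hheight i hi)) (by rwa [SPlace.card_eq_sCard])
  refine ⟨J, hJI, hM, fun i hi j hj ↦ ?_⟩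
  rw [← (hz i (hJI hi)).sum_abs_logAbs_sub (hz j (hJI hj))]
  exact hJ i hi j hj

lemma exists_subset_proximity_div_le {z : ι → K} {c : K} (hz : ∀ i ∈ I, IsSUnit T (z i))
    (hinj : Set.InjOn z I) (hc : IsSUnit T c) {k M : ℕ} {r δ : ℝ} (hr : 0 < r) (hM : 1 ≤ M)
    (hclose : ∀ i ∈ I, ∀ j ∈ I, 2 * logHeight T (z i / z j) ≤ δ)
    (hheight : ∀ i ∈ I, 2 * (logHeight T (c / z i) + triangleConst T) ≤ k * r)
    (hI : 2 ^ ((k + 3) * sCard K T) * M < I.card) :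
    ∃ J ⊆ I, M < J.card ∧ ∀ i ∈ J, proximity T (c / z i) ≤ triangleConst T + δ + r := by
  obtain ⟨J, hJI, hMJ, hJ⟩ := exists_subset_forall_sum_abs_sub_le
    (fun i (p : SPlace T) ↦ p.logAbs (1 - c / z i)) k M hr
    (fun i hi ↦ (hc.div (hz i hi)).sum_abs_logAbs_one_sub_le.trans (hheight i hi))
    (by rwa [SPlace.card_eq_sCard])
  refine ⟨J, hJI, hMJ, fun i hi ↦ ?_⟩
  obtain ⟨j, hj, hji⟩ := Finset.exists_mem_ne (hM.trans_lt hMJ) i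
  have hne : z i ≠ z j := fun h ↦ hji (hinj (hJI hj) (hJI hi) h.symm)
  have hprox := (hz i (hJI hi)).proximity_div_le c (hz j (hJI hj)) hne
  linarith [hclose i (hJI hi) j (hJI hj), hJ i hi j hj]

/-- The numbers `z i` are far from `c` in most places of `S` when they are small compared with
`c`, so the height of `c` is controlled by the part of `c - z i` prime to `S`. -/
lemma IsSUnit.logHeight_le_of_counting_div_le {z : ι → K} {c : K} (hc : IsSUnit T c)
    (hz : ∀ i ∈ I, IsSUnit T (z i)) (hinj : Set.InjOn z I) {H B : ℝ}
    (hconst : triangleConst T ≤ H / 1000) (hzH : ∀ i ∈ I, logHeight T (z i) ≤ H / 30)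
    (hcH : logHeight T c ≤ H) (hcount : ∀ i ∈ I, counting T (c / z i) ≤ B)
    (hI : 2 ^ (3003 * sCard K T) < I.card) :
    logHeight T c ≤ B + H / 6 + 3 * (H / 1000) := by
  have hpos := triangleConst_pos (T := T)
  obtain ⟨J, hJI, hJ, hprox⟩ := exists_subset_proximity_div_le (k := 3000) (M := 1)
    (r := H / 1000) (δ := 2 * (H / 15)) hz hinj hc (by linarith) le_rfl
    (fun i hi j hj ↦ by linarith [(hz i hi).logHeight_div_le (hz j hj), hzH i hi, hzH j hj])
    (fun i hi ↦ by push_cast; linarith [hc.logHeight_div_le (hz i hi), hzH i hi])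
    (by rwa [mul_one])
  obtain ⟨i, hi⟩ := Finset.card_pos.mp (zero_lt_one.trans hJ)
  linarith [hc.logHeight_le_add_div (hz i (hJI hi)), hzH i (hJI hi), hprox i hi,
    logHeight_le_counting_add_proximity (T := T) (c / z i), hcount i (hJI hi)]

lemma exists_subset_close {z : ι → K} (hz : ∀ i ∈ I, IsSUnit T (z i)) (hinj : Set.InjOn z I)
    {M : ℕ} {e : ℝ} (hM : 1 ≤ M) (hconst : triangleConst T ≤ e)
    (hheight : ∀ i ∈ I, logHeight T (z i) ≤ 1000 * e)
    (hI : 2 ^ (5006 * sCard K T) * M < I.card) :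
    ∃ J ⊆ I, M < J.card ∧ (∀ i ∈ J, ∀ j ∈ J, 2 * logHeight T (z i / z j) ≤ e) ∧
      ∀ i ∈ J, logHeight T (z i) ≤ counting T (z i) + 4 * e := by
  have he : 0 < e := triangleConst_pos.trans_le hconst
  obtain ⟨L, hLI, hL, hclose⟩ := exists_subset_logHeight_div_le (k := 2000)
    (M := 2 ^ (3003 * sCard K T) * M) hz he
    (fun i hi ↦ by push_cast; linarith [hheight i hi]) (by
      rwa [← mul_assoc, ← pow_add, ← add_mul])
  obtain ⟨J, hJL, hJ, hprox⟩ := exists_subset_proximity_div_le (k := 3000) (c := 1)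
    (fun i hi ↦ hz i (hLI hi)) (hinj.mono hLI) IsSUnit.one he hM hclose
    (fun i hi ↦ by
      rw [one_div, (hz i (hLI hi)).logHeight_inv]
      push_cast
      linarith [hheight i (hLI hi)]) hL
  refine ⟨J, hJL.trans hLI, hJ, fun i hi j hj ↦ hclose i (hJL hi) j (hJL hj), fun i hi ↦ ?_⟩
  have hheight' := logHeight_le_counting_add_proximity (T := T) (1 / z i)
  have hprox' := hprox i hi
  rw [one_div] at hheight' hprox'
  rw [(hz i (hLI (hJL hi))).logHeight_inv, (hz i (hLI (hJL hi))).counting_inv] at hheight'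
  linarith

end PointCounts

section TailConfiguration

variable {K : Type*} [Field K] [NumberField K] {T : Finset (HeightOneSpectrum (𝓞 K))}
  {ι : Type*} {I : Finset ι} {x y q : ι → K} {a : ι → ℕ} {Θ H : ℝ}

variable (T I) in
/-- The `S`-units attached to a family of tail points of a fixed point.
Here `x i` is the coordinate of the `i`-th tail point `w`, which reaches the fixed point after
`a i + 1` steps, `y i` is the coordinate of a preimage of `w` and `q i` that of the last strictly
preperiodic point in the orbit of `w`. The number `Θ` is the common error term. -/
structure TailConfiguration (x y q : ι → K) (a : ι → ℕ) (Θ : ℝ) : Prop where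
  isSUnit_x : ∀ i ∈ I, IsSUnit T (x i)
  isSUnit_y : ∀ i ∈ I, IsSUnit T (y i)
  isSUnit_q : ∀ i ∈ I, IsSUnit T (q i)
  injOn_x : Set.InjOn x I
  injOn_y : Set.InjOn y I
  le_counting_y_div_y : ∀ i ∈ I, ∀ j ∈ I, i ≠ j → Θ ≤ counting T (y i / y j)
  two_mul_counting_y_le : ∀ i ∈ I, 2 * counting T (y i) ≤ counting T (x i) + Θ
  sum_counting_y_div_x_le : ∀ i ∈ I, ∀ J ⊆ I, (∀ j ∈ J, a j ≤ a i) →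
    ∑ j ∈ J, counting T (y i / x j) ≤ counting T (q i) + J.card * Θ
  counting_q_div_y_le : ∀ i ∈ I, ∀ j ∈ I, counting T (q i / y j) ≤ counting T (x j) + Θ
  counting_x_div_x_le : ∀ i ∈ I, ∀ j ∈ I, a i ≠ a j →
    ∃ k ∈ I, counting T (x i / x j) ≤ counting T (q k) + Θ
  counting_y_div_y_le : ∀ i ∈ I, ∀ j ∈ I, a i ≠ a j →
    ∃ k ∈ I, counting T (y i / y j) ≤ counting T (q k) + Θ
  counting_y_div_x_le : ∀ i ∈ I, ∀ j ∈ I, a i + 1 ≠ a j →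
    ∃ k ∈ I, counting T (y i / x j) ≤ counting T (q k) + Θ

namespace TailConfiguration

lemma exists_subset_close (D : TailConfiguration T I x y q a Θ) (hconst : triangleConst T ≤ H)
    (hxH : ∀ i ∈ I, logHeight T (x i) ≤ 1000 * H) (hyH : ∀ i ∈ I, logHeight T (y i) ≤ 1000 * H)
    {N : Finset ι} (hNI : N ⊆ I) {M : ℕ} (hM : 1 ≤ M) (hN : 2 ^ (10012 * sCard K T) * M < N.card) :
    ∃ J ⊆ N, M < J.card ∧ (∀ i ∈ J, ∀ j ∈ J, 2 * logHeight T (x i / x j) ≤ H) ∧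
      (∀ i ∈ J, 2 * logHeight T (y i) ≤ logHeight T (x i) + 11 * H) ∧ Θ ≤ 2 * H := by
  obtain ⟨L, hLN, hL, hx, -⟩ := _root_.exists_subset_close
    (fun i hi ↦ D.isSUnit_x i (hNI hi)) (D.injOn_x.mono hNI)
    (M := 2 ^ (5006 * sCard K T) * M) (Nat.mul_pos (by positivity) hM) hconst
    (fun i hi ↦ hxH i (hNI hi)) (by rwa [← mul_assoc, ← pow_add, ← add_mul])
  have hLI := hLN.trans hNI
  obtain ⟨J, hJL, hJ, hy, hycount⟩ := _root_.exists_subset_close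
    (fun i hi ↦ D.isSUnit_y i (hLI hi)) (D.injOn_y.mono hLI) hM hconst
    (fun i hi ↦ hyH i (hLI hi)) hL
  have hΘ : Θ ≤ 2 * H := by
    obtain ⟨i, hi, j, hj, hij⟩ := Finset.one_lt_card.mp (hM.trans_lt hJ)
    have hpos := triangleConst_pos (T := T)
    linarith [D.le_counting_y_div_y i (hLI (hJL hi)) j (hLI (hJL hj)) hij, hy i hi j hj,
      counting_le (T := T) (y i / y j)]
  refine ⟨J, hJL.trans hLN, hJ, fun i hi j hj ↦ hx i (hJL hi) j (hJL hj), fun i hi ↦ ?_, hΘ⟩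
  linarith [hycount i hi, D.two_mul_counting_y_le i (hLI (hJL hi)), counting_le (T := T) (x i)]

lemma card_filter_counting_le (D : TailConfiguration T I x y q a Θ) {i : ι} (hi : i ∈ I)
    {e : ℝ} (he : 0 < e) (hconst : triangleConst T ≤ e) (hΘ : Θ ≤ 2 * e)
    (hq : logHeight T (q i) ≤ 1000 * e) {J : Finset ι} (hJI : J ⊆ I) (hle : ∀ j ∈ J, a j ≤ a i) :
    {j ∈ J | 3 * e < counting T (y i / x j)}.card ≤ 1001 := by
  set B := {j ∈ J | 3 * e < counting T (y i / x j)}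
  have hBJ : B ⊆ J := Finset.filter_subset _ _
  have hupper := D.sum_counting_y_div_x_le i hi B (hBJ.trans hJI) fun j hj ↦ hle j (hBJ hj)
  have hlower := Finset.card_nsmul_le_sum B _ (3 * e) fun j hj ↦ (Finset.mem_filter.mp hj).2.le
  rw [nsmul_eq_mul] at hlower
  have herror : (B.card : ℝ) * Θ ≤ B.card * (2 * e) := by gcongr
  have hcard : (B.card : ℝ) * e ≤ (1001 : ℕ) * e := by
    push_cast
    linarith [counting_le (T := T) (q i)]
  exact_mod_cast le_of_mul_le_mul_right hcard he

/-- Among many points of large height some are close in `S` to each other, and their preimages are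
close to each other as well. Comparing the first preimage with the points themselves shows that
`y` and `x` have almost equal heights, while ramification at the cycle gives `2 h(y) ≤ h(x)` up to
the error term. -/
lemma card_le_of_height_large (D : TailConfiguration T I x y q a Θ)
    (hconst : triangleConst T ≤ H / 1000) (hxH : ∀ i ∈ I, logHeight T (x i) ≤ H)
    (hyH : ∀ i ∈ I, logHeight T (y i) ≤ H) (hqH : ∀ i ∈ I, logHeight T (q i) ≤ H)
    {N : Finset ι} (hNI : N ⊆ I)
    (hN : ∀ i ∈ N, H / 30 < logHeight T (x i) ∨ H / 30 < logHeight T (y i)) :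
    N.card ≤ 2 ^ (10012 * sCard K T) * (1001 + 2 ^ (5003 * sCard K T)) := by
  by_contra! hlt
  obtain ⟨e, rfl⟩ : ∃ e, H = 1000 * e := ⟨H / 1000, by ring⟩
  rw [mul_div_cancel_left₀ _ (by norm_num)] at hconst
  have he : 0 < e := triangleConst_pos.trans_le hconst
  have hpow : 0 < 2 ^ (5003 * sCard K T) := by positivity
  obtain ⟨J, hJN, hJ, hxclose, hyx, hΘ⟩ := D.exists_subset_close hconst hxH hyH hNI (by omega) hlt
  obtain ⟨i, hi, hmax⟩ := J.exists_max_image a (Finset.card_pos.mp (by omega))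
  have hJI := hJN.trans hNI
  have hyi := D.isSUnit_y i (hJI hi)
  have hbad := D.card_filter_counting_le (hJI hi) he hconst hΘ (hqH i (hJI hi)) hJI hmax
  have hsplit := Finset.card_filter_add_card_filter_not (s := J)
    fun j ↦ 3 * e < counting T (y i / x j)
  set G := {j ∈ J | ¬ 3 * e < counting T (y i / x j)}
  have hGJ : G ⊆ J := Finset.filter_subset _ _
  have hxG : ∀ j ∈ G, IsSUnit T (x j) := fun j hj ↦ D.isSUnit_x j (hJI (hGJ hj))
  obtain ⟨L, hLG, hL, hprox⟩ := exists_subset_proximity_div_le (k := 5000) (M := 1) hxG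
    (D.injOn_x.mono (hGJ.trans hJI)) hyi he le_rfl
    (fun j hj j' hj' ↦ hxclose j (hGJ hj) j' (hGJ hj'))
    (fun j hj ↦ by
      push_cast
      linarith [hyi.logHeight_div_le (hxG j hj), hyH i (hJI hi), hxH j (hJI (hGJ hj))])
    (show 2 ^ (5003 * sCard K T) * 1 < G.card by omega)
  obtain ⟨j, hj⟩ := Finset.card_pos.mp (zero_lt_one.trans hL)
  have hjG := hLG hj
  have hxj := hxG j hjG
  have hcount := not_lt.mp (Finset.mem_filter.mp hjG).2
  have hratio : logHeight T (x j / y i) ≤ 7 * e := by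
    rw [← inv_div, (hyi.div hxj).logHeight_inv]
    linarith [logHeight_le_counting_add_proximity (T := T) (y i / x j), hprox j hj]
  have hxi := (D.isSUnit_x i (hJI hi)).logHeight_le_add_div hxj
  rcases hN i (hJN hi) with h | h <;>
    linarith [hyx i hi, hxj.logHeight_le_add_div hyi, hxclose i hi j (hGJ hjG)]

lemma card_le_of_logHeight_lt (D : TailConfiguration T I x y q a Θ)
    (hconst : triangleConst T ≤ H / 1000) {F : Finset ι} (hFI : F ⊆ I)
    (hxF : ∀ i ∈ F, logHeight T (x i) ≤ H / 30) (hyF : ∀ i ∈ F, logHeight T (y i) ≤ H / 30)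
    {c : K} {l : ℕ} {B : ℝ} (hc : IsSUnit T c) (hcH : logHeight T c ≤ H)
    (hB : B + H / 6 + 3 * (H / 1000) < logHeight T c)
    (hcx : ∀ i ∈ I, a i ≠ l → counting T (c / x i) ≤ B)
    (hcy : ∀ i ∈ I, a i + 1 ≠ l → counting T (c / y i) ≤ B) :
    F.card ≤ 2 * 2 ^ (3003 * sCard K T) := by
  by_contra! hlt
  have hsplit := Finset.card_filter_add_card_filter_not (s := F) fun i ↦ a i ≠ l
  rcases lt_or_ge (2 ^ (3003 * sCard K T)) {i ∈ F | a i ≠ l}.card with hcard | hcard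
  · have hmem : ∀ i ∈ {i ∈ F | a i ≠ l}, i ∈ F ∧ a i ≠ l := fun i hi ↦ Finset.mem_filter.mp hi
    exact hB.not_ge <| hc.logHeight_le_of_counting_div_le
      (fun i hi ↦ D.isSUnit_x i (hFI (hmem i hi).1))
      (D.injOn_x.mono ((Finset.filter_subset _ _).trans hFI)) hconst
      (fun i hi ↦ hxF i (hmem i hi).1) hcH
      (fun i hi ↦ hcx i (hFI (hmem i hi).1) (hmem i hi).2) hcard
  · have hmem : ∀ i ∈ {i ∈ F | ¬ a i ≠ l}, i ∈ F ∧ a i + 1 ≠ l := fun i hi ↦ by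
      obtain ⟨hiF, hil⟩ := Finset.mem_filter.mp hi
      exact ⟨hiF, by omega⟩
    exact hB.not_ge <| hc.logHeight_le_of_counting_div_le
      (fun i hi ↦ D.isSUnit_y i (hFI (hmem i hi).1))
      (D.injOn_y.mono ((Finset.filter_subset _ _).trans hFI)) hconst
      (fun i hi ↦ hyF i (hmem i hi).1) hcH
      (fun i hi ↦ hcy i (hFI (hmem i hi).1) (hmem i hi).2) (by omega)

lemma logHeight_q_lt (D : TailConfiguration T I x y q a Θ)
    (hconst : triangleConst T ≤ H / 1000) (hΘ : Θ ≤ H / 15 + H / 1000) {F : Finset ι}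
    (hFI : F ⊆ I) (hxF : ∀ i ∈ F, logHeight T (x i) ≤ H / 30)
    (hyF : ∀ i ∈ F, logHeight T (y i) ≤ H / 30) (hcard : 2 * 2 ^ (3003 * sCard K T) < F.card)
    {k : ι} (hk : k ∈ I) (hqk : logHeight T (q k) ≤ H) : logHeight T (q k) < 3 / 10 * H := by
  by_contra! hlarge
  have hupper := (D.isSUnit_q k hk).logHeight_le_of_counting_div_le
    (B := H / 10 + 2 * (H / 1000)) (fun i hi ↦ D.isSUnit_y i (hFI hi)) (D.injOn_y.mono hFI)
    hconst hyF hqk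
    (fun i hi ↦ by
      linarith [D.counting_q_div_y_le k hk i (hFI hi), counting_le (T := T) (x i), hxF i hi])
    (by have := Nat.one_le_two_pow (n := 3003 * sCard K T); omega)
  linarith [triangleConst_pos (T := T)]

lemma card_le_of_logHeight_small (D : TailConfiguration T I x y q a Θ)
    (hconst : triangleConst T ≤ H / 1000) (hxH : ∀ i ∈ I, logHeight T (x i) ≤ H)
    (hyH : ∀ i ∈ I, logHeight T (y i) ≤ H) (hqH : ∀ i ∈ I, logHeight T (q i) ≤ H)
    (hH : ∃ k ∈ I, logHeight T (q k) = H ∨ logHeight T (x k) = H ∨ logHeight T (y k) = H)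
    {F : Finset ι} (hFI : F ⊆ I) (hxF : ∀ i ∈ F, logHeight T (x i) ≤ H / 30)
    (hyF : ∀ i ∈ F, logHeight T (y i) ≤ H / 30) :
    F.card ≤ 2 * 2 ^ (3003 * sCard K T) := by
  have hpos := triangleConst_pos (T := T)
  by_contra! hlt
  have hone : 1 ≤ 2 ^ (3003 * sCard K T) := Nat.one_le_two_pow
  have hΘ : Θ ≤ H / 15 + H / 1000 := by
    obtain ⟨i, hi, j, hj, hij⟩ := Finset.one_lt_card.mp (show 1 < F.card by omega)
    linarith [D.le_counting_y_div_y i (hFI hi) j (hFI hj) hij, hyF i hi, hyF j hj,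
      counting_le (T := T) (y i / y j),
      (D.isSUnit_y i (hFI hi)).logHeight_div_le (D.isSUnit_y j (hFI hj))]
  have hq : ∀ k ∈ I, logHeight T (q k) < 3 / 10 * H := fun k hk ↦
    D.logHeight_q_lt hconst hΘ hFI hxF hyF hlt hk (hqH k hk)
  have hqcount : ∀ k ∈ I, counting T (q k) + Θ ≤ 3 / 10 * H + H / 15 + 2 * (H / 1000) :=
    fun k hk ↦ by linarith [counting_le (T := T) (q k), hq k hk]
  obtain ⟨k, hk, hqk | hxk | hyk⟩ := hH
  · linarith [hq k hk]
  · refine hlt.not_ge (D.card_le_of_logHeight_lt hconst hFI hxF hyF (D.isSUnit_x k hk) (hxH k hk)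
      (l := a k) (B := 3 / 10 * H + H / 15 + 2 * (H / 1000)) (by linarith) (fun i hi hne ↦ ?_)
      fun i hi hne ↦ ?_)
    · obtain ⟨m, hm, hcount⟩ := D.counting_x_div_x_le k hk i hi hne.symm
      exact hcount.trans (hqcount m hm)
    · obtain ⟨m, hm, hcount⟩ := D.counting_y_div_x_le i hi k hk hne
      rw [(D.isSUnit_x k hk).counting_div_comm (D.isSUnit_y i hi)]
      exact hcount.trans (hqcount m hm)
  · refine hlt.not_ge (D.card_le_of_logHeight_lt hconst hFI hxF hyF (D.isSUnit_y k hk) (hyH k hk)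
      (l := a k + 1) (B := 3 / 10 * H + H / 15 + 2 * (H / 1000)) (by linarith)
      (fun i hi hne ↦ ?_) fun i hi hne ↦ ?_)
    · obtain ⟨m, hm, hcount⟩ := D.counting_y_div_x_le k hk i hi hne.symm
      exact hcount.trans (hqcount m hm)
    · obtain ⟨m, hm, hcount⟩ := D.counting_y_div_y_le k hk i hi (by omega)
      exact hcount.trans (hqcount m hm)

end TailConfiguration

lemma two_pow_sum_le {s : ℕ} (hs : 1 ≤ s) :
    2 ^ (10012 * s) * (1001 + 2 ^ (5003 * s)) + 2 * 2 ^ (3003 * s) ≤ 2 ^ (20000 * s) := by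
  have h1001 : 1001 ≤ 2 ^ (5003 * s) :=
    (by norm_num : 1001 ≤ 2 ^ 10).trans (Nat.pow_le_pow_right two_pos (by omega))
  have hsmall : 2 * 2 ^ (3003 * s) ≤ 2 ^ (10012 * s) * 2 ^ (5003 * s) := by
    rw [← pow_succ', ← pow_add]
    exact Nat.pow_le_pow_right two_pos (by omega)
  calc 2 ^ (10012 * s) * (1001 + 2 ^ (5003 * s)) + 2 * 2 ^ (3003 * s)
    _ ≤ 2 ^ (10012 * s) * (2 ^ (5003 * s) + 2 ^ (5003 * s)) + 2 ^ (10012 * s) * 2 ^ (5003 * s) := by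
      gcongr
    _ ≤ 2 ^ 2 * 2 ^ (10012 * s) * 2 ^ (5003 * s) := by
      linarith [Nat.zero_le (2 ^ (10012 * s) * 2 ^ (5003 * s))]
    _ = 2 ^ (2 + 10012 * s + 5003 * s) := by rw [pow_add, pow_add]
    _ ≤ 2 ^ (20000 * s) := Nat.pow_le_pow_right two_pos (by omega)

theorem TailConfiguration.card_le (D : TailConfiguration T I x y q a Θ) :
    I.card ≤ 2 ^ (20000 * sCard K T) := by
  have hs : 1 ≤ sCard K T := one_le_sCard
  rcases I.eq_empty_or_nonempty with rfl | hne
  · simp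
  obtain ⟨k, hk, hmax⟩ := I.exists_max_image
    (fun i ↦ max (logHeight T (q i)) (max (logHeight T (x i)) (logHeight T (y i)))) hne
  set H := max (logHeight T (q k)) (max (logHeight T (x k)) (logHeight T (y k)))
  simp only [max_le_iff] at hmax
  have hattained : logHeight T (q k) = H ∨ logHeight T (x k) = H ∨ logHeight T (y k) = H := by
    grind
  rcases le_or_gt (triangleConst T) (H / 1000) with hconst | hconst
  · have hlarge := D.card_le_of_height_large hconst (fun i hi ↦ (hmax i hi).2.1)
      (fun i hi ↦ (hmax i hi).2.2) (fun i hi ↦ (hmax i hi).1) (Finset.filter_subset _ _)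
      fun i hi ↦ (Finset.mem_filter.mp hi).2
    have hsmall {i : ι} (hi : i ∈ {i ∈ I | ¬ (H / 30 < logHeight T (x i) ∨
        H / 30 < logHeight T (y i))}) :
        logHeight T (x i) ≤ H / 30 ∧ logHeight T (y i) ≤ H / 30 := by
      simpa only [not_or, not_lt] using (Finset.mem_filter.mp hi).2
    rw [← Finset.card_filter_add_card_filter_not (s := I)
      fun i ↦ H / 30 < logHeight T (x i) ∨ H / 30 < logHeight T (y i)]
    refine le_trans (Nat.add_le_add hlarge ?_) (two_pow_sum_le hs)
    exact D.card_le_of_logHeight_small hconst (fun i hi ↦ (hmax i hi).2.1)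
      (fun i hi ↦ (hmax i hi).2.2) (fun i hi ↦ (hmax i hi).1) ⟨k, hk, hattained⟩
      (Finset.filter_subset _ _) (fun i hi ↦ (hsmall hi).1) fun i hi ↦ (hsmall hi).2
  · have hcard := card_le_of_isSUnit_of_logHeight_le D.isSUnit_x D.injOn_x 11200 fun i hi ↦ by
      have hs' : (1 : ℝ) ≤ sCard K T := by exact_mod_cast hs
      push_cast
      nlinarith [(hmax i hi).2.1, triangleConst_le (T := T), Real.log_two_lt_d9]
    exact hcard.trans (Nat.pow_le_pow_right two_pos (by omega))

end TailConfiguration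

section FixedTails

open Function (periodicPts)

variable {K : Type*} [Field K] {d : ℕ} {φ : P1Map K d} {P R Q Z : P1 K}

lemma EntersInPhase.iterate_eq {α : Type*} {f : α → α} {P Q : α} {l n : ℕ}
    (hQ : EntersInPhase f Q l P) (hP : f P = P) (hn : l ≤ n) : f^[n] Q = P := by
  rw [← Nat.sub_add_cancel hn, Function.iterate_add_apply, hQ.2.1, Function.iterate_fixed hP,
    Function.iterate_fixed hP]

lemma EntersInPhase.iterate_of_fixed {α : Type*} {f : α → α} {P Q : α} {l : ℕ}
    (hQ : EntersInPhase f Q (l + 1) P) (hP : f P = P) : EntersInPhase f (f^[l] Q) (0 + 1) P := by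
  have h := EntersInPhase.iterate (l := 0 + 1) l (by rwa [zero_add, add_comm])
  rwa [Function.iterate_fixed hP] at h

lemma EntersInPhase.of_map_of_fixed {α : Type*} {f : α → α} {P Q : α} {l : ℕ}
    (h : EntersInPhase f (f Q) (l + 1) P) (hP : f P = P) : EntersInPhase f Q (l + 1 + 1) P :=
  EntersInPhase.of_map ⟨1, one_pos, hP⟩ (hP.symm ▸ h)

lemma EntersInPhase.mem_tailOf {l : ℕ} (hQ : EntersInPhase φ.toFun Q (l + 1) P)
    (hP : φ.toFun P = P) : Q ∈ TailOf φ P :=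
  ⟨hQ.notMem_periodicPts, l + 1, hQ.iterate_eq hP le_rfl⟩

lemma exists_entersInPhase_of_mem_tailOf (hP : φ.toFun P = P) (hQ : Q ∈ TailOf φ P) :
    ∃ l, EntersInPhase φ.toFun Q (l + 1) P := by
  obtain ⟨hper, n, hn⟩ := hQ
  have hPper : P ∈ periodicPts φ.toFun := ⟨1, one_pos, hP⟩
  obtain ⟨l, P', hl⟩ := EntersInPhase.exists_of_iterate_mem (f := φ.toFun) ⟨n, hn ▸ hPper⟩
  have hl0 : l ≠ 0 := by
    rintro rfl
    obtain ⟨hP', rfl⟩ := EntersInPhase.zero_iff.mp hl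
    exact hper hP'
  obtain ⟨m, rfl⟩ := Nat.exists_eq_succ_of_ne_zero hl0
  obtain rfl : P' = P := iterate_injOn_periodicPts (n + (m + 1)) hl.1 hPper <| by
    rw [Function.iterate_add_apply, ← hl.2.1, ← Function.iterate_add_apply, add_comm,
      Function.iterate_add_apply, hn, Function.iterate_fixed hP, Function.iterate_fixed hP]
  exact ⟨m, hl⟩

lemma ne_of_mem_tailOf {A : P1 K} (hQ : Q ∈ TailOf φ P) (hA : A ∈ periodicPts φ.toFun) : Q ≠ A :=
  fun hQA ↦ hQ.1 (hQA ▸ hA)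

variable [NumberField K] {T : Finset (HeightOneSpectrum (𝓞 K))}

lemma sum_counting_le {κ : Type*} {J : Finset κ} {b : κ → K} {c ζ : K} {n : ℕ}
    (hb : ∀ j ∈ J, b j ≠ 1) (hc : c ≠ 1) (hζ : ζ ≠ 1)
    (hle : ∀ v ∉ T, adicAbv K v (1 - c) * adicAbv K v (1 - ζ) ^ n ≤
      ∏ j ∈ J, adicAbv K v (1 - b j)) :
    ∑ j ∈ J, counting T (b j) ≤ counting T c + n * counting T ζ := by
  have hb' : ∀ j ∈ J, 1 - b j ≠ 0 := fun j hj ↦ sub_ne_zero.mpr (hb j hj).symm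
  have hc' : 1 - c ≠ 0 := sub_ne_zero.mpr hc.symm
  have hζ' : (1 - ζ) ^ n ≠ 0 := pow_ne_zero n (sub_ne_zero.mpr hζ.symm)
  have hprod : ∏ j ∈ J, (1 - b j) ≠ 0 := Finset.prod_ne_zero_iff.mpr hb'
  have hnonneg := sum_logAbs_nonneg (T := T) (div_ne_zero (mul_ne_zero hc' hζ') hprod)
    fun v hv ↦ by
      rw [map_div₀, map_mul, map_pow, map_prod]
      exact div_le_one_of_le₀ (hle v hv) (Finset.prod_nonneg fun _ _ ↦ (adicAbv K v).nonneg _)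
  have hlog (p : SPlace T) : p.logAbs ((1 - c) * (1 - ζ) ^ n / ∏ j ∈ J, (1 - b j)) =
      p.logAbs (1 - c) + n * p.logAbs (1 - ζ) - ∑ j ∈ J, p.logAbs (1 - b j) := by
    rw [p.logAbs_div (mul_ne_zero hc' hζ') hprod, p.logAbs_mul hc' hζ', p.logAbs_pow,
      p.logAbs_prod hb']
  simp only [hlog, Finset.sum_sub_distrib, Finset.sum_add_distrib, ← Finset.mul_sum] at hnonneg
  rw [Finset.sum_comm] at hnonneg
  simp only [counting]
  linarith

variable (φ P R) in
/-- The coordinate on the projective line that takes the values `0`, `1` and `∞` at `R`, `P` and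
`φ R`. -/
noncomputable def tailCoord (Q : P1 K) : K := crossRatio Q P (φ.toFun R) R

variable (φ P R T) in
/-- A map with good reduction outside `S`, a fixed point `P` and a periodic point `R` that is not
fixed. In this situation `tailCoord φ P R` takes `S`-unit values on the tail of `P`. -/
structure NormalizingPair : Prop where
  goodReduction : GoodReductionOutside φ T
  map_left : φ.toFun P = P
  mem_periodicPts : R ∈ periodicPts φ.toFun
  map_right_ne : φ.toFun R ≠ R

/-- The last point `q` of the orbit of `Q` other than `P` lies in the fibre of `φ` over `P`, and it
is at least as close to `P` as `Q` is. -/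
lemma GoodReductionAt.chordalDist_map_le_sq {v : HeightOneSpectrum (𝓞 K)}
    (hφ : GoodReductionAt φ v) (hP : φ.toFun P = P) (hQ : Q ∈ TailOf φ P) :
    chordalDist (adicAbv K v) (φ.toFun Q) P ≤ chordalDist (adicAbv K v) Q P ^ 2 := by
  obtain ⟨l, hl⟩ := exists_entersInPhase_of_mem_tailOf hP hQ
  set q := φ.toFun^[l] Q
  have hq : EntersInPhase φ.toFun q (0 + 1) P := hl.iterate_of_fixed hP
  have hqP : q ≠ P := fun h ↦ hq.notMem_periodicPts (h ▸ hl.1)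
  have hclose : chordalDist (adicAbv K v) P q ≤ chordalDist (adicAbv K v) Q P := by
    have h := hφ.chordalDist_iterate_le l Q P
    rwa [Function.iterate_fixed hP, chordalDist_comm] at h
  have hprod := hφ.chordalDist_map_le_prod (Z := {q, P}) (P := P)
    (by simpa [hP] using hq.iterate_eq hP le_rfl) Q
  rw [Finset.prod_pair hqP] at hprod
  calc chordalDist (adicAbv K v) (φ.toFun Q) P
      ≤ chordalDist (adicAbv K v) Q q * chordalDist (adicAbv K v) Q P := hprod
    _ ≤ chordalDist (adicAbv K v) Q P * chordalDist (adicAbv K v) Q P :=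
        mul_le_mul_of_nonneg_right ((chordalDist_le_max (isNonarchimedean_adicAbv v) Q P q).trans
          (max_le le_rfl hclose)) (chordalDist_nonneg _ _ _)
    _ = chordalDist (adicAbv K v) Q P ^ 2 := (sq _).symm

namespace NormalizingPair

variable (h : NormalizingPair φ P R T)

include h

lemma left_mem_periodicPts : P ∈ periodicPts φ.toFun := ⟨1, one_pos, h.map_left⟩

lemma map_right_mem_periodicPts : φ.toFun R ∈ periodicPts φ.toFun :=
  iterate_mem_periodicPts h.mem_periodicPts 1

lemma right_ne_left : R ≠ P := fun hRP ↦ h.map_right_ne (hRP ▸ h.map_left)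

lemma map_right_ne_left : φ.toFun R ≠ P := fun hRP ↦ h.right_ne_left <|
  iterate_injOn_periodicPts 1 h.mem_periodicPts h.left_mem_periodicPts
    (hRP.trans h.map_left.symm)

lemma tailCoord_div_tailCoord (Q Z : P1 K) :
    tailCoord φ P R Q / tailCoord φ P R Z = crossRatio Q Z (φ.toFun R) R :=
  crossRatio_div_crossRatio h.map_right_ne_left.symm h.right_ne_left.symm

lemma tailCoord_ne_one (hQ : Q ∈ TailOf φ P) : tailCoord φ P R Q ≠ 1 :=
  crossRatio_ne_one (ne_of_mem_tailOf hQ h.left_mem_periodicPts) h.map_right_ne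
    (ne_of_mem_tailOf hQ h.map_right_mem_periodicPts) h.right_ne_left.symm

lemma tailCoord_div_ne_one (hQ : Q ∈ TailOf φ P) (hZ : Z ∈ TailOf φ P) (hne : Q ≠ Z) :
    tailCoord φ P R Q / tailCoord φ P R Z ≠ 1 := by
  rw [h.tailCoord_div_tailCoord]
  exact crossRatio_ne_one hne h.map_right_ne
    (ne_of_mem_tailOf hQ h.map_right_mem_periodicPts)
    (ne_of_mem_tailOf hZ h.mem_periodicPts)

section Outside

variable {v : HeightOneSpectrum (𝓞 K)} (hv : v ∉ T)

include hv

lemma chordalDist_map_right :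
    chordalDist (adicAbv K v) P (φ.toFun R) = chordalDist (adicAbv K v) P R := by
  simpa [h.map_left] using (h.goodReduction v hv).chordalDist_iterate_eq 1
    h.left_mem_periodicPts h.mem_periodicPts

lemma chordalDist_right_map_right_le :
    chordalDist (adicAbv K v) (φ.toFun R) R ≤ chordalDist (adicAbv K v) P R := by
  have hmax := chordalDist_le_max (isNonarchimedean_adicAbv v) (φ.toFun R) P R
  rwa [chordalDist_comm _ _ P, h.chordalDist_map_right hv, max_self] at hmax

lemma chordalDist_right (hQ : Q ∈ TailOf φ P) : chordalDist (adicAbv K v) Q R = 1 := by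
  obtain ⟨l, hl⟩ := exists_entersInPhase_of_mem_tailOf h.map_left hQ
  exact (h.goodReduction v hv).chordalDist_eq_one_of_ne hl h.mem_periodicPts h.right_ne_left

lemma chordalDist_map_right_of_mem_tailOf (hQ : Q ∈ TailOf φ P) :
    chordalDist (adicAbv K v) Q (φ.toFun R) = 1 := by
  obtain ⟨l, hl⟩ := exists_entersInPhase_of_mem_tailOf h.map_left hQ
  exact (h.goodReduction v hv).chordalDist_eq_one_of_ne hl h.map_right_mem_periodicPts
    h.map_right_ne_left

lemma abs_one_sub_tailCoord (hQ : Q ∈ TailOf φ P) :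
    adicAbv K v (1 - tailCoord φ P R Q) = chordalDist (adicAbv K v) Q P *
      (chordalDist (adicAbv K v) (φ.toFun R) R / chordalDist (adicAbv K v) P R) := by
  rw [tailCoord, abs_one_sub_crossRatio _
    (ne_of_mem_tailOf hQ h.map_right_mem_periodicPts) h.right_ne_left.symm,
    h.chordalDist_map_right_of_mem_tailOf hv hQ, one_mul, mul_div_assoc]

lemma abs_one_sub_tailCoord_le (hQ : Q ∈ TailOf φ P) :
    adicAbv K v (1 - tailCoord φ P R Q) ≤ chordalDist (adicAbv K v) Q P := by
  rw [h.abs_one_sub_tailCoord hv hQ]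
  exact mul_le_of_le_one_right (chordalDist_nonneg _ _ _)
    (div_le_one_of_le₀ (h.chordalDist_right_map_right_le hv) (chordalDist_nonneg _ _ _))

lemma abs_one_sub_tailCoord_div (hQ : Q ∈ TailOf φ P) (hZ : Z ∈ TailOf φ P) :
    adicAbv K v (1 - tailCoord φ P R Q / tailCoord φ P R Z) =
      chordalDist (adicAbv K v) Q Z * chordalDist (adicAbv K v) (φ.toFun R) R := by
  rw [h.tailCoord_div_tailCoord, abs_one_sub_crossRatio _
    (ne_of_mem_tailOf hQ h.map_right_mem_periodicPts)
    (ne_of_mem_tailOf hZ h.mem_periodicPts),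
    h.chordalDist_map_right_of_mem_tailOf hv hQ, h.chordalDist_right hv hZ, one_mul, div_one]

lemma abs_one_sub_tailCoord_div_le (hQ : Q ∈ TailOf φ P) (hZ : Z ∈ TailOf φ P) :
    adicAbv K v (1 - tailCoord φ P R Q / tailCoord φ P R Z) ≤
      chordalDist (adicAbv K v) (φ.toFun R) R := by
  rw [h.abs_one_sub_tailCoord_div hv hQ hZ]
  exact mul_le_of_le_one_left (chordalDist_nonneg _ _ _)
    (chordalDist_le_one (isNonarchimedean_adicAbv v) _ _)

end Outside

lemma isSUnit_tailCoord (hQ : Q ∈ TailOf φ P) : IsSUnit T (tailCoord φ P R Q) := by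
  refine ⟨crossRatio_ne_zero (ne_of_mem_tailOf hQ h.map_right_mem_periodicPts)
    (ne_of_mem_tailOf hQ h.mem_periodicPts) h.map_right_ne_left.symm h.right_ne_left.symm,
    fun v hv ↦ ?_⟩
  rw [tailCoord, abs_crossRatio, h.chordalDist_right hv hQ,
    h.chordalDist_map_right_of_mem_tailOf hv hQ, h.chordalDist_map_right hv]
  exact div_self (mul_pos one_pos (chordalDist_pos _ h.right_ne_left.symm)).ne'

lemma injOn_tailCoord : Set.InjOn (tailCoord φ P R) (TailOf φ P) := fun Q hQ Z hZ heq ↦ by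
  by_contra hne
  exact h.tailCoord_div_ne_one hQ hZ hne (by rw [heq, div_self (h.isSUnit_tailCoord hZ).1])

/-- The distance between `R` and `φ R` is the error of the coordinate away from `S`; the pair
`z ≠ z'` of tail points serves to bound it globally. -/
lemma sum_counting_div_le {z z' : P1 K} (hz : z ∈ TailOf φ P) (hz' : z' ∈ TailOf φ P)
    (hzz' : z ≠ z') {n : ℕ} (hQ : Q ∈ TailOf φ P) (hnQ : φ.toFun^[n] Q ∈ TailOf φ P)
    {J : Finset (P1 K)} (hJ : ∀ j ∈ J, j ∈ TailOf φ P) (hnJ : ∀ j ∈ J, φ.toFun^[n] j = P) :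
    ∑ j ∈ J, counting T (tailCoord φ P R Q / tailCoord φ P R j) ≤
      counting T (tailCoord φ P R (φ.toFun^[n] Q)) +
        J.card * counting T (tailCoord φ P R z / tailCoord φ P R z') := by
  have hne : ∀ j ∈ J, Q ≠ j := fun j hj hQj ↦
    ne_of_mem_tailOf hnQ h.left_mem_periodicPts (hQj ▸ hnJ j hj)
  refine sum_counting_le (fun j hj ↦ h.tailCoord_div_ne_one hQ (hJ j hj) (hne j hj))
    (h.tailCoord_ne_one hnQ) (h.tailCoord_div_ne_one hz hz' hzz') fun v hv ↦ ?_
  rw [Finset.prod_congr rfl fun j hj ↦ h.abs_one_sub_tailCoord_div hv hQ (hJ j hj),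
    Finset.prod_mul_distrib, Finset.prod_const]
  exact mul_le_mul ((h.abs_one_sub_tailCoord_le hv hnQ).trans
      ((h.goodReduction v hv).chordalDist_iterate_le_prod n hnJ Q))
    (pow_le_pow_left₀ ((adicAbv K v).nonneg _) (h.abs_one_sub_tailCoord_div_le hv hz hz') _)
    (pow_nonneg ((adicAbv K v).nonneg _) _)
    (Finset.prod_nonneg fun _ _ ↦ chordalDist_nonneg _ _ _)

lemma counting_div_le {z z' : P1 K} (hz : z ∈ TailOf φ P) (hz' : z' ∈ TailOf φ P)
    (hzz' : z ≠ z') {n : ℕ} (hQ : Q ∈ TailOf φ P) (hnQ : φ.toFun^[n] Q ∈ TailOf φ P)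
    (hZ : Z ∈ TailOf φ P) (hnZ : φ.toFun^[n] Z = P) :
    counting T (tailCoord φ P R Q / tailCoord φ P R Z) ≤
      counting T (tailCoord φ P R (φ.toFun^[n] Q)) +
        counting T (tailCoord φ P R z / tailCoord φ P R z') := by
  simpa using h.sum_counting_div_le hz hz' hzz' hQ hnQ (J := {Z}) (by simpa) (by simpa)

lemma counting_div_le_or {z z' : P1 K} (hz : z ∈ TailOf φ P) (hz' : z' ∈ TailOf φ P)
    (hzz' : z ≠ z') {l m : ℕ} (hQ : EntersInPhase φ.toFun Q (l + 1) P)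
    (hZ : EntersInPhase φ.toFun Z (m + 1) P) (hlm : l ≠ m) :
    counting T (tailCoord φ P R Q / tailCoord φ P R Z) ≤
        counting T (tailCoord φ P R (φ.toFun^[l] Q)) +
          counting T (tailCoord φ P R z / tailCoord φ P R z') ∨
      counting T (tailCoord φ P R Q / tailCoord φ P R Z) ≤
        counting T (tailCoord φ P R (φ.toFun^[m] Z)) +
          counting T (tailCoord φ P R z / tailCoord φ P R z') := by
  wlog hml : m < l generalizing Q Z l m
  · rw [(h.isSUnit_tailCoord (hQ.mem_tailOf h.map_left)).counting_div_comm
      (h.isSUnit_tailCoord (hZ.mem_tailOf h.map_left))]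
    exact (this hZ hQ hlm.symm (by lia)).symm
  exact .inl (h.counting_div_le hz hz' hzz' (hQ.mem_tailOf h.map_left)
    ((hQ.iterate_of_fixed h.map_left).mem_tailOf h.map_left)
    (hZ.mem_tailOf h.map_left) (hZ.iterate_eq h.map_left hml))

lemma two_mul_counting_le {z z' : P1 K} (hz : z ∈ TailOf φ P) (hz' : z' ∈ TailOf φ P)
    (hzz' : z ≠ z') (hQ : Q ∈ TailOf φ P) (hφQ : φ.toFun Q ∈ TailOf φ P) :
    2 * counting T (tailCoord φ P R Q) ≤ counting T (tailCoord φ P R (φ.toFun Q)) +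
      counting T (tailCoord φ P R z / tailCoord φ P R z') := by
  have hsum := sum_counting_le (T := T) (J := Finset.range 2) (n := 1)
    (fun _ _ ↦ h.tailCoord_ne_one hQ) (h.tailCoord_ne_one hφQ)
    (h.tailCoord_div_ne_one hz hz' hzz') fun v hv ↦ ?_
  · simpa using hsum
  · set θ := chordalDist (adicAbv K v) (φ.toFun R) R
    set ε := chordalDist (adicAbv K v) P R
    have hθ : 0 ≤ θ := chordalDist_nonneg _ _ _
    have hε : 0 < ε := chordalDist_pos _ h.right_ne_left.symm
    have hε1 : ε ≤ 1 := chordalDist_le_one (isNonarchimedean_adicAbv v) _ _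
    rw [pow_one, Finset.prod_const, Finset.card_range, h.abs_one_sub_tailCoord hv hφQ,
      h.abs_one_sub_tailCoord hv hQ, mul_pow, sq (θ / ε), mul_assoc]
    refine mul_le_mul ((h.goodReduction v hv).chordalDist_map_le_sq h.map_left hQ) ?_
      (by positivity) (by positivity)
    exact mul_le_mul_of_nonneg_left ((h.abs_one_sub_tailCoord_div_le hv hz hz').trans
      (le_div_self hθ hε hε1)) (by positivity)

lemma tailConfiguration {z z' : P1 K} (hz : z ∈ TailOf φ P) (hz' : z' ∈ TailOf φ P)
    (hzz' : z ≠ z') {W : Finset (P1 K)} {a : P1 K → ℕ} {Y : P1 K → P1 K}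
    (hW : ∀ w ∈ W, EntersInPhase φ.toFun w (a w + 1) P) (hY : ∀ w ∈ W, φ.toFun (Y w) = w)
    (hmin : ∀ i ∈ W, ∀ j ∈ W, i ≠ j → counting T (tailCoord φ P R z / tailCoord φ P R z') ≤
      counting T (tailCoord φ P R (Y i) / tailCoord φ P R (Y j))) :
    TailConfiguration T W (tailCoord φ P R) (tailCoord φ P R ∘ Y)
      (fun w ↦ tailCoord φ P R (φ.toFun^[a w] w)) a
      (counting T (tailCoord φ P R z / tailCoord φ P R z')) := by
  have hYphase : ∀ w ∈ W, EntersInPhase φ.toFun (Y w) (a w + 1 + 1) P := fun w hw ↦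
    EntersInPhase.of_map_of_fixed (by rw [hY w hw]; exact hW w hw) h.map_left
  have hYq : ∀ w ∈ W, φ.toFun^[a w + 1] (Y w) = φ.toFun^[a w] w := fun w hw ↦ by
    rw [Function.iterate_succ_apply, hY w hw]
  have hWtail : ∀ w ∈ W, w ∈ TailOf φ P := fun w hw ↦ (hW w hw).mem_tailOf h.map_left
  have hYtail : ∀ w ∈ W, Y w ∈ TailOf φ P := fun w hw ↦ (hYphase w hw).mem_tailOf h.map_left
  have hqtail : ∀ w ∈ W, φ.toFun^[a w] w ∈ TailOf φ P := fun w hw ↦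
    ((hW w hw).iterate_of_fixed h.map_left).mem_tailOf h.map_left
  exact {
    isSUnit_x := fun i hi ↦ h.isSUnit_tailCoord (hWtail i hi)
    isSUnit_y := fun i hi ↦ h.isSUnit_tailCoord (hYtail i hi)
    isSUnit_q := fun i hi ↦ h.isSUnit_tailCoord (hqtail i hi)
    injOn_x := h.injOn_tailCoord.mono hWtail
    injOn_y := h.injOn_tailCoord.comp
      (fun i hi j hj hij ↦ by rw [← hY i hi, hij, hY j hj]) hYtail
    le_counting_y_div_y := hmin
    two_mul_counting_y_le := fun i hi ↦ by
      have hmap := h.two_mul_counting_le hz hz' hzz' (hYtail i hi)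
        (by rw [hY i hi]; exact hWtail i hi)
      rwa [hY i hi] at hmap
    sum_counting_y_div_x_le := fun i hi J hJ hle ↦ by
      have hsum := h.sum_counting_div_le hz hz' hzz' (n := a i + 1) (hYtail i hi)
        (by rw [hYq i hi]; exact hqtail i hi) (fun j hj ↦ hWtail j (hJ hj))
        fun j hj ↦ (hW j (hJ hj)).iterate_eq h.map_left (by simpa using hle j hj)
      rwa [hYq i hi] at hsum
    counting_q_div_y_le := fun i hi j hj ↦ by
      have hmap := h.counting_div_le hz hz' hzz' (n := 1) (hYtail j hj)
        (by simpa [hY j hj] using hWtail j hj) (hqtail i hi)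
        (((hW i hi).iterate_of_fixed h.map_left).iterate_eq h.map_left le_rfl)
      rwa [Function.iterate_one, hY j hj, (h.isSUnit_tailCoord (hYtail j hj)).counting_div_comm
        (h.isSUnit_tailCoord (hqtail i hi))] at hmap
    counting_x_div_x_le := fun i hi j hj hne ↦
      (h.counting_div_le_or hz hz' hzz' (hW i hi) (hW j hj) hne).elim
        (⟨i, hi, ·⟩) (⟨j, hj, ·⟩)
    counting_y_div_y_le := fun i hi j hj hne ↦ by
      have hor := h.counting_div_le_or hz hz' hzz' (hYphase i hi) (hYphase j hj) (by simpa)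
      rw [hYq i hi, hYq j hj] at hor
      exact hor.elim (⟨i, hi, ·⟩) (⟨j, hj, ·⟩)
    counting_y_div_x_le := fun i hi j hj hne ↦ by
      have hor := h.counting_div_le_or hz hz' hzz' (hYphase i hi) (hW j hj) hne
      rw [hYq i hi] at hor
      exact hor.elim (⟨i, hi, ·⟩) (⟨j, hj, ·⟩) }

/-- The pair of tail points controlling the error term is chosen among the preimages `Y w` so that
the error term is as small as possible. -/
lemma card_le {W : Finset (P1 K)} {a : P1 K → ℕ} {Y : P1 K → P1 K}
    (hW : ∀ w ∈ W, EntersInPhase φ.toFun w (a w + 1) P) (hY : ∀ w ∈ W, φ.toFun (Y w) = w) :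
    W.card ≤ 2 ^ (20000 * sCard K T) := by
  rcases le_or_gt W.card 1 with hone | hone
  · exact hone.trans Nat.one_le_two_pow
  obtain ⟨⟨i, j⟩, hij, hmin⟩ := W.offDiag.exists_min_image
    (fun p ↦ counting T (tailCoord φ P R (Y p.1) / tailCoord φ P R (Y p.2))) (by
      obtain ⟨i, hi, j, hj, hne⟩ := Finset.one_lt_card.mp hone
      exact ⟨(i, j), Finset.mem_offDiag.mpr ⟨hi, hj, hne⟩⟩)
  obtain ⟨hi, hj, hne⟩ := Finset.mem_offDiag.mp hij
  have hYtail : ∀ w ∈ W, Y w ∈ TailOf φ P := fun w hw ↦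
    (EntersInPhase.of_map_of_fixed (by rw [hY w hw]; exact hW w hw) h.map_left).mem_tailOf
      h.map_left
  exact (h.tailConfiguration (hYtail i hi) (hYtail j hj)
    (fun hYij ↦ hne (by rw [← hY i hi, hYij, hY j hj])) hW hY
    fun k hk l hl hkl ↦ hmin (k, l) (Finset.mem_offDiag.mpr ⟨hk, hl, hkl⟩)).card_le

end NormalizingPair

end FixedTails

section PhaseClasses

variable {K : Type*} [Field K] {d : ℕ} {φ : P1Map K d}

open Function (periodicPts)

lemma P1Map.card_le_mul_card_image (φ : P1Map K d) (hd : 0 < d) (A : Finset (P1 K)) :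
    A.card ≤ d * (A.image φ.toFun).card :=
  Finset.card_le_mul_card_image A d fun _ _ ↦
    φ.card_le_of_forall_toFun_eq hd fun _ hP ↦ (Finset.mem_filter.mp hP).2

variable [NumberField K] {T : Finset (HeightOneSpectrum (𝓞 K))} {P R : P1 K} {A : Finset (P1 K)}

namespace GoodReductionOutside

/-- The points of `A` and their images have distance `1` from each other: they enter the cycle in
different phases and after numbers of steps of different parity. -/
lemma card_le_of_forall_even_iff (hgr : GoodReductionOutside φ T) (hd : 0 < d)
    (hP : φ.toFun P ≠ P) {l : P1 K → ℕ}
    (hA : ∀ Q ∈ A, EntersInPhase φ.toFun Q (l Q + 2) P)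
    (hparity : ∀ Q ∈ A, ∀ Q' ∈ A, Even (l Q) ↔ Even (l Q')) :
    A.card ≤ d * (2 * (2 ^ 22) ^ sCard K T) := by
  refine (φ.card_le_mul_card_image hd A).trans (Nat.mul_le_mul_left _ ?_)
  by_contra! hlt
  have himage : ∀ B ∈ A.image φ.toFun, ∃ Q ∈ A,
      EntersInPhase φ.toFun B (l Q + 1) (φ.toFun P) := fun B hB ↦ by
    obtain ⟨Q, hQ, rfl⟩ := Finset.mem_image.mp hB
    exact ⟨Q, hQ, (hA Q hQ).iterate 1⟩
  refine not_forall_chordalDist_eq_one T (hlt.le.trans Finset.card_image_le) hlt.le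
    (Finset.disjoint_left.mpr fun Q hQ hB ↦ ?_) fun v hv Q hQ B hB ↦ ?_
  · obtain ⟨Q', -, hQ'⟩ := himage Q hB
    exact hP ((hA Q hQ).unique hQ').2.symm
  · obtain ⟨Q', hQ'A, hQ'⟩ := himage B hB
    refine (hgr v hv).chordalDist_eq_one_of_ne_of_ne (hA Q hQ) hQ' hP.symm fun hl ↦ ?_
    have hsame := hparity Q hQ Q' hQ'A
    rw [show l Q' = l Q + 1 by lia, Nat.even_add_one] at hsame
    tauto

lemma card_le_of_map_ne (hgr : GoodReductionOutside φ T) (hd : 0 < d) (hP : φ.toFun P ≠ P)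
    (hA : ∀ Q ∈ A, ∃ l, EntersInPhase φ.toFun Q (l + 1) P) :
    A.card ≤ d * (1 + 2 * (2 * (2 ^ 22) ^ sCard K T)) := by
  choose! l hl using hA
  have hzero : {Q ∈ A | l Q = 0}.card ≤ d := φ.card_le_of_forall_toFun_eq hd (Q := φ.toFun P)
    fun Q hQ ↦ by
      obtain ⟨hQA, hlQ⟩ := Finset.mem_filter.mp hQ
      simpa [hlQ] using (hl Q hQA).2.1
  have hparity {B : Finset (P1 K)} (hBA : B ⊆ A) (hpos : ∀ Q ∈ B, l Q ≠ 0)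
      (hB : ∀ Q ∈ B, ∀ Q' ∈ B, Even (l Q - 1) ↔ Even (l Q' - 1)) :
      B.card ≤ d * (2 * (2 ^ 22) ^ sCard K T) :=
    hgr.card_le_of_forall_even_iff hd hP (l := fun Q ↦ l Q - 1) (fun Q hQ ↦ by
      rw [show l Q - 1 + 2 = l Q + 1 by have := hpos Q hQ; lia]
      exact hl Q (hBA hQ)) hB
  set E := {Q ∈ A | l Q ≠ 0 ∧ Even (l Q - 1)}
  set O := {Q ∈ A | l Q ≠ 0 ∧ ¬ Even (l Q - 1)}
  have heven : E.card ≤ d * (2 * (2 ^ 22) ^ sCard K T) :=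
    hparity (Finset.filter_subset _ _) (fun Q hQ ↦ (Finset.mem_filter.mp hQ).2.1)
      fun Q hQ Q' hQ' ↦ iff_of_true (Finset.mem_filter.mp hQ).2.2 (Finset.mem_filter.mp hQ').2.2
  have hodd : O.card ≤ d * (2 * (2 ^ 22) ^ sCard K T) :=
    hparity (Finset.filter_subset _ _) (fun Q hQ ↦ (Finset.mem_filter.mp hQ).2.1)
      fun Q hQ Q' hQ' ↦ iff_of_false (Finset.mem_filter.mp hQ).2.2 (Finset.mem_filter.mp hQ').2.2
  have hcover : A ⊆ {Q ∈ A | l Q = 0} ∪ (E ∪ O) := fun Q hQ ↦ by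
    simp only [E, O, Finset.mem_union, Finset.mem_filter, hQ, true_and]
    tauto
  calc A.card ≤ {Q ∈ A | l Q = 0}.card + (E.card + O.card) :=
        (Finset.card_le_card hcover).trans <| (Finset.card_union_le _ _).trans <|
          Nat.add_le_add_left (Finset.card_union_le _ _) _
    _ ≤ d + (d * (2 * (2 ^ 22) ^ sCard K T) + d * (2 * (2 ^ 22) ^ sCard K T)) :=
        Nat.add_le_add hzero (Nat.add_le_add heven hodd)
    _ = d * (1 + 2 * (2 * (2 ^ 22) ^ sCard K T)) := by ring

end GoodReductionOutside

lemma NormalizingPair.card_tail_le (h : NormalizingPair φ P R T) (hd : 0 < d)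
    (hA : ∀ Q ∈ A, ∃ l, EntersInPhase φ.toFun Q (l + 1) P) :
    A.card ≤ d * (2 ^ (20000 * sCard K T) + 1) := by
  choose! l hl using hA
  refine (φ.card_le_mul_card_image hd A).trans (Nat.mul_le_mul_left _ ?_)
  have hpre : ∀ w ∈ (A.image φ.toFun).erase P, ∃ Q ∈ A, φ.toFun Q = w := fun w hw ↦
    Finset.mem_image.mp (Finset.mem_of_mem_erase hw)
  choose! Y hYA hY using hpre
  have hphase : ∀ w ∈ (A.image φ.toFun).erase P,
      EntersInPhase φ.toFun w (l (Y w) - 1 + 1) P := fun w hw ↦ by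
    have hw' : EntersInPhase φ.toFun w (l (Y w)) P := by
      simpa [hY w hw, h.map_left] using (hl (Y w) (hYA w hw)).iterate 1
    have hpos : l (Y w) ≠ 0 := fun hzero ↦
      Finset.ne_of_mem_erase hw (EntersInPhase.zero_iff.mp (hzero ▸ hw')).2
    rwa [Nat.sub_add_cancel (Nat.pos_of_ne_zero hpos)]
  exact (Nat.sub_le_iff_le_add.mp Finset.pred_card_le_card_erase).trans
    (Nat.add_le_add_right (h.card_le hphase hY) 1)

lemma GoodReductionOutside.card_le_of_phase (hgr : GoodReductionOutside φ T) (hd : 0 < d)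
    (hR : R ∈ periodicPts φ.toFun) (hφR : φ.toFun R ≠ R)
    (hA : ∀ Q ∈ A, ∃ l, EntersInPhase φ.toFun Q (l + 1) P) :
    A.card ≤ d * 2 ^ (20001 * sCard K T) := by
  have hs : 1 ≤ sCard K T := one_le_sCard
  by_cases hP : φ.toFun P = P
  · refine (NormalizingPair.card_tail_le ⟨hgr, hP, hR, hφR⟩ hd hA).trans
      (Nat.mul_le_mul_left _ ?_)
    calc 2 ^ (20000 * sCard K T) + 1 ≤ 2 ^ (20000 * sCard K T) + 2 ^ (20000 * sCard K T) :=
          Nat.add_le_add_left Nat.one_le_two_pow _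
      _ = 2 ^ (20000 * sCard K T + 1) := by ring
      _ ≤ 2 ^ (20001 * sCard K T) := Nat.pow_le_pow_right two_pos (by lia)
  · refine (hgr.card_le_of_map_ne hd hP hA).trans (Nat.mul_le_mul_left _ ?_)
    have hpos : 1 ≤ (2 ^ 22) ^ sCard K T := Nat.one_le_pow _ _ (by norm_num)
    calc 1 + 2 * (2 * (2 ^ 22) ^ sCard K T) ≤ (2 ^ 22) ^ sCard K T * 2 ^ 3 := by lia
      _ = 2 ^ (22 * sCard K T + 3) := by rw [← pow_mul, pow_add]
      _ ≤ 2 ^ (20001 * sCard K T) := Nat.pow_le_pow_right two_pos (by lia)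

lemma GoodReductionOutside.card_filter_phase_notMem_lt (hgr : GoodReductionOutside φ T)
    {phase : P1 K → P1 K} (hA : ∀ Q ∈ A, ∃ l, EntersInPhase φ.toFun Q (l + 1) (phase Q))
    {B : Finset (P1 K)} (hB : ∀ P ∈ B, P ∈ periodicPts φ.toFun)
    (hcard : 2 * (2 ^ 22) ^ sCard K T ≤ B.card) :
    {Q ∈ A | phase Q ∉ B}.card < 2 * (2 ^ 22) ^ sCard K T := by
  by_contra! hlt
  refine not_forall_chordalDist_eq_one T hlt hcard
    (Finset.disjoint_left.mpr fun Q hQ hQB ↦ ?_) fun v hv Q hQ P hP ↦ ?_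
  all_goals
    obtain ⟨hQA, hQphase⟩ := Finset.mem_filter.mp hQ
    obtain ⟨l, hl⟩ := hA Q hQA
  · exact hl.notMem_periodicPts (hB Q hQB)
  · exact (hgr v hv).chordalDist_eq_one_of_ne hl (hB P hP) fun hPQ ↦ hQphase (hPQ ▸ hP)

/-- Few phases occur, or else two disjoint large sets of phases do, and then each tail point avoids
one of them. -/
lemma GoodReductionOutside.card_tail_le (hgr : GoodReductionOutside φ T) (hd : 0 < d)
    (hR : R ∈ periodicPts φ.toFun) (hφR : φ.toFun R ≠ R)
    (hA : ∀ Q ∈ A, ∃ P l, EntersInPhase φ.toFun Q (l + 1) P) :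
    A.card ≤ d * 2 ^ (20001 * sCard K T) * (2 * (2 * (2 ^ 22) ^ sCard K T)) := by
  choose! phase hphase using hA
  set M := 2 * (2 ^ 22) ^ sCard K T
  rcases le_or_gt (A.image phase).card (2 * M) with hfew | hmany
  · refine (Finset.card_le_mul_card_image (f := phase) A (d * 2 ^ (20001 * sCard K T))
      fun P _ ↦ hgr.card_le_of_phase (P := P) hd hR hφR fun Q hQ ↦ ?_).trans
      (Nat.mul_le_mul_left _ hfew)
    obtain ⟨hQA, rfl⟩ := Finset.mem_filter.mp hQ
    exact hphase Q hQA
  obtain ⟨B₁, hB₁, hcard₁⟩ := Finset.exists_subset_card_eq (show M ≤ (A.image phase).card by lia)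
  obtain ⟨B₂, hB₂, hcard₂⟩ := Finset.exists_subset_card_eq (s := A.image phase \ B₁) (n := M)
    (by rw [Finset.card_sdiff_of_subset hB₁]; lia)
  have hperiodic : ∀ P ∈ A.image phase, P ∈ periodicPts φ.toFun := fun P hP ↦ by
    obtain ⟨Q, hQ, rfl⟩ := Finset.mem_image.mp hP
    exact (hphase Q hQ).choose_spec.1
  have havoid₁ := hgr.card_filter_phase_notMem_lt hphase (fun P hP ↦ hperiodic P (hB₁ hP)) hcard₁.ge
  have havoid₂ := hgr.card_filter_phase_notMem_lt hphase
    (fun P hP ↦ hperiodic P (Finset.mem_sdiff.mp (hB₂ hP)).1) hcard₂.ge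
  have hcover : A ⊆ {Q ∈ A | phase Q ∉ B₁} ∪ {Q ∈ A | phase Q ∉ B₂} := fun Q hQ ↦ by
    simp only [Finset.mem_union, Finset.mem_filter, hQ, true_and]
    by_contra! hmem
    exact (Finset.mem_sdiff.mp (hB₂ hmem.2)).2 hmem.1
  calc A.card ≤ {Q ∈ A | phase Q ∉ B₁}.card + {Q ∈ A | phase Q ∉ B₂}.card :=
        (Finset.card_le_card hcover).trans (Finset.card_union_le _ _)
    _ ≤ 2 * M := by lia
    _ ≤ d * 2 ^ (20001 * sCard K T) * (2 * M) := Nat.le_mul_of_pos_left _ (by positivity)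

end PhaseClasses

section Preperiodic

variable {K : Type*} [Field K] [NumberField K] {d : ℕ} {φ : P1Map K d}
  {T : Finset (HeightOneSpectrum (𝓞 K))}

namespace GoodReductionOutside

lemma card_periodic_le_two_pow_mul (hgr : GoodReductionOutside φ T) (hd : 2 ≤ d)
    {X : Finset (P1 K)} (hX : ∀ P ∈ X, P ∈ Function.periodicPts φ.toFun) :
    X.card ≤ 2 ^ (29999 * sCard K T) * d := by
  have hs : 1 ≤ sCard K T := one_le_sCard
  refine (hgr.card_periodic_le hd hX).trans ?_
  set N := 4 * (2 ^ 22) ^ (2 * sCard K T) with hN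
  have hN1 : N ≤ N ^ 3 := Nat.le_self_pow (by norm_num) N
  calc N + N ^ 3 * (d + 1) ≤ N ^ 3 * 2 * d := by nlinarith
    _ = 2 ^ (132 * sCard K T + 7) * d := by rw [hN, ← pow_mul]; ring
    _ ≤ 2 ^ (29999 * sCard K T) * d :=
        Nat.mul_le_mul_right _ (Nat.pow_le_pow_right two_pos (by lia))

lemma card_tail_le_two_pow_mul (hgr : GoodReductionOutside φ T) (hd : 2 ≤ d) {R : P1 K}
    (hR : R ∈ Function.periodicPts φ.toFun) (hφR : φ.toFun R ≠ R)
    {X : Finset (P1 K)} (hX : ∀ Q ∈ X, IsTailPoint φ Q) :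
    X.card ≤ 2 ^ (29999 * sCard K T) * d := by
  have hs : 1 ≤ sCard K T := one_le_sCard
  have hphase : ∀ Q ∈ X, ∃ P l, EntersInPhase φ.toFun Q (l + 1) P := fun Q hQ ↦ by
    obtain ⟨l, P, hl⟩ := EntersInPhase.exists_of_iterate_mem (f := φ.toFun) (hX Q hQ).1
    cases l with
    | zero =>
      obtain ⟨hP, rfl⟩ := EntersInPhase.zero_iff.mp hl
      exact absurd hP (hX Q hQ).2
    | succ l => exact ⟨P, l, hl⟩
  calc X.card ≤ d * 2 ^ (20001 * sCard K T) * (2 * (2 * (2 ^ 22) ^ sCard K T)) :=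
        hgr.card_tail_le (by lia) hR hφR hphase
    _ = 2 ^ (20023 * sCard K T + 2) * d := by rw [← pow_mul]; ring
    _ ≤ 2 ^ (29999 * sCard K T) * d :=
        Nat.mul_le_mul_right _ (Nat.pow_le_pow_right two_pos (by lia))

lemma card_preperiodic_le (hgr : GoodReductionOutside φ T) (hd : 2 ≤ d) {R : P1 K}
    (hR : IsPeriodicPoint φ R) (hφR : φ.toFun R ≠ R)
    {X : Finset (P1 K)} (hX : ∀ Q ∈ X, IsPreperiodicPoint φ Q) :
    X.card ≤ 2 ^ (30000 * sCard K T) * d := by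
  have hs : 1 ≤ sCard K T := one_le_sCard
  have hperiodic := hgr.card_periodic_le_two_pow_mul hd (X := {P ∈ X | IsPeriodicPoint φ P})
    fun P hP ↦ (Finset.mem_filter.mp hP).2
  have htail := hgr.card_tail_le_two_pow_mul hd hR hφR (X := {P ∈ X | ¬ IsPeriodicPoint φ P})
    fun P hP ↦ ⟨hX P (Finset.mem_filter.mp hP).1, (Finset.mem_filter.mp hP).2⟩
  calc X.card = {P ∈ X | IsPeriodicPoint φ P}.card + {P ∈ X | ¬ IsPeriodicPoint φ P}.card :=
        (Finset.card_filter_add_card_filter_not _).symm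
    _ ≤ 2 ^ (29999 * sCard K T + 1) * d := by rw [pow_succ]; lia
    _ ≤ 2 ^ (30000 * sCard K T) * d :=
        Nat.mul_le_mul_right _ (Nat.pow_le_pow_right two_pos (by lia))

lemma finite_preperiodic (hgr : GoodReductionOutside φ T) (hd : 2 ≤ d) {R : P1 K}
    (hR : IsPeriodicPoint φ R) (hφR : φ.toFun R ≠ R) :
    {P : P1 K | IsPreperiodicPoint φ P}.Finite := by
  by_contra hinf
  obtain ⟨X, hX, hcard⟩ :=
    Set.Infinite.exists_subset_card_eq hinf (2 ^ (30000 * sCard K T) * d + 1)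
  have hle := hgr.card_preperiodic_le hd hR hφR fun Q hQ ↦ hX hQ
  lia

lemma ncard_preperiodic_le (hgr : GoodReductionOutside φ T) (hd : 2 ≤ d) {R : P1 K}
    (hR : IsPeriodicPoint φ R) (hφR : φ.toFun R ≠ R) :
    {P : P1 K | IsPreperiodicPoint φ P}.ncard ≤ 2 ^ (30000 * sCard K T) * d := by
  have hfin := hgr.finite_preperiodic hd hR hφR
  rw [Set.ncard_eq_toFinset_card _ hfin]
  exact hgr.card_preperiodic_le hd hR hφR fun Q hQ ↦ by simpa using hQ

end GoodReductionOutside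

lemma two_pow_le_Cconst_three {s : ℕ} (hs : 1 ≤ s) : (2 : ℝ) ^ (30000 * s) ≤ Cconst 3 s := by
  have hs' : (1 : ℝ) ≤ s := by exact_mod_cast hs
  calc (2 : ℝ) ^ (30000 * s) ≤ Real.exp 1 ^ (30000 * s) :=
        pow_le_pow_left₀ two_pos.le (by linarith [Real.add_one_le_exp (1 : ℝ)]) _
    _ = Real.exp ((30000 * s : ℕ) : ℝ) := by rw [← Real.exp_nat_mul, mul_one]
    _ ≤ Cconst 3 s := by
      rw [Cconst, Real.exp_le_exp]
      push_cast
      nlinarith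

lemma Cconst_three_mul_le (s : ℕ) (hd : 2 ≤ d) :
    Cconst 3 s * d ≤ L4const d s + 2 * L2const d s + 3 := by
  have hd' : (2 : ℝ) ≤ d := by exact_mod_cast hd
  have hC : 0 < Cconst 3 s := Real.exp_pos _
  have hL2 : (2 * (Cconst 3 s + 2) + 1) * d + 1 ≤ L2const d s := le_max_left _ _
  have hL4 : 0 ≤ L4const d s := mul_nonneg (by linarith) (by linarith)
  nlinarith [mul_pos hC (show (0 : ℝ) < d by linarith)]

end Preperiodic

/-- **Theorem (linear bound on preperiodic points).**
If `φ : ℙ¹ → ℙ¹` of degree `d ≥ 2` is defined over a number field `K`, has good reduction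
outside a finite set `S` of places of `K` containing all archimedean ones, and has a
`K`-rational periodic point of period at least two, then
`|PrePer(φ,K)| ≤ max{T(|S|) + CV(d,|S|), L₄(d,|S|) + 2L₂(d,|S|) + 3, 3L₃(d,|S|) + 3}`,
a linear polynomial in `d` whose coefficients depend only on `|S|`. -/
theorem preper_bound_linear
    {K : Type*} [Field K] [NumberField K]
    (T : Finset (HeightOneSpectrum (𝓞 K))) {d : ℕ} (hd : 2 ≤ d)
    (φ : P1Map K d) (hgr : GoodReductionOutside φ T)
    (P₀ : P1 K) (hP₀ : IsPeriodicPoint φ P₀) (hP₀' : φ.toFun P₀ ≠ P₀) :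
    {P : P1 K | IsPreperiodicPoint φ P}.Finite ∧
      ({P : P1 K | IsPreperiodicPoint φ P}.ncard : ℝ) ≤
        max ((12 * 7 ^ (4 * sCard K T) : ℝ) + CVconst d (sCard K T))
          (max (L4const d (sCard K T) + 2 * L2const d (sCard K T) + 3)
            (3 * (L3const d (sCard K T) : ℝ) + 3)) := by
  refine ⟨hgr.finite_preperiodic hd hP₀ hP₀', ?_⟩
  calc ({P : P1 K | IsPreperiodicPoint φ P}.ncard : ℝ) ≤ 2 ^ (30000 * sCard K T) * d := by
        exact_mod_cast hgr.ncard_preperiodic_le hd hP₀ hP₀'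
    _ ≤ Cconst 3 (sCard K T) * d :=
        mul_le_mul_of_nonneg_right (two_pow_le_Cconst_three one_le_sCard) d.cast_nonneg
    _ ≤ L4const d (sCard K T) + 2 * L2const d (sCard K T) + 3 := Cconst_three_mul_le _ hd
    _ ≤ _ := (le_max_left _ _).trans (le_max_right _ _)
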